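/- (Exact multiplicity.) Let g ∈ C¹([0,∞),[0,∞)) satisfy (g₊), (g_s), (g₀) and (g_∞). Let h ∈ L¹([a,b]) satisfy condition (h*) with m positivity intervals, and suppose in addition that for every i ∈ {1,…,m}: h⁺ ∈ BV(I_i⁺), h⁺(t) = h⁺(σ_i + τ_i − t) for a.e. t ∈ [σ_i, τ_i], and h⁺ is non-decreasing on [σ_i, ζ_i], where ζ_i := (σ_i + τ_i)/2. Then there exists μ** > 0 such that for every μ > μ** the Dirichlet problem (D_μ): u'' + (h⁺(t) − μ h⁻(t)) g(u) = 0, u(a) = 0 = u(b), has exactly 2^m − 1 positive solutions, and each of these solutions is non-degenerate. -/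

import Mathlib

open Set MeasureTheory Filter Topology

/-- Carathéodory solution of `u'' + F(t, u) = 0` on `[a,b]`. -/
def IsCaraSol (a b : ℝ) (F : ℝ → ℝ → ℝ) (u u' : ℝ → ℝ) : Prop :=
  (∀ t ∈ Set.Icc a b, HasDerivAt u (u' t) t) ∧
  IntervalIntegrable (fun s => F s (u s)) MeasureTheory.volume a b ∧
  ∀ t ∈ Set.Icc a b, u' t = u' a - ∫ s in a..t, F s (u s)

/-- The positive part `h⁺ = |h|/2 + h/2` of a weight function. -/
noncomputable def posW (h : ℝ → ℝ) : ℝ → ℝ := fun t => |h t| / 2 + h t / 2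

/-- The negative part `h⁻ = |h|/2 - h/2` of a weight function. -/
noncomputable def negW (h : ℝ → ℝ) : ℝ → ℝ := fun t => |h t| / 2 - h t / 2

/-- A positive solution `u` of `(D_μ)` is non-degenerate: the only Carathéodory
solution of the linearized Dirichlet problem
`w'' + (h⁺ - μ h⁻) g'(u) w = 0`, `w(a) = 0 = w(b)`, is `w ≡ 0`. -/
def NonDegenerate (a b : ℝ) (h : ℝ → ℝ) (μ : ℝ) (g u : ℝ → ℝ) : Prop :=
  ∀ w w₁ : ℝ → ℝ,
    IsCaraSol a b (fun s x => (posW h s - μ * negW h s) * deriv g (u s) * x) w w₁ →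
    w a = 0 → w b = 0 → ∀ t ∈ Set.Icc a b, w t = 0

/-!
On a positivity interval with symmetric weight, nondecreasing on the first half, the one-bump
Dirichlet problem has a unique critical initial slope, and (after truncating the nonlinearity at
an a priori bound) the map from initial slopes to end values crosses zero transversally there. For
large `μ` the negativity intervals decouple the bumps: a nonnegative solution enters every
positivity interval either with almost zero slope or with almost critical slope. Shooting from the
left endpoint realizes each of the `2 ^ m` activation patterns. If two solutions share a pattern,
their difference solves a linear equation whose ratio `w / w'` is controlled, across negativity
intervals by convexity and across bumps by transversality, so that `w` cannot vanish at both
endpoints; this gives uniqueness within a pattern, and the same argument for the linearized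
equation gives non-degeneracy. The empty pattern is the zero solution.
-/

/-! ### Integral inequalities -/

section IntegralInequalities

variable {α β : ℝ}

theorem intervalIntegrable_of_mem_Icc {E : Type*} [NormedAddCommGroup E] {f : ℝ → E} {x y : ℝ}
    (hf : IntervalIntegrable f volume α β) (hx : x ∈ Icc α β) (hy : y ∈ Icc α β) :
    IntervalIntegrable f volume x y :=
  hf.mono_set (by rw [uIcc_of_le (hx.1.trans hx.2)]; exact uIcc_subset_Icc hx hy)

theorem integral_add_integral_of_mem_Icc {E : Type*} [NormedAddCommGroup E] [NormedSpace ℝ E]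
    {f : ℝ → E} {x y : ℝ} (hf : IntervalIntegrable f volume α β)
    (hx : x ∈ Icc α β) (hy : y ∈ Icc α β) :
    (∫ s in α..x, f s) + ∫ s in x..y, f s = ∫ s in α..y, f s :=
  intervalIntegral.integral_add_adjacent_intervals
    (intervalIntegrable_of_mem_Icc hf (left_mem_Icc.2 (hx.1.trans hx.2)) hx)
    (intervalIntegrable_of_mem_Icc hf hx hy)

theorem continuousOn_integral_right {E : Type*} [NormedAddCommGroup E] [NormedSpace ℝ E]
    {f : ℝ → E} (hαβ : α ≤ β) (hf : IntervalIntegrable f volume α β) :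
    ContinuousOn (fun t => ∫ s in α..t, f s) (Icc α β) := by
  simpa only [uIcc_of_le hαβ] using
    intervalIntegral.continuousOn_primitive_interval' hf left_mem_uIcc

theorem monotoneOn_integral_right {f : ℝ → ℝ} (hf : IntervalIntegrable f volume α β)
    (hf0 : ∀ t ∈ Icc α β, 0 ≤ f t) : MonotoneOn (fun t => ∫ s in α..t, f s) (Icc α β) := by
  intro x hx y hy hxy
  have hnonneg : 0 ≤ ∫ s in x..y, f s :=
    intervalIntegral.integral_nonneg hxy fun s hs => hf0 s ⟨hx.1.trans hs.1, hs.2.trans hy.2⟩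
  have hadd := integral_add_integral_of_mem_Icc hf hx hy
  dsimp only
  linarith

theorem two_mul_integral_mul_exp_le {k : ℝ → ℝ} (hk : IntervalIntegrable k volume α β)
    (hk0 : ∀ t ∈ Icc α β, 0 ≤ k t) {t : ℝ} (ht : t ∈ Icc α β) :
    2 * ∫ s in α..t, k s * Real.exp (2 * ∫ r in α..s, k r) ≤ Real.exp (2 * ∫ r in α..t, k r) := by
  set F : ℝ → ℝ := fun s => Real.exp (2 * ∫ r in α..s, k r) with hF
  have hkt : IntervalIntegrable k volume α t :=
    intervalIntegrable_of_mem_Icc hk (left_mem_Icc.2 (ht.1.trans ht.2)) ht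
  have hmono : MonotoneOn F (uIcc α t) := by
    rw [uIcc_of_le ht.1]
    intro x hx y hy hxy
    have := monotoneOn_integral_right hkt (fun s hs => hk0 s ⟨hs.1, hs.2.trans ht.2⟩) hx hy hxy
    simp only [hF]
    gcongr
  have hderiv : ∫ x in α..t, deriv F x = 2 * ∫ s in α..t, k s * F s := by
    rw [← intervalIntegral.integral_const_mul]
    apply intervalIntegral.integral_congr_ae
    filter_upwards [hkt.ae_hasDerivAt_integral] with x hx hxt
    have := ((hx (uIoc_subset_uIcc hxt) α left_mem_uIcc).const_mul 2).exp
    simp only [hF]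
    rw [this.deriv]
    ring
  -- A monotone function dominates the integral of its a.e. derivative.
  have hle := hmono.intervalIntegral_deriv_mem_uIcc
  rw [uIcc_of_le (sub_nonneg.2 (hmono left_mem_uIcc right_mem_uIcc ht.1)), hderiv] at hle
  exact hle.2.trans (sub_le_self _ (Real.exp_pos _).le)

theorem le_two_mul_mul_exp_of_le_add_integral {k z : ℝ → ℝ} {A : ℝ}
    (hk : IntervalIntegrable k volume α β) (hk0 : ∀ t ∈ Icc α β, 0 ≤ k t)
    (hz : ContinuousOn z (Icc α β)) (hA : 0 ≤ A)
    (h : ∀ t ∈ Icc α β, z t ≤ A + ∫ s in α..t, k s * z s) {t : ℝ} (ht : t ∈ Icc α β) :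
    z t ≤ 2 * A * Real.exp (2 * ∫ s in α..t, k s) := by
  have hαβ : α ≤ β := ht.1.trans ht.2
  set E : ℝ → ℝ := fun t => Real.exp (2 * ∫ s in α..t, k s)
  have hEc : ContinuousOn E (Icc α β) :=
    Real.continuous_exp.comp_continuousOn
      (continuousOn_const.mul (continuousOn_integral_right hαβ hk))
  have hE0 : ∀ t, 0 < E t := fun t => Real.exp_pos _
  obtain ⟨t₀, ht₀, hmax⟩ := isCompact_Icc.exists_isMaxOn (nonempty_Icc.2 hαβ)
    (hz.div hEc fun t _ => (hE0 t).ne')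
  set N := z t₀ / E t₀ with hN
  have hzN : ∀ t ∈ Icc α β, z t ≤ N * E t := fun t ht => (div_le_iff₀ (hE0 t)).1 (hmax ht)
  suffices hNA : N ≤ 2 * A from (hzN t ht).trans (mul_le_mul_of_nonneg_right hNA (hE0 t).le)
  by_contra! hcon
  have hsub : uIcc α t₀ ⊆ Icc α β := uIcc_subset_Icc (left_mem_Icc.2 hαβ) ht₀
  have hk₀ := intervalIntegrable_of_mem_Icc hk (left_mem_Icc.2 hαβ) ht₀
  have hint : ∫ s in α..t₀, k s * z s ≤ N * ∫ s in α..t₀, k s * E s := by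
    rw [← intervalIntegral.integral_const_mul]
    refine intervalIntegral.integral_mono_on ht₀.1 (hk₀.mul_continuousOn (hz.mono hsub))
      ((hk₀.mul_continuousOn (hEc.mono hsub)).const_mul N) fun s hs => ?_
    have hs' : s ∈ Icc α β := ⟨hs.1, hs.2.trans ht₀.2⟩
    linarith [mul_le_mul_of_nonneg_left (hzN s hs') (hk0 s hs')]
  have hexp : N * (2 * ∫ s in α..t₀, k s * E s) ≤ N * E t₀ :=
    mul_le_mul_of_nonneg_left (two_mul_integral_mul_exp_le hk hk0 ht₀) (by linarith)
  have hz₀ : z t₀ = N * E t₀ := by rw [hN, div_mul_cancel₀ _ (hE0 t₀).ne']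
  have hE1 : 1 ≤ E t₀ := Real.one_le_exp (mul_nonneg zero_le_two
    (intervalIntegral.integral_nonneg ht₀.1 fun s hs => hk0 s ⟨hs.1, hs.2.trans ht₀.2⟩))
  have hAE : A * 2 < N * E t₀ := by nlinarith
  linarith [h t₀ ht₀]

theorem integral_deriv_mul_add_mul_deriv {f g F G : ℝ → ℝ} (hαβ : α ≤ β)
    (hf : IntervalIntegrable f volume α β) (hg : IntervalIntegrable g volume α β)
    (hF : ∀ t ∈ Icc α β, F t = F α + ∫ s in α..t, f s)
    (hG : ∀ t ∈ Icc α β, G t = G α + ∫ s in α..t, g s) :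
    ∫ s in α..β, (f s * G s + F s * g s) = F β * G β - F α * G α := by
  have hac : ∀ {p : ℝ → ℝ} (c : ℝ), IntervalIntegrable p volume α β →
      AbsolutelyContinuousOnInterval (fun t => c + ∫ s in α..t, p s) α β := fun c hp =>
    (contDiffOn_const (c := c) (n := 1)).absolutelyContinuousOnInterval.add
      (hp.absolutelyContinuousOnInterval_intervalIntegral left_mem_uIcc)
  have h := (hac (F α) hf).integral_deriv_mul_eq_sub (hac (G α) hg)
  rw [← hF β (right_mem_Icc.2 hαβ), ← hG β (right_mem_Icc.2 hαβ)] at h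
  simp only [intervalIntegral.integral_same, add_zero] at h
  rw [← h]
  apply intervalIntegral.integral_congr_ae
  filter_upwards [hf.ae_hasDerivAt_integral, hg.ae_hasDerivAt_integral] with x hfx hgx hx
  have hx' := uIoc_subset_uIcc hx
  rw [((hfx hx' α left_mem_uIcc).const_add (F α)).deriv,
    ((hgx hx' α left_mem_uIcc).const_add (G α)).deriv]
  rw [uIcc_of_le hαβ] at hx'
  rw [hF x hx', hG x hx']

/-- The error terms are quadratic in the mesh of a uniform partition, so they disappear in the
limit. -/
theorem le_of_forall_sub_ge_neg_mul_mul {F p : ℝ → ℝ} {C : ℝ} (hαβ : α ≤ β)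
    (h : ∀ s ∈ Icc α β, ∀ t ∈ Icc α β, s ≤ t → -(C * (t - s) * (p s - p t)) ≤ F t - F s) :
    F α ≤ F β := by
  have hpartition : ∀ n : ℕ, 0 < n → -(C * ((β - α) / n) * (p α - p β)) ≤ F β - F α := by
    intro n hn
    have hn' : (0 : ℝ) < n := by exact_mod_cast hn
    set node : ℕ → ℝ := fun j => α + j * ((β - α) / n) with hnode
    have hmesh : 0 ≤ (β - α) / n := div_nonneg (by linarith) hn'.le
    have hlast : node n = β := by simp only [hnode]; field_simp; ring
    have hmem : ∀ j ≤ n, node j ∈ Icc α β := by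
      intro j hj
      have hj' : (j : ℝ) ≤ n := by exact_mod_cast hj
      refine ⟨le_add_of_nonneg_right (by positivity), hlast ▸ ?_⟩
      simp only [hnode]
      gcongr
    have htele : ∀ j ≤ n, -(C * ((β - α) / n) * (p (node 0) - p (node j))) ≤
        F (node j) - F (node 0) := by
      intro j
      induction j with
      | zero => intro _; simp
      | succ j ih =>
        intro hj
        have hstep : node (j + 1) - node j = (β - α) / n := by
          simp only [hnode]; push_cast; ring
        have := h _ (hmem j (by lia)) _ (hmem _ hj) (by linarith)
        rw [hstep] at this
        linarith [ih (by lia)]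
    have hfirst : node 0 = α := by simp [hnode]
    simpa only [hfirst, hlast] using htele n le_rfl
  have hlim : Tendsto (fun n : ℕ => -(C * ((β - α) / n) * (p α - p β))) atTop
      (𝓝 (-(C * 0 * (p α - p β)))) :=
    (((tendsto_const_div_atTop_nhds_zero_nat (β - α)).const_mul C).mul_const _).neg
  have := le_of_tendsto hlim ((eventually_gt_atTop 0).mono hpartition)
  simpa using this

theorem integral_sub_mul_deriv_ge {p φ φ' : ℝ → ℝ} {C s t : ℝ} (hst : s ≤ t)
    (hp : AntitoneOn p (Icc s t)) (hφ' : ContinuousOn φ' (Icc s t))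
    (hC : ∀ r ∈ Icc s t, |φ' r| ≤ C)
    (hφ : ∫ r in s..t, φ' r = φ t - φ s) :
    -(C * (t - s) * (p s - p t)) ≤ (∫ r in s..t, p r * φ' r) - p t * (φ t - φ s) := by
  rw [← uIcc_of_le hst] at hφ'
  have hpint : IntervalIntegrable p volume s t :=
    AntitoneOn.intervalIntegrable (by rwa [uIcc_of_le hst])
  have hbound : ∫ _ in s..t, (-(C * (p s - p t)) : ℝ) ≤ ∫ r in s..t, (p r - p t) * φ' r := by
    refine intervalIntegral.integral_mono_on hst intervalIntegrable_const
      ((hpint.sub intervalIntegrable_const).mul_continuousOn hφ') fun r hr => ?_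
    have hr' := abs_le.1 (hC r hr)
    have hrt := hp hr (right_mem_Icc.2 hst) hr.2
    have hsr := hp (left_mem_Icc.2 hst) hr hr.1
    nlinarith [mul_nonneg (sub_nonneg.2 hrt) (by linarith [hr'.1] : 0 ≤ C + φ' r),
      mul_nonneg (sub_nonneg.2 hsr) (by linarith [hr'.1, hr'.2] : 0 ≤ C)]
  simp only [sub_mul] at hbound
  rw [intervalIntegral.integral_const, smul_eq_mul,
    intervalIntegral.integral_sub (hpint.mul_continuousOn hφ') (hφ'.intervalIntegrable.const_mul _),
    intervalIntegral.integral_const_mul, hφ] at hbound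
  linarith

/-- Formally an integration by parts, `∫ p φ' = -∫ φ dp`; the Stieltjes measure `dp` is avoided by
comparing increments of `t ↦ (∫ p φ') - p φ`. -/
theorem integral_mul_deriv_nonneg_of_antitoneOn {p φ φ' : ℝ → ℝ} (hαβ : α ≤ β)
    (hp : AntitoneOn p (Icc α β))
    (hφ : ∀ t ∈ Icc α β, HasDerivWithinAt φ (φ' t) (Icc α β) t)
    (hφ' : ContinuousOn φ' (Icc α β)) (hφ0 : ∀ t ∈ Icc α β, 0 ≤ φ t)
    (hφα : φ α = 0) (hφβ : φ β = 0) : 0 ≤ ∫ t in α..β, p t * φ' t := by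
  have hpint : IntervalIntegrable p volume α β :=
    AntitoneOn.intervalIntegrable (by rwa [uIcc_of_le hαβ])
  have hφ'u : ContinuousOn φ' (uIcc α β) := by rwa [uIcc_of_le hαβ]
  obtain ⟨C, hC⟩ := isCompact_Icc.exists_bound_of_continuousOn hφ'
  have hφc : ContinuousOn φ (Icc α β) := fun t ht => (hφ t ht).continuousWithinAt
  have hmono := le_of_forall_sub_ge_neg_mul_mul (C := C) (p := p)
    (F := fun t => (∫ s in α..t, p s * φ' s) - p t * φ t) hαβ fun s hs t ht hst => by
      have hsub : Icc s t ⊆ Icc α β := Icc_subset_Icc hs.1 ht.2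
      have hftc : ∫ r in s..t, φ' r = φ t - φ s :=
        intervalIntegral.integral_eq_sub_of_hasDerivAt_of_le hst (hφc.mono hsub)
          (fun x hx => (hφ x (hsub (Ioo_subset_Icc_self hx))).hasDerivAt
            (Icc_mem_nhds (hs.1.trans_lt hx.1) (hx.2.trans_le ht.2)))
          (intervalIntegrable_of_mem_Icc hφ'u.intervalIntegrable hs ht)
      have hge := integral_sub_mul_deriv_ge hst (hp.mono hsub) (hφ'.mono hsub)
        (fun _ hr => hC _ (hsub hr)) hftc
      have hadd := integral_add_integral_of_mem_Icc (hpint.mul_continuousOn hφ'u) hs ht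
      linarith [mul_nonneg (sub_nonneg.2 (hp hs ht hst)) (hφ0 s hs)]
  simpa [hφα, hφβ] using hmono

theorem integral_mul_deriv_nonpos_of_monotoneOn {p φ φ' : ℝ → ℝ} (hαβ : α ≤ β)
    (hp : MonotoneOn p (Icc α β))
    (hφ : ∀ t ∈ Icc α β, HasDerivWithinAt φ (φ' t) (Icc α β) t)
    (hφ' : ContinuousOn φ' (Icc α β)) (hφ0 : ∀ t ∈ Icc α β, 0 ≤ φ t)
    (hφα : φ α = 0) (hφβ : φ β = 0) : ∫ t in α..β, p t * φ' t ≤ 0 := by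
  have := integral_mul_deriv_nonneg_of_antitoneOn hαβ hp.neg hφ hφ' hφ0 hφα hφβ
  simpa only [Pi.neg_apply, neg_mul, intervalIntegral.integral_neg, neg_nonneg] using this

end IntegralInequalities

/-! ### Second-order Carathéodory problems -/

/-- `u'' = f` on `[α, β]` in the sense of Carathéodory, encoded by the integrated first-order
system `u' = v`, `v' = f`. The function `v` is called the velocity of `u`. -/
structure CaraSolOn (α β : ℝ) (f u v : ℝ → ℝ) : Prop where
  le : α ≤ β
  intervalIntegrable : IntervalIntegrable f volume α β
  eq_add_integral : ∀ t ∈ Icc α β, u t = u α + ∫ s in α..t, v s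
  velocity_eq_add_integral : ∀ t ∈ Icc α β, v t = v α + ∫ s in α..t, f s

namespace CaraSolOn

variable {α β : ℝ} {f u v f₂ u₂ v₂ : ℝ → ℝ}

theorem left_mem (S : CaraSolOn α β f u v) : α ∈ Icc α β := left_mem_Icc.2 S.le

theorem right_mem (S : CaraSolOn α β f u v) : β ∈ Icc α β := right_mem_Icc.2 S.le

theorem continuousOn_velocity (S : CaraSolOn α β f u v) : ContinuousOn v (Icc α β) :=
  (continuousOn_const.add (continuousOn_integral_right S.le S.intervalIntegrable)).congr
    S.velocity_eq_add_integral

theorem intervalIntegrable_velocity (S : CaraSolOn α β f u v) :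
    IntervalIntegrable v volume α β :=
  S.continuousOn_velocity.intervalIntegrable_of_Icc S.le

theorem continuousOn (S : CaraSolOn α β f u v) : ContinuousOn u (Icc α β) :=
  (continuousOn_const.add (continuousOn_integral_right S.le S.intervalIntegrable_velocity)).congr
    S.eq_add_integral

theorem velocity_eq_add {x y : ℝ} (S : CaraSolOn α β f u v) (hx : x ∈ Icc α β)
    (hy : y ∈ Icc α β) : v y = v x + ∫ s in x..y, f s := by
  rw [S.velocity_eq_add_integral x hx, S.velocity_eq_add_integral y hy,
    ← integral_add_integral_of_mem_Icc S.intervalIntegrable hx hy, add_assoc]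

theorem eq_add {x y : ℝ} (S : CaraSolOn α β f u v) (hx : x ∈ Icc α β) (hy : y ∈ Icc α β) :
    u y = u x + ∫ s in x..y, v s := by
  rw [S.eq_add_integral x hx, S.eq_add_integral y hy,
    ← integral_add_integral_of_mem_Icc S.intervalIntegrable_velocity hx hy, add_assoc]

theorem hasDerivWithinAt (S : CaraSolOn α β f u v) {t : ℝ} (ht : t ∈ Icc α β) :
    HasDerivWithinAt u (v t) (Icc α β) t := by
  have : Fact (t ∈ Icc α β) := ⟨ht⟩
  have h := intervalIntegral.integral_hasDerivWithinAt_right (s := Icc α β) (t := Icc α β)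
    (intervalIntegrable_of_mem_Icc S.intervalIntegrable_velocity S.left_mem ht)
    (S.continuousOn_velocity.stronglyMeasurableAtFilter_nhdsWithin measurableSet_Icc t)
    (S.continuousOn_velocity t ht)
  exact (h.const_add (u α)).congr S.eq_add_integral (S.eq_add_integral t ht)

theorem mono (S : CaraSolOn α β f u v) {x y : ℝ} (hx : α ≤ x) (hxy : x ≤ y) (hy : y ≤ β) :
    CaraSolOn x y f u v := by
  have hx' : x ∈ Icc α β := ⟨hx, hxy.trans hy⟩
  have hsub := Icc_subset_Icc hx hy
  exact ⟨hxy, intervalIntegrable_of_mem_Icc S.intervalIntegrable hx' ⟨hx.trans hxy, hy⟩,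
    fun t ht => S.eq_add hx' (hsub ht), fun t ht => S.velocity_eq_add hx' (hsub ht)⟩

theorem congr_ae (S : CaraSolOn α β f u v) (h : ∀ᵐ t, t ∈ Icc α β → f t = f₂ t) :
    CaraSolOn α β f₂ u v := by
  refine ⟨S.le, S.intervalIntegrable.congr_ae ?_, S.eq_add_integral, fun t ht => ?_⟩
  · rw [EventuallyEq, ae_restrict_iff' measurableSet_uIoc, uIoc_of_le S.le]
    filter_upwards [h] with t ht ht' using ht (Ioc_subset_Icc_self ht')
  · rw [S.velocity_eq_add_integral t ht, add_right_inj]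
    apply intervalIntegral.integral_congr_ae
    rw [uIoc_of_le ht.1]
    filter_upwards [h] with s hs hs' using hs ⟨hs'.1.le, hs'.2.trans ht.2⟩

theorem linearCombination (S : CaraSolOn α β f u v) (S₂ : CaraSolOn α β f₂ u₂ v₂) (c d : ℝ) :
    CaraSolOn α β (fun t => c * f t + d * f₂ t) (fun t => c * u t + d * u₂ t)
      (fun t => c * v t + d * v₂ t) := by
  have hint : ∀ {p p₂ : ℝ → ℝ}, IntervalIntegrable p volume α β →
      IntervalIntegrable p₂ volume α β → ∀ t ∈ Icc α β,
        ∫ s in α..t, (c * p s + d * p₂ s) = c * (∫ s in α..t, p s) + d * ∫ s in α..t, p₂ s := by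
    intro p p₂ hp hp₂ t ht
    rw [intervalIntegral.integral_add
      ((intervalIntegrable_of_mem_Icc hp S.left_mem ht).const_mul c)
      ((intervalIntegrable_of_mem_Icc hp₂ S.left_mem ht).const_mul d),
      intervalIntegral.integral_const_mul, intervalIntegral.integral_const_mul]
  refine ⟨S.le, (S.intervalIntegrable.const_mul c).add (S₂.intervalIntegrable.const_mul d),
    fun t ht => ?_, fun t ht => ?_⟩
  · rw [hint S.intervalIntegrable_velocity S₂.intervalIntegrable_velocity t ht,
      S.eq_add_integral t ht, S₂.eq_add_integral t ht]
    ring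
  · rw [hint S.intervalIntegrable S₂.intervalIntegrable t ht,
      S.velocity_eq_add_integral t ht, S₂.velocity_eq_add_integral t ht]
    ring

theorem const_mul (S : CaraSolOn α β f u v) (c : ℝ) :
    CaraSolOn α β (fun t => c * f t) (fun t => c * u t) (fun t => c * v t) := by
  simpa using S.linearCombination S c 0

theorem comp_const_sub (S : CaraSolOn α β f u v) (c : ℝ) :
    CaraSolOn (c - β) (c - α) (fun t => f (c - t)) (fun t => u (c - t)) (fun t => -v (c - t)) := by
  have hmem : ∀ t ∈ Icc (c - β) (c - α), c - t ∈ Icc α β :=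
    fun t ht => ⟨by linarith [ht.2], by linarith [ht.1]⟩
  refine ⟨by linarith [S.le], (S.intervalIntegrable.comp_sub_left c).symm,
    fun t ht => ?_, fun t ht => ?_⟩
  · rw [intervalIntegral.integral_neg, intervalIntegral.integral_comp_sub_left (fun s => v s),
      sub_sub_cancel, S.eq_add S.right_mem (hmem t ht), intervalIntegral.integral_symm]
  · rw [intervalIntegral.integral_comp_sub_left (fun s => f s), sub_sub_cancel,
      S.velocity_eq_add S.right_mem (hmem t ht), intervalIntegral.integral_symm]
    ring

theorem le_add_mul_sub (S : CaraSolOn α β f u v) {x y m : ℝ} (hx : α ≤ x) (hxy : x ≤ y)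
    (hy : y ≤ β) (h : ∀ t ∈ Icc x y, v t ≤ m) : u y ≤ u x + m * (y - x) := by
  have S' := S.mono hx hxy hy
  have hint := intervalIntegral.integral_mono_on hxy S'.intervalIntegrable_velocity
    (intervalIntegrable_const (c := m)) h
  rw [intervalIntegral.integral_const, smul_eq_mul] at hint
  linarith [S'.eq_add_integral y S'.right_mem]

theorem add_mul_sub_le (S : CaraSolOn α β f u v) {x y m : ℝ} (hx : α ≤ x) (hxy : x ≤ y)
    (hy : y ≤ β) (h : ∀ t ∈ Icc x y, m ≤ v t) : u x + m * (y - x) ≤ u y := by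
  have := (S.const_mul (-1)).le_add_mul_sub (m := -m) hx hxy hy fun t ht => by linarith [h t ht]
  linarith

theorem monotoneOn_velocity (S : CaraSolOn α β f u v) (h : ∀ᵐ t, t ∈ Icc α β → 0 ≤ f t) :
    MonotoneOn v (Icc α β) := by
  intro x hx y hy hxy
  have hnonneg : 0 ≤ ∫ s in x..y, f s := by
    apply intervalIntegral.integral_nonneg_of_ae_restrict hxy
    rw [EventuallyLE, ae_restrict_iff' measurableSet_Icc]
    filter_upwards [h] with t ht ht' using ht ⟨hx.1.trans ht'.1, ht'.2.trans hy.2⟩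
  linarith [S.velocity_eq_add hx hy]

theorem antitoneOn_velocity (S : CaraSolOn α β f u v) (h : ∀ᵐ t, t ∈ Icc α β → f t ≤ 0) :
    AntitoneOn v (Icc α β) := by
  have hneg := (S.const_mul (-1)).monotoneOn_velocity (by
    filter_upwards [h] with t ht ht'
    linarith [ht ht'])
  intro x hx y hy hxy
  have := hneg hx hy hxy
  linarith

theorem le_max_endpoints (S : CaraSolOn α β f u v) (h : ∀ᵐ t, t ∈ Icc α β → 0 ≤ f t) {t : ℝ}
    (ht : t ∈ Icc α β) : u t ≤ max (u α) (u β) := by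
  have hv := S.monotoneOn_velocity h
  rcases le_total (v t) 0 with hvt | hvt
  · have := S.le_add_mul_sub le_rfl ht.1 ht.2 fun r hr =>
      (hv ⟨hr.1, hr.2.trans ht.2⟩ ht hr.2).trans hvt
    exact le_max_of_le_left (by linarith)
  · have := S.add_mul_sub_le ht.1 ht.2 le_rfl fun r hr =>
      hvt.trans (hv ht ⟨ht.1.trans hr.1, hr.2⟩ hr.1)
    exact le_max_of_le_right (by linarith)

theorem min_endpoints_le (S : CaraSolOn α β f u v) (h : ∀ᵐ t, t ∈ Icc α β → f t ≤ 0) {t : ℝ}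
    (ht : t ∈ Icc α β) : min (u α) (u β) ≤ u t := by
  have hneg := (S.const_mul (-1)).le_max_endpoints (by
    filter_upwards [h] with t ht ht'
    linarith [ht ht']) ht
  simp only [neg_one_mul, max_neg_neg] at hneg
  linarith

theorem add_mul_sub_le_of_nonneg (S : CaraSolOn α β f u v) (h : ∀ᵐ t, t ∈ Icc α β → 0 ≤ f t)
    {x t : ℝ} (hx : x ∈ Icc α β) (ht : t ∈ Icc α β) : u x + v x * (t - x) ≤ u t := by
  have hv := S.monotoneOn_velocity h
  rcases le_total x t with hxt | htx
  · exact S.add_mul_sub_le hx.1 hxt ht.2 fun r hr =>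
      hv hx ⟨hx.1.trans hr.1, hr.2.trans ht.2⟩ hr.1
  · have := S.le_add_mul_sub ht.1 htx hx.2 fun r hr =>
      hv ⟨ht.1.trans hr.1, hr.2.trans hx.2⟩ hx hr.2
    linarith

theorem le_add_mul_sub_of_nonpos (S : CaraSolOn α β f u v) (h : ∀ᵐ t, t ∈ Icc α β → f t ≤ 0)
    {x t : ℝ} (hx : x ∈ Icc α β) (ht : t ∈ Icc α β) : u t ≤ u x + v x * (t - x) := by
  have := (S.const_mul (-1)).add_mul_sub_le_of_nonneg (by
    filter_upwards [h] with t ht ht'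
    linarith [ht ht']) hx ht
  linarith

end CaraSolOn

/-- The growth factor of the Grönwall inequality for `u'' = f`, `|f| ≤ k |u|`, on an interval of
length `l` when the kernel `k` has mass `Λ`. -/
noncomputable def growthFactor (l Λ : ℝ) : ℝ := 2 * Real.exp (2 * (l + Λ))

theorem growthFactor_pos (l Λ : ℝ) : 0 < growthFactor l Λ := by
  unfold growthFactor
  positivity

namespace CaraSolOn

variable {α β : ℝ} {f u v : ℝ → ℝ}

theorem abs_add_abs_velocity_le_add_integral (S : CaraSolOn α β f u v) {k ρ : ℝ → ℝ}
    (hk : IntervalIntegrable k volume α β) (hρ : IntervalIntegrable ρ volume α β)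
    (hk0 : ∀ t ∈ Icc α β, 0 ≤ k t)
    (h : ∀ᵐ t, t ∈ Icc α β → |f t| ≤ k t * |u t| + ρ t) {t : ℝ} (ht : t ∈ Icc α β) :
    |u t| + |v t| ≤ |u α| + |v α| + (∫ s in α..t, ρ s) +
      ∫ s in α..t, (1 + k s) * (|u s| + |v s|) := by
  have hsub : uIcc α t ⊆ Icc α β := uIcc_subset_Icc S.left_mem ht
  have hρt := intervalIntegrable_of_mem_Icc hρ S.left_mem ht
  have hk' := intervalIntegrable_of_mem_Icc hk S.left_mem ht
  have hu := S.continuousOn.abs.mono hsub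
  have hv := S.continuousOn_velocity.abs.mono hsub
  have hku := hk'.mul_continuousOn hu
  have hubound : |∫ s in α..t, v s| ≤ ∫ s in α..t, |v s| :=
    intervalIntegral.abs_integral_le_integral_abs ht.1
  have hvbound : |∫ s in α..t, f s| ≤ ∫ s in α..t, (k s * |u s| + ρ s) := by
    rw [← Real.norm_eq_abs]
    refine intervalIntegral.norm_integral_le_of_norm_le ht.1 ?_ (hku.add hρt)
    filter_upwards [h] with s hs hs' using hs ⟨hs'.1.le, hs'.2.trans ht.2⟩
  rw [intervalIntegral.integral_add hku hρt] at hvbound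
  have hsum : (∫ s in α..t, |v s|) + ∫ s in α..t, k s * |u s| ≤
      ∫ s in α..t, (1 + k s) * (|u s| + |v s|) := by
    rw [← intervalIntegral.integral_add hv.intervalIntegrable hku]
    refine intervalIntegral.integral_mono_on ht.1 (hv.intervalIntegrable.add hku)
      ((intervalIntegrable_const.add hk').mul_continuousOn (hu.add hv)) fun s hs => ?_
    have := mul_nonneg (hk0 s ⟨hs.1, hs.2.trans ht.2⟩) (abs_nonneg (v s))
    linarith [abs_nonneg (u s)]
  rw [S.eq_add_integral t ht, S.velocity_eq_add_integral t ht]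
  linarith [abs_add_le (u α) (∫ s in α..t, v s), abs_add_le (v α) (∫ s in α..t, f s)]

theorem abs_add_abs_velocity_le (S : CaraSolOn α β f u v) {k ρ : ℝ → ℝ} {Λ R : ℝ}
    (hk : IntervalIntegrable k volume α β) (hρ : IntervalIntegrable ρ volume α β)
    (hk0 : ∀ t ∈ Icc α β, 0 ≤ k t) (hρ0 : ∀ t ∈ Icc α β, 0 ≤ ρ t)
    (hΛ : ∫ s in α..β, k s ≤ Λ) (hR : ∫ s in α..β, ρ s ≤ R)
    (h : ∀ᵐ t, t ∈ Icc α β → |f t| ≤ k t * |u t| + ρ t) {t : ℝ} (ht : t ∈ Icc α β) :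
    |u t| + |v t| ≤ growthFactor (β - α) Λ * (|u α| + |v α| + R) := by
  have hR0 : 0 ≤ R := (intervalIntegral.integral_nonneg S.le hρ0).trans hR
  have hgron := le_two_mul_mul_exp_of_le_add_integral (z := fun s => |u s| + |v s|)
    (A := |u α| + |v α| + R) (intervalIntegrable_const.add hk)
    (fun s hs => add_nonneg zero_le_one (hk0 s hs))
    (S.continuousOn.abs.add S.continuousOn_velocity.abs) (by positivity)
    (fun s hs => (S.abs_add_abs_velocity_le_add_integral hk hρ hk0 h hs).trans (by
      linarith [monotoneOn_integral_right hρ hρ0 hs S.right_mem hs.2])) ht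
  have hexp : (∫ s in α..t, (1 + k s)) ≤ β - α + Λ := by
    refine (monotoneOn_integral_right (intervalIntegrable_const.add hk)
      (fun s hs => add_nonneg zero_le_one (hk0 s hs)) ht S.right_mem ht.2).trans ?_
    dsimp only
    rw [intervalIntegral.integral_add intervalIntegrable_const hk]
    simpa using hΛ
  calc |u t| + |v t|
      ≤ 2 * (|u α| + |v α| + R) * Real.exp (2 * ∫ s in α..t, (1 + k s)) := hgron
    _ ≤ 2 * (|u α| + |v α| + R) * Real.exp (2 * (β - α + Λ)) := by gcongr
    _ = growthFactor (β - α) Λ * (|u α| + |v α| + R) := by unfold growthFactor; ring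

theorem eq_zero_of_left_eq_zero (S : CaraSolOn α β f u v) {k : ℝ → ℝ}
    (hk : IntervalIntegrable k volume α β) (hk0 : ∀ t ∈ Icc α β, 0 ≤ k t)
    (h : ∀ᵐ t, t ∈ Icc α β → |f t| ≤ k t * |u t|) (hu : u α = 0) (hv : v α = 0)
    {t : ℝ} (ht : t ∈ Icc α β) : u t = 0 ∧ v t = 0 := by
  have hle := S.abs_add_abs_velocity_le (ρ := fun _ => 0) (R := 0) hk intervalIntegrable_const hk0
    (fun _ _ => le_rfl) le_rfl (by simp) (by simpa using h) ht
  simp only [hu, hv, abs_zero, add_zero, mul_zero] at hle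
  exact ⟨abs_nonpos_iff.1 (by linarith [abs_nonneg (v t)]),
    abs_nonpos_iff.1 (by linarith [abs_nonneg (u t)])⟩

theorem eq_zero_of_eq_zero (S : CaraSolOn α β f u v) {k : ℝ → ℝ}
    (hk : IntervalIntegrable k volume α β) (hk0 : ∀ t ∈ Icc α β, 0 ≤ k t)
    (h : ∀ᵐ t, t ∈ Icc α β → |f t| ≤ k t * |u t|) {t₀ : ℝ} (ht₀ : t₀ ∈ Icc α β)
    (hu : u t₀ = 0) (hv : v t₀ = 0) {t : ℝ} (ht : t ∈ Icc α β) : u t = 0 ∧ v t = 0 := by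
  rcases le_total t₀ t with hle | hle
  · have hsub : Icc t₀ β ⊆ Icc α β := Icc_subset_Icc_left ht₀.1
    refine (S.mono ht₀.1 ht₀.2 le_rfl).eq_zero_of_left_eq_zero
      (intervalIntegrable_of_mem_Icc hk ht₀ S.right_mem) (fun s hs => hk0 s (hsub hs)) ?_ hu hv
      ⟨hle, ht.2⟩
    filter_upwards [h] with s hs hs' using hs (hsub hs')
  · have hreflect : ∀ s ∈ Icc (α + t₀ - t₀) (α + t₀ - α), α + t₀ - s ∈ Icc α β := fun s hs =>
      ⟨by linarith [hs.2], by linarith [hs.1, ht₀.2]⟩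
    have hzero := ((S.mono le_rfl ht₀.1 ht₀.2).comp_const_sub (α + t₀)).eq_zero_of_left_eq_zero
      ((intervalIntegrable_of_mem_Icc hk S.left_mem ht₀).comp_sub_left (α + t₀)).symm
      (fun s hs => hk0 _ (hreflect s hs)) (by
        filter_upwards [(Measure.measurePreserving_sub_left volume
          (α + t₀)).quasiMeasurePreserving.ae h] with s hs hs' using hs (hreflect s hs'))
      (by simpa using hu) (by simpa using hv) (t := α + t₀ - t) ⟨by linarith, by linarith [ht.1]⟩
    simpa using hzero

end CaraSolOn

section Picard

variable {α β : ℝ} {E : Type*} [NormedAddCommGroup E] [NormedSpace ℝ E] {F : ℝ → E → E}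
  {k : ℝ → ℝ}

/-- In the norm weighted by `t ↦ exp (2 ∫ k)` the Picard operator is a `1/2`-contraction. -/
theorem norm_integral_sub_integral_le_of_lipschitz (hk : IntervalIntegrable k volume α β)
    (hk0 : ∀ t ∈ Icc α β, 0 ≤ k t)
    (hF : ∀ y : ℝ → E, ContinuousOn y (Icc α β) →
      IntervalIntegrable (fun t => F t (y t)) volume α β)
    (hlip : ∀ t ∈ Icc α β, ∀ x y, ‖F t x - F t y‖ ≤ k t * ‖x - y‖) {y z : ℝ → E} {D : ℝ}
    (hy : ContinuousOn y (Icc α β)) (hz : ContinuousOn z (Icc α β)) (hD : 0 ≤ D)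
    (hyz : ∀ t ∈ Icc α β, ‖y t - z t‖ ≤ D * Real.exp (2 * ∫ s in α..t, k s)) {t : ℝ}
    (ht : t ∈ Icc α β) :
    ‖(∫ s in α..t, F s (y s)) - ∫ s in α..t, F s (z s)‖ ≤
      D / 2 * Real.exp (2 * ∫ s in α..t, k s) := by
  have hα : α ∈ Icc α β := left_mem_Icc.2 (ht.1.trans ht.2)
  have hexp : ContinuousOn (fun t => Real.exp (2 * ∫ s in α..t, k s)) (Icc α β) :=
    Real.continuous_exp.comp_continuousOn
      (continuousOn_const.mul (continuousOn_integral_right (ht.1.trans ht.2) hk))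
  rw [← intervalIntegral.integral_sub (intervalIntegrable_of_mem_Icc (hF y hy) hα ht)
    (intervalIntegrable_of_mem_Icc (hF z hz) hα ht)]
  calc ‖∫ s in α..t, (F s (y s) - F s (z s))‖
      ≤ ∫ s in α..t, D * (k s * Real.exp (2 * ∫ r in α..s, k r)) := by
        refine intervalIntegral.norm_integral_le_of_norm_le ht.1
          (Eventually.of_forall fun s hs => ?_)
          (((intervalIntegrable_of_mem_Icc hk hα ht).mul_continuousOn
            (hexp.mono (uIcc_subset_Icc hα ht))).const_mul D)
        have hs' : s ∈ Icc α β := ⟨hs.1.le, hs.2.trans ht.2⟩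
        linarith [hlip s hs' (y s) (z s), mul_le_mul_of_nonneg_left (hyz s hs') (hk0 s hs')]
    _ = D / 2 * (2 * ∫ s in α..t, k s * Real.exp (2 * ∫ r in α..s, k r)) := by
        rw [intervalIntegral.integral_const_mul]
        ring
    _ ≤ D / 2 * Real.exp (2 * ∫ s in α..t, k s) := by
        gcongr
        exact two_mul_integral_mul_exp_le hk hk0 ht

theorem exists_eq_add_integral_of_lipschitz [CompleteSpace E] (hαβ : α ≤ β)
    (hk : IntervalIntegrable k volume α β) (hk0 : ∀ t ∈ Icc α β, 0 ≤ k t)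
    (hF : ∀ y : ℝ → E, ContinuousOn y (Icc α β) →
      IntervalIntegrable (fun t => F t (y t)) volume α β)
    (hlip : ∀ t ∈ Icc α β, ∀ x y, ‖F t x - F t y‖ ≤ k t * ‖x - y‖) (x₀ : E) :
    ∃ y : ℝ → E, ContinuousOn y (Icc α β) ∧
      ∀ t ∈ Icc α β, y t = x₀ + ∫ s in α..t, F s (y s) := by
  set W : ℝ → ℝ := fun t => Real.exp (2 * ∫ s in α..t, k s)
  have hW0 : ∀ t, W t ≠ 0 := fun t => (Real.exp_pos _).ne'
  have hWc : ContinuousOn W (Icc α β) :=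
    Real.continuous_exp.comp_continuousOn
      (continuousOn_const.mul (continuousOn_integral_right hαβ hk))
  set ext : C(Icc α β, E) → ℝ → E := fun y t => W t • y (projIcc α β hαβ t) with hext
  have hextc : ∀ y, ContinuousOn (ext y) (Icc α β) := fun y =>
    hWc.smul (y.continuous.comp continuous_projIcc).continuousOn
  set Φ : C(Icc α β, E) → ℝ → E := fun y t => x₀ + ∫ s in α..t, F s (ext y s)
  have hΦc : ∀ y, ContinuousOn (fun t => (W t)⁻¹ • Φ y t) (Icc α β) := fun y =>
    (hWc.inv₀ fun t _ => hW0 t).smul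
      (continuousOn_const.add (continuousOn_integral_right hαβ (hF _ (hextc y))))
  set T : C(Icc α β, E) → C(Icc α β, E) := fun y => ⟨_, (hΦc y).domRestrict⟩
  have hT : ContractingWith (1 / 2) T := by
    refine ⟨by norm_num, LipschitzWith.of_dist_le_mul fun y z => ?_⟩
    rw [ContinuousMap.dist_le (by positivity)]
    rintro ⟨t, ht⟩
    have hdist : ∀ s ∈ Icc α β, ‖ext y s - ext z s‖ ≤ dist y z * W s := fun s _ => by
      rw [hext, ← smul_sub, norm_smul, Real.norm_of_nonneg (Real.exp_pos _).le, mul_comm,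
        ← dist_eq_norm]
      exact mul_le_mul_of_nonneg_right (ContinuousMap.dist_apply_le_dist _) (Real.exp_pos _).le
    have hle := norm_integral_sub_integral_le_of_lipschitz hk hk0 hF hlip (hextc y) (hextc z)
      dist_nonneg hdist ht
    change dist ((W t)⁻¹ • Φ y t) ((W t)⁻¹ • Φ z t) ≤ _
    rw [dist_eq_norm, ← smul_sub, add_sub_add_left_eq_sub, norm_smul,
      Real.norm_of_nonneg (inv_nonneg.2 (Real.exp_pos _).le), inv_mul_le_iff₀ (Real.exp_pos _)]
    refine hle.trans_eq ?_
    push_cast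
    ring
  obtain ⟨y, hy, -⟩ := hT.exists_fixedPoint 0 (edist_ne_top _ _)
  refine ⟨ext y, hextc y, fun t ht => ?_⟩
  have hfix : (W t)⁻¹ • Φ y t = y ⟨t, ht⟩ := DFunLike.congr_fun hy ⟨t, ht⟩
  simp only [hext]
  rw [projIcc_of_mem hαβ ht, ← hfix, smul_inv_smul₀ (hW0 t)]

end Picard

/-- Carathéodory solutions of `u'' + q(t) G(u) = 0` on `[α, β]`, with velocity `v`. -/
abbrev SemilinearSol (q G : ℝ → ℝ) (α β : ℝ) (u v : ℝ → ℝ) : Prop :=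
  CaraSolOn α β (fun t => -(q t * G (u t))) u v

/-- Carathéodory solutions of `w'' + q(t) c(t) w = 0` on `[α, β]`, with velocity `w'`. The
coefficient is kept as a product because `q` is a weight and `c` is `G'` along a solution. -/
abbrev LinearSol (q c : ℝ → ℝ) (α β : ℝ) (w w' : ℝ → ℝ) : Prop :=
  CaraSolOn α β (fun t => -(q t * (c t * w t))) w w'

theorem SemilinearSol.mono {q G u v : ℝ → ℝ} {α β x y : ℝ} (S : SemilinearSol q G α β u v)
    (hx : α ≤ x) (hxy : x ≤ y) (hy : y ≤ β) : SemilinearSol q G x y u v :=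
  CaraSolOn.mono S hx hxy hy

theorem LinearSol.mono {q c w w' : ℝ → ℝ} {α β x y : ℝ} (S : LinearSol q c α β w w')
    (hx : α ≤ x) (hxy : x ≤ y) (hy : y ≤ β) : LinearSol q c x y w w' :=
  CaraSolOn.mono S hx hxy hy

theorem LinearSol.const_mul {q c w w' : ℝ → ℝ} {α β : ℝ} (S : LinearSol q c α β w w') (d : ℝ) :
    LinearSol q c α β (fun t => d * w t) (fun t => d * w' t) :=
  (CaraSolOn.const_mul S d).congr_ae (Eventually.of_forall fun t _ => by ring)

theorem exists_semilinearSol {α β : ℝ} (hαβ : α ≤ β) {q G : ℝ → ℝ}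
    (hq : IntervalIntegrable q volume α β) {L : ℝ}
    (hG : ∀ x y, |G x - G y| ≤ L * |x - y|) (x s : ℝ) :
    ∃ u v, SemilinearSol q G α β u v ∧ u α = x ∧ v α = s := by
  have hL : 0 ≤ L := by simpa using (abs_nonneg _).trans (hG 1 0)
  have hGc := (LipschitzWith.of_dist_le' (f := G) (K := L) hG).continuous
  have hforce : ∀ y : ℝ → ℝ × ℝ, ContinuousOn y (Icc α β) →
      IntervalIntegrable (fun t => -(q t * G (y t).1)) volume α β := fun y hy =>
    (hq.mul_continuousOn (hGc.comp_continuousOn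
      (continuous_fst.comp_continuousOn (by rwa [uIcc_of_le hαβ])))).neg
  have hvel : ∀ y : ℝ → ℝ × ℝ, ContinuousOn y (Icc α β) →
      IntervalIntegrable (fun t => (y t).2) volume α β := fun y hy =>
    (continuous_snd.comp_continuousOn hy).intervalIntegrable_of_Icc hαβ
  have hsys : ∀ y : ℝ → ℝ × ℝ, ContinuousOn y (Icc α β) →
      IntervalIntegrable (fun t => ((y t).2, -(q t * G (y t).1))) volume α β := fun y hy =>
    ⟨(hvel y hy).1.prodMk (hforce y hy).1, (hvel y hy).2.prodMk (hforce y hy).2⟩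
  obtain ⟨y, hy, hfix⟩ := exists_eq_add_integral_of_lipschitz
    (F := fun (t : ℝ) (z : ℝ × ℝ) => (z.2, -(q t * G z.1))) (k := fun t => 1 + L * |q t|) hαβ
    (intervalIntegrable_const.add (hq.abs.const_mul L)) (fun t _ => by positivity) hsys
    (fun t _ z w => by
      have h₁ : |z.1 - w.1| ≤ ‖z - w‖ := norm_fst_le (z - w)
      have h₂ : |z.2 - w.2| ≤ ‖z - w‖ := norm_snd_le (z - w)
      refine max_le ?_ ?_
      · change |z.2 - w.2| ≤ _
        nlinarith [mul_nonneg (mul_nonneg hL (abs_nonneg (q t))) (norm_nonneg (z - w))]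
      · change |-(q t * G z.1) - -(q t * G w.1)| ≤ _
        rw [neg_sub_neg, ← mul_sub, abs_mul, abs_sub_comm]
        nlinarith [mul_le_mul_of_nonneg_left ((hG z.1 w.1).trans
          (mul_le_mul_of_nonneg_left h₁ hL)) (abs_nonneg (q t)), norm_nonneg (z - w)]) (x, s)
  have hα : α ∈ Icc α β := left_mem_Icc.2 hαβ
  have hyα : y α = (x, s) := by simpa using hfix α hα
  refine ⟨fun t => (y t).1, fun t => (y t).2, ⟨hαβ, hforce y hy, fun t ht => ?_, fun t ht => ?_⟩,
    congrArg Prod.fst hyα, congrArg Prod.snd hyα⟩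
  all_goals
    have hint := intervalIntegrable_of_mem_Icc (hsys y hy) hα ht
    rw [hyα, hfix t ht]
  · rw [Prod.fst_add]
    congr 1
    exact ((ContinuousLinearMap.fst ℝ ℝ ℝ).intervalIntegral_comp_comm hint).symm
  · rw [Prod.snd_add]
    congr 1
    exact ((ContinuousLinearMap.snd ℝ ℝ ℝ).intervalIntegral_comp_comm hint).symm

section FirstZero

variable {D : ℝ → ℝ} {x y d : ℝ}

theorem exists_first_zero (hxy : x < y) (hD : ContinuousOn D (Icc x y))
    (hx : ∀ᶠ t in 𝓝[>] x, 0 < D t) (hy : ∃ t ∈ Ioc x y, D t ≤ 0) :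
    ∃ z ∈ Ioc x y, D z = 0 ∧ ∀ t ∈ Ioo x z, 0 < D t := by
  obtain ⟨y', hy', hDy'⟩ := hy
  obtain ⟨p, hxp, hp⟩ := (mem_nhdsGT_iff_exists_Ioo_subset' hxy).1 hx
  obtain ⟨x', hxx', hx'⟩ := exists_between (lt_min hxp hy'.1)
  have hDx' : 0 < D x' := hp ⟨hxx', hx'.trans_le (min_le_left _ _)⟩
  have hx'y' : x' < y' := hx'.trans_le (min_le_right _ _)
  have hsub : Icc x' y' ⊆ Icc x y := Icc_subset_Icc hxx'.le hy'.2
  have hivt : ∀ t ∈ Icc x' y', D t ≤ 0 → ∃ z ∈ Icc x' t, D z = 0 := fun t ht hDt =>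
    intermediate_value_Icc' ht.1 (hD.mono fun s hs => hsub ⟨hs.1, hs.2.trans ht.2⟩)
      ⟨hDt, hDx'.le⟩
  have hcompact : IsCompact (Icc x' y' ∩ D ⁻¹' {0}) :=
    isCompact_Icc.of_isClosed_subset
      ((hD.mono hsub).preimage_isClosed_of_isClosed isClosed_Icc isClosed_singleton)
      inter_subset_left
  obtain ⟨z₀, hz₀, hDz₀⟩ := hivt y' ⟨hx'y'.le, le_rfl⟩ hDy'
  obtain ⟨z, ⟨hz, hDz⟩, hleast⟩ := hcompact.exists_isLeast ⟨z₀, hz₀, hDz₀⟩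
  refine ⟨z, ⟨hxx'.trans_le hz.1, hz.2.trans hy'.2⟩, hDz, fun t ht => ?_⟩
  rcases lt_or_ge t x' with htx' | hx't
  · exact hp ⟨ht.1, htx'.trans (hx'.trans_le (min_le_left _ _))⟩
  · by_contra! hDt
    have hty' := ht.2.le.trans hz.2
    obtain ⟨s, hs, hDs⟩ := hivt t ⟨hx't, hty'⟩ hDt
    exact absurd (hleast ⟨⟨hs.1, hs.2.trans hty'⟩, hDs⟩) (not_le.2 (hs.2.trans_lt ht.2))

theorem forall_pos_of_bootstrap (hD : ContinuousOn D (Icc x y)) (hx : 0 < D x)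
    (hstep : ∀ z ∈ Icc x y, (∀ t ∈ Icc x z, 0 ≤ D t) → 0 < D z) : ∀ t ∈ Icc x y, 0 < D t := by
  by_contra! hneg
  obtain ⟨t, ht, hDt⟩ := hneg
  have hxt : x < t := ht.1.lt_of_ne fun h => by rw [← h] at hDt; exact hx.not_ge hDt
  have hcont := hD.mono (Icc_subset_Icc_right ht.2)
  obtain ⟨z, hz, hDz, hpos⟩ := exists_first_zero hxt hcont
    (((hcont x (left_mem_Icc.2 hxt.le)).mono_of_mem_nhdsWithin
      (Icc_mem_nhdsGT hxt)).eventually (lt_mem_nhds hx)) ⟨t, right_mem_Ioc.2 hxt, hDt⟩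
  refine (hstep z ⟨hz.1.le, hz.2.trans ht.2⟩ fun s hs => ?_).ne' hDz
  rcases hs.1.eq_or_lt with rfl | hxs
  · exact hx.le
  · rcases hs.2.eq_or_lt with rfl | hsz
    · exact hDz.ge
    · exact (hpos s ⟨hxs, hsz⟩).le

theorem eventually_pos_of_hasDerivWithinAt_pos (hxy : x < y)
    (hd : HasDerivWithinAt D d (Icc x y) x) (hDx : D x = 0) (hd0 : 0 < d) :
    ∀ᶠ t in 𝓝[>] x, 0 < D t := by
  have hIoi : HasDerivWithinAt D d (Ioi x) x :=
    hd.mono_of_mem_nhdsWithin (mem_of_superset (Ioc_mem_nhdsGT hxy) Ioc_subset_Icc_self)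
  have hslope := (hasDerivWithinAt_iff_tendsto_slope' self_notMem_Ioi).1 hIoi
  filter_upwards [hslope.eventually (lt_mem_nhds hd0), self_mem_nhdsWithin] with t ht hxt
  rw [slope_def_field, hDx, sub_zero] at ht
  exact (div_pos_iff_of_pos_right (sub_pos.2 hxt)).1 ht

theorem nonpos_of_hasDerivWithinAt_of_nonneg_left (hxy : x < y)
    (hd : HasDerivWithinAt D d (Icc x y) y) (hDy : D y = 0) (hnonneg : ∀ t ∈ Ioo x y, 0 ≤ D t) :
    d ≤ 0 := by
  have hIio : HasDerivWithinAt D d (Iio y) y :=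
    hd.mono_of_mem_nhdsWithin (mem_of_superset (Ico_mem_nhdsLT hxy) Ico_subset_Icc_self)
  refine le_of_tendsto ((hasDerivWithinAt_iff_tendsto_slope' self_notMem_Iio).1 hIio) ?_
  filter_upwards [Ioo_mem_nhdsLT hxy] with t ht
  rw [slope_def_field, hDy, sub_zero]
  exact div_nonpos_of_nonneg_of_nonpos (hnonneg t ht) (by linarith [ht.2])

end FirstZero

/-! ### Superlinear nonlinearities -/

/-- A globally `L`-Lipschitz `C¹` nonlinearity vanishing on `(-∞, 0]`, positive on `(0, ∞)` and
superlinear in the sense of condition `(g_s)`. The uniform continuity of `G'` is what the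
truncation of `g` at an a priori bound provides. -/
structure SuperlinearLipschitz (G : ℝ → ℝ) (L : ℝ) : Prop where
  differentiable : Differentiable ℝ G
  uniformContinuous_deriv : UniformContinuous (deriv G)
  deriv_le : ∀ x, deriv G x ≤ L
  eq_zero_of_nonpos : ∀ x ≤ 0, G x = 0
  pos : ∀ x > 0, 0 < G x
  lt_mul_deriv : ∀ x > 0, G x < x * deriv G x

namespace SuperlinearLipschitz

variable {G : ℝ → ℝ} {L : ℝ}

theorem continuous (hG : SuperlinearLipschitz G L) : Continuous G := hG.differentiable.continuous

theorem continuous_deriv (hG : SuperlinearLipschitz G L) : Continuous (deriv G) :=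
  hG.uniformContinuous_deriv.continuous

theorem deriv_eq_zero_of_nonpos (hG : SuperlinearLipschitz G L) {x : ℝ} (hx : x ≤ 0) :
    deriv G x = 0 :=
  (uniqueDiffOn_Iic x x self_mem_Iic).eq_deriv _
    (hG.differentiable x).hasDerivAt.hasDerivWithinAt
    ((hasDerivWithinAt_const x (Iic x) (0 : ℝ)).congr
      (fun y hy => hG.eq_zero_of_nonpos y (le_trans hy hx)) (hG.eq_zero_of_nonpos x hx))

theorem deriv_nonneg (hG : SuperlinearLipschitz G L) (x : ℝ) : 0 ≤ deriv G x := by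
  rcases le_or_gt x 0 with hx | hx
  · exact (hG.deriv_eq_zero_of_nonpos hx).ge
  · exact (pos_of_mul_pos_right ((hG.pos x hx).trans (hG.lt_mul_deriv x hx)) hx.le).le

theorem abs_deriv_le (hG : SuperlinearLipschitz G L) (x : ℝ) : |deriv G x| ≤ L :=
  (abs_of_nonneg (hG.deriv_nonneg x)).trans_le (hG.deriv_le x)

theorem constant_nonneg (hG : SuperlinearLipschitz G L) : 0 ≤ L :=
  (hG.deriv_nonneg 0).trans (hG.deriv_le 0)

theorem nonneg (hG : SuperlinearLipschitz G L) (x : ℝ) : 0 ≤ G x := by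
  rcases le_or_gt x 0 with hx | hx
  · exact (hG.eq_zero_of_nonpos x hx).ge
  · exact (hG.pos x hx).le

theorem exists_sub_eq_deriv_mul (hG : SuperlinearLipschitz G L) (x y : ℝ) :
    ∃ ξ ∈ uIcc x y, G x - G y = deriv G ξ * (x - y) := by
  wlog hxy : x < y generalizing x y
  · rcases (not_lt.1 hxy).eq_or_lt with rfl | hlt
    · exact ⟨y, by simp, by simp⟩
    · obtain ⟨ξ, hξ, heq⟩ := this y x hlt
      exact ⟨ξ, by rwa [uIcc_comm], by linarith⟩
  obtain ⟨ξ, hξ, heq⟩ := exists_deriv_eq_slope G hxy hG.continuous.continuousOn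
    hG.differentiable.differentiableOn
  refine ⟨ξ, Ioo_subset_Icc_self.trans Icc_subset_uIcc hξ, ?_⟩
  rw [heq, div_mul_eq_mul_div, eq_div_iff (sub_pos.2 hxy).ne']
  ring

theorem abs_sub_le (hG : SuperlinearLipschitz G L) (x y : ℝ) : |G x - G y| ≤ L * |x - y| := by
  obtain ⟨ξ, -, h⟩ := hG.exists_sub_eq_deriv_mul x y
  rw [h, abs_mul]
  exact mul_le_mul_of_nonneg_right (hG.abs_deriv_le ξ) (abs_nonneg _)

theorem le_mul_of_nonneg (hG : SuperlinearLipschitz G L) {x : ℝ} (hx : 0 ≤ x) :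
    G x ≤ L * x := by
  simpa [hG.eq_zero_of_nonpos 0 le_rfl, abs_of_nonneg hx, abs_of_nonneg (hG.nonneg x)]
    using hG.abs_sub_le x 0

theorem exists_forall_lt_deriv_le (hG : SuperlinearLipschitz G L) {η : ℝ} (hη : 0 < η) :
    ∃ δ > 0, ∀ x < δ, deriv G x ≤ η := by
  obtain ⟨δ, hδ, hclose⟩ := Metric.uniformContinuous_iff.1 hG.uniformContinuous_deriv η hη
  refine ⟨δ, hδ, fun x hx => ?_⟩
  rcases le_or_gt x 0 with hx0 | hx0
  · exact (hG.deriv_eq_zero_of_nonpos hx0).trans_le hη.le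
  · have := hclose (a := x) (b := 0) (by rwa [Real.dist_eq, sub_zero, abs_of_pos hx0])
    rw [Real.dist_eq, hG.deriv_eq_zero_of_nonpos le_rfl, sub_zero] at this
    exact (le_abs_self _).trans this.le

theorem mul_le_mul_of_le (hG : SuperlinearLipschitz G L) {x y : ℝ} (hx : 0 < x) (hxy : x ≤ y) :
    G x * y ≤ G y * x := by
  have hderiv : ∀ s ∈ Icc x y,
      HasDerivAt (fun s => G s / s) ((deriv G s * s - G s * 1) / s ^ 2) s := fun s hs =>
    (hG.differentiable s).hasDerivAt.div (hasDerivAt_id s) (hx.trans_le hs.1).ne'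
  have hmono : MonotoneOn (fun s => G s / s) (Icc x y) := by
    apply monotoneOn_of_deriv_nonneg (convex_Icc x y)
    · exact fun s hs => (hderiv s hs).continuousAt.continuousWithinAt
    · exact fun s hs =>
        (hderiv s (interior_subset hs)).differentiableAt.differentiableWithinAt
    · intro s hs
      rw [(hderiv s (interior_subset hs)).deriv]
      have hs0 : 0 < s := hx.trans_le (interior_subset hs : s ∈ Icc x y).1
      exact div_nonneg (by linarith [hG.lt_mul_deriv s hs0]) (sq_nonneg s)
  have := hmono (left_mem_Icc.2 hxy) (right_mem_Icc.2 hxy) hxy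
  rwa [div_le_div_iff₀ hx (hx.trans_le hxy)] at this

end SuperlinearLipschitz

/-! ### Continuous dependence, energy and comparison -/

section Dependence

variable {α β : ℝ} {q G u v u₂ v₂ : ℝ → ℝ} {L X : ℝ}

theorem SemilinearSol.abs_sub_add_abs_sub_le (S : SemilinearSol q G α β u v)
    (S₂ : SemilinearSol q G α β u₂ v₂) (hq : IntervalIntegrable q volume α β)
    (hG : ∀ x y, |G x - G y| ≤ L * |x - y|) (hX : ∫ s in α..β, |q s| ≤ X) {t : ℝ}
    (ht : t ∈ Icc α β) :
    |u t - u₂ t| + |v t - v₂ t| ≤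
      growthFactor (β - α) (L * X) * (|u α - u₂ α| + |v α - v₂ α|) := by
  have hL : 0 ≤ L := by simpa using (abs_nonneg _).trans (hG 1 0)
  have hgron := (S.linearCombination S₂ 1 (-1)).abs_add_abs_velocity_le (ρ := fun _ => 0)
    (Λ := L * X) (R := 0)
    (hq.abs.const_mul L) intervalIntegrable_const (fun t _ => by positivity) (fun _ _ => le_rfl)
    (by rw [intervalIntegral.integral_const_mul]; exact mul_le_mul_of_nonneg_left hX hL)
    (by simp) (Eventually.of_forall fun t _ => by
      rw [show 1 * -(q t * G (u t)) + -1 * -(q t * G (u₂ t)) = -(q t * (G (u t) - G (u₂ t))) by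
        ring, show 1 * u t + -1 * u₂ t = u t - u₂ t by ring, abs_neg, abs_mul]
      linarith [mul_le_mul_of_nonneg_left (hG (u t) (u₂ t)) (abs_nonneg (q t))]) ht
  simpa only [one_mul, neg_one_mul, ← sub_eq_add_neg, add_zero] using hgron

theorem SemilinearSol.eq_of_eq (S : SemilinearSol q G α β u v)
    (S₂ : SemilinearSol q G α β u₂ v₂) (hq : IntervalIntegrable q volume α β)
    (hG : ∀ x y, |G x - G y| ≤ L * |x - y|) {t₀ : ℝ} (ht₀ : t₀ ∈ Icc α β)
    (hu : u t₀ = u₂ t₀) (hv : v t₀ = v₂ t₀) {t : ℝ} (ht : t ∈ Icc α β) :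
    u t = u₂ t ∧ v t = v₂ t := by
  have hL : 0 ≤ L := by simpa using (abs_nonneg _).trans (hG 1 0)
  have hzero := (S.linearCombination S₂ 1 (-1)).eq_zero_of_eq_zero (k := fun t => L * |q t|)
    (hq.abs.const_mul L) (fun t _ => by positivity) (Eventually.of_forall fun t _ => by
      rw [show 1 * -(q t * G (u t)) + -1 * -(q t * G (u₂ t)) = -(q t * (G (u t) - G (u₂ t))) by
        ring, show 1 * u t + -1 * u₂ t = u t - u₂ t by ring, abs_neg, abs_mul]
      linarith [mul_le_mul_of_nonneg_left (hG (u t) (u₂ t)) (abs_nonneg (q t))])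
    ht₀ (by linarith) (by linarith) ht
  exact ⟨by linarith [hzero.1], by linarith [hzero.2]⟩

theorem semilinearSol_affine (hαβ : α ≤ β) {x s t₀ : ℝ}
    (hG : ∀ t ∈ Icc α β, G (x + s * (t - t₀)) = 0) :
    SemilinearSol q G α β (fun t => x + s * (t - t₀)) fun _ => s := by
  have h : CaraSolOn α β (fun _ => 0) (fun t => x + s * (t - t₀)) fun _ => s :=
    ⟨hαβ, intervalIntegrable_const, fun t _ => by
      rw [intervalIntegral.integral_const, smul_eq_mul]; ring, by simp⟩
  exact h.congr_ae (Eventually.of_forall fun t ht => by rw [hG t ht, mul_zero, neg_zero])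

theorem CaraSolOn.velocity_eq_zero_of_isMinOn {f : ℝ → ℝ} (S : CaraSolOn α β f u v) {t : ℝ}
    (ht : t ∈ Ioo α β) (hmin : IsMinOn u (Icc α β) t) : v t = 0 :=
  (hmin.isLocalMin (Icc_mem_nhds ht.1 ht.2)).hasDerivAt_eq_zero
    ((S.hasDerivWithinAt (Ioo_subset_Icc_self ht)).hasDerivAt (Icc_mem_nhds ht.1 ht.2))

theorem SemilinearSol.nonneg_of_endpoints_nonneg (S : SemilinearSol q G α β u v)
    (hq : IntervalIntegrable q volume α β) (hG : SuperlinearLipschitz G L) (hα : 0 ≤ u α)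
    (hβ : 0 ≤ u β) : ∀ t ∈ Icc α β, 0 ≤ u t := by
  obtain ⟨z, hz, hmin⟩ := isCompact_Icc.exists_isMinOn ⟨α, S.left_mem⟩ S.continuousOn
  refine fun t ht => le_trans ?_ (hmin ht)
  by_contra! hneg
  have hzα : α < z := hz.1.lt_of_ne fun h => by rw [← h] at hneg; exact hneg.not_ge hα
  have hzβ : z < β := hz.2.lt_of_ne fun h => by rw [h] at hneg; exact hneg.not_ge hβ
  have hconst : SemilinearSol q G α β (fun t => u z + 0 * (t - z)) fun _ => 0 :=
    semilinearSol_affine S.le fun t _ => hG.eq_zero_of_nonpos _ (by linarith)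
  linarith [(S.eq_of_eq hconst hq hG.abs_sub_le hz (by ring)
    (S.velocity_eq_zero_of_isMinOn ⟨hzα, hzβ⟩ hmin) S.left_mem).1]

theorem SemilinearSol.pos_of_nonneg (S : SemilinearSol q G α β u v)
    (hq : IntervalIntegrable q volume α β) (hG : SuperlinearLipschitz G L)
    (hu : ∀ t ∈ Icc α β, 0 ≤ u t) (hv : v α ≠ 0) : ∀ t ∈ Ioo α β, 0 < u t := by
  refine fun t ht => (hu t (Ioo_subset_Icc_self ht)).lt_of_ne fun hut => hv ?_
  have hmin : IsMinOn u (Icc α β) t := fun s hs => hut.symm.trans_le (hu s hs)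
  have hzero : SemilinearSol q G α β (fun s => 0 + 0 * (s - t)) fun _ => 0 :=
    semilinearSol_affine S.le fun s _ => hG.eq_zero_of_nonpos _ (by linarith)
  exact (S.eq_of_eq hzero hq hG.abs_sub_le (Ioo_subset_Icc_self ht) (by linarith)
    (S.velocity_eq_zero_of_isMinOn ht hmin) S.left_mem).2

theorem SemilinearSol.eq_mul_sub_of_velocity_nonpos (S : SemilinearSol q G α β u v)
    (hq : IntervalIntegrable q volume α β) (hG : SuperlinearLipschitz G L) (hα : u α = 0)
    (hv : v α ≤ 0) {t : ℝ} (ht : t ∈ Icc α β) : u t = v α * (t - α) := by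
  have haffine : SemilinearSol q G α β (fun t => 0 + v α * (t - α)) fun _ => v α :=
    semilinearSol_affine S.le fun t ht => hG.eq_zero_of_nonpos _ (by
      rw [zero_add]; exact mul_nonpos_of_nonpos_of_nonneg hv (sub_nonneg.2 ht.1))
  rw [(S.eq_of_eq haffine hq hG.abs_sub_le S.left_mem (by rw [hα]; ring) rfl ht).1, zero_add]

theorem SemilinearSol.velocity_sq_sub (S : SemilinearSol q G α β u v) :
    v β ^ 2 - v α ^ 2 = -(2 * ∫ t in α..β, q t * (G (u t) * v t)) := by
  have h := integral_deriv_mul_add_mul_deriv S.le S.intervalIntegrable S.intervalIntegrable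
    S.velocity_eq_add_integral S.velocity_eq_add_integral
  rw [sq, sq, ← h, ← intervalIntegral.integral_const_mul, ← intervalIntegral.integral_neg]
  congr 1 with t
  ring

/-- With the primitive `Γ` of `G`, the difference of the energies `v² / 2 + q Γ(u)` of the two
solutions changes by `∫ (Γ(u) - Γ(u₂)) dq ≤ 0`. -/
theorem SemilinearSol.velocity_sq_sub_le_of_antitoneOn (S : SemilinearSol q G α β u v)
    (S₂ : SemilinearSol q G α β u₂ v₂) (hq : AntitoneOn q (Icc α β)) (hG : Continuous G)
    (hG0 : ∀ x, 0 ≤ G x) (hle : ∀ t ∈ Icc α β, u₂ t ≤ u t) (hα : u α = u₂ α) (hβ : u β = u₂ β) :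
    v β ^ 2 - v α ^ 2 ≤ v₂ β ^ 2 - v₂ α ^ 2 := by
  have hΓ : ∀ x, HasDerivAt (fun x => ∫ s in (0 : ℝ)..x, G s) (G x) x := fun x =>
    (hG.integral_hasStrictDerivAt 0 x).hasDerivAt
  have hcont : ∀ {u v : ℝ → ℝ}, SemilinearSol q G α β u v →
      ContinuousOn (fun t => G (u t) * v t) (Icc α β) := fun S =>
    (hG.comp_continuousOn S.continuousOn).mul S.continuousOn_velocity
  have hint : ∀ {u v : ℝ → ℝ}, SemilinearSol q G α β u v →
      IntervalIntegrable (fun t => q t * (G (u t) * v t)) volume α β := fun S =>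
    (AntitoneOn.intervalIntegrable (by rwa [uIcc_of_le S.le])).mul_continuousOn
      (by rw [uIcc_of_le S.le]; exact hcont S)
  have hnonneg := integral_mul_deriv_nonneg_of_antitoneOn S.le hq
    (φ := fun t => (∫ s in (0 : ℝ)..u t, G s) - ∫ s in (0 : ℝ)..u₂ t, G s)
    (φ' := fun t => G (u t) * v t - G (u₂ t) * v₂ t)
    (fun t ht => ((hΓ (u t)).comp_hasDerivWithinAt t (S.hasDerivWithinAt ht)).sub
      ((hΓ (u₂ t)).comp_hasDerivWithinAt t (S₂.hasDerivWithinAt ht)))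
    ((hcont S).sub (hcont S₂))
    (fun t ht => by
      rw [intervalIntegral.integral_interval_sub_left (hG.intervalIntegrable _ _)
        (hG.intervalIntegrable _ _)]
      exact intervalIntegral.integral_nonneg (hle t ht) fun s _ => hG0 s)
    (by rw [hα, sub_self]) (by rw [hβ, sub_self])
  simp only [mul_sub] at hnonneg
  rw [intervalIntegral.integral_sub (hint S) (hint S₂)] at hnonneg
  linarith [S.velocity_sq_sub, S₂.velocity_sq_sub]

end Dependence

section LinearComparison

variable {α β : ℝ} {q c c₂ w w' w₂ w₂' : ℝ → ℝ} {L X ω : ℝ}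

theorem LinearSol.eq_zero_of_eq_zero (S : LinearSol q c α β w w')
    (hq : IntervalIntegrable q volume α β) (hc : ∀ t ∈ Icc α β, |c t| ≤ L) {t₀ : ℝ}
    (ht₀ : t₀ ∈ Icc α β) (hw : w t₀ = 0) (hw' : w' t₀ = 0) {t : ℝ} (ht : t ∈ Icc α β) :
    w t = 0 ∧ w' t = 0 := by
  have hL : 0 ≤ L := (abs_nonneg _).trans (hc α S.left_mem)
  refine CaraSolOn.eq_zero_of_eq_zero S (k := fun t => L * |q t|) (hq.abs.const_mul L)
    (fun t _ => by positivity) (Eventually.of_forall fun t ht => ?_) ht₀ hw hw' ht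
  rw [abs_neg, abs_mul, abs_mul]
  nlinarith [mul_le_mul_of_nonneg_right (hc t ht) (mul_nonneg (abs_nonneg (q t))
    (abs_nonneg (w t)))]

theorem LinearSol.abs_add_abs_velocity_le (S : LinearSol q c α β w w')
    (hq : IntervalIntegrable q volume α β) (hc : ∀ t ∈ Icc α β, |c t| ≤ L)
    (hX : ∫ s in α..β, |q s| ≤ X) {t : ℝ} (ht : t ∈ Icc α β) :
    |w t| + |w' t| ≤ growthFactor (β - α) (L * X) * (|w α| + |w' α|) := by
  have hL : 0 ≤ L := (abs_nonneg _).trans (hc α S.left_mem)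
  simpa using CaraSolOn.abs_add_abs_velocity_le S (ρ := fun _ => 0) (Λ := L * X) (R := 0)
    (hq.abs.const_mul L) intervalIntegrable_const (fun t _ => by positivity) (fun _ _ => le_rfl)
    (by rw [intervalIntegral.integral_const_mul]; exact mul_le_mul_of_nonneg_left hX hL)
    (by simp) (Eventually.of_forall fun t ht => by
      rw [abs_neg, abs_mul, abs_mul]
      nlinarith [mul_le_mul_of_nonneg_right (hc t ht) (mul_nonneg (abs_nonneg (q t))
        (abs_nonneg (w t)))]) ht

theorem LinearSol.abs_sub_add_abs_sub_le (S : LinearSol q c α β w w')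
    (S₂ : LinearSol q c₂ α β w₂ w₂') (hq : IntervalIntegrable q volume α β)
    (hc : ∀ t ∈ Icc α β, |c t| ≤ L) (hc₂ : ∀ t ∈ Icc α β, |c₂ t| ≤ L)
    (hω : ∀ t ∈ Icc α β, |c t - c₂ t| ≤ ω) (hX : ∫ s in α..β, |q s| ≤ X) {t : ℝ}
    (ht : t ∈ Icc α β) :
    |w t - w₂ t| + |w' t - w₂' t| ≤ growthFactor (β - α) (L * X) *
      (|w α - w₂ α| + |w' α - w₂' α| +
        ω * (growthFactor (β - α) (L * X) * (|w₂ α| + |w₂' α|)) * X) := by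
  have hL : 0 ≤ L := (abs_nonneg _).trans (hc α S.left_mem)
  have hω0 : 0 ≤ ω := (abs_nonneg _).trans (hω α S.left_mem)
  set Y := growthFactor (β - α) (L * X) * (|w₂ α| + |w₂' α|)
  have hY : 0 ≤ Y := mul_nonneg (growthFactor_pos _ _).le (by positivity)
  have hw₂ : ∀ t ∈ Icc α β, |w₂ t| ≤ Y := fun t ht =>
    (le_add_of_nonneg_right (abs_nonneg _)).trans (S₂.abs_add_abs_velocity_le hq hc₂ hX ht)
  have hgron := (S.linearCombination S₂ 1 (-1)).abs_add_abs_velocity_le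
    (ρ := fun t => ω * Y * |q t|) (Λ := L * X) (R := ω * Y * X)
    (hq.abs.const_mul L) (hq.abs.const_mul _)
    (fun t _ => by positivity) (fun t _ => by positivity)
    (by rw [intervalIntegral.integral_const_mul]; exact mul_le_mul_of_nonneg_left hX hL)
    (by rw [intervalIntegral.integral_const_mul]; gcongr) (Eventually.of_forall fun t ht => by
      rw [show 1 * -(q t * (c t * w t)) + -1 * -(q t * (c₂ t * w₂ t)) =
          -(q t * (c t * (w t - w₂ t))) - q t * ((c t - c₂ t) * w₂ t) by ring,
        show 1 * w t + -1 * w₂ t = w t - w₂ t by ring]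
      refine (abs_sub _ _).trans (add_le_add ?_ ?_)
      · rw [abs_neg, abs_mul, abs_mul]
        nlinarith [mul_le_mul_of_nonneg_right (hc t ht) (mul_nonneg (abs_nonneg (q t))
          (abs_nonneg (w t - w₂ t)))]
      · rw [abs_mul, abs_mul, mul_comm]
        exact mul_le_mul_of_nonneg_right (mul_le_mul (hω t ht) (hw₂ t ht) (abs_nonneg _) hω0)
          (abs_nonneg _)) ht
  simpa only [one_mul, neg_one_mul, ← sub_eq_add_neg] using hgron

end LinearComparison

/-! ### One positivity interval -/

namespace CaraSolOn

variable {α β : ℝ} {f u v : ℝ → ℝ}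

theorem mul_min_le_mul_length (S : CaraSolOn α β f u v) (h : ∀ᵐ t, t ∈ Icc α β → f t ≤ 0)
    (hu : ∀ t ∈ Icc α β, 0 ≤ u t) {x t : ℝ} (hx : x ∈ Icc α β) (ht : t ∈ Icc α β) :
    u x * min (t - α) (β - t) ≤ u t * (β - α) := by
  have htx := S.le_add_mul_sub_of_nonpos h ht hx
  have htα := S.le_add_mul_sub_of_nonpos h ht S.left_mem
  have htβ := S.le_add_mul_sub_of_nonpos h ht S.right_mem
  have huα := hu α S.left_mem
  have huβ := hu β S.right_mem
  have hut := hu t ht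
  rcases le_total t x with htx' | hxt
  · calc u x * min (t - α) (β - t) ≤ u x * (t - α) :=
          mul_le_mul_of_nonneg_left (min_le_left _ _) (hu x hx)
      _ ≤ (u t + v t * (x - t)) * (t - α) :=
          mul_le_mul_of_nonneg_right htx (sub_nonneg.2 ht.1)
      _ ≤ u t * (x - α) := by nlinarith
      _ ≤ u t * (β - α) := mul_le_mul_of_nonneg_left (by linarith [hx.2]) hut
  · calc u x * min (t - α) (β - t) ≤ u x * (β - t) :=
          mul_le_mul_of_nonneg_left (min_le_right _ _) (hu x hx)
      _ ≤ (u t + v t * (x - t)) * (β - t) :=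
          mul_le_mul_of_nonneg_right htx (sub_nonneg.2 ht.2)
      _ ≤ u t * (β - x) := by nlinarith
      _ ≤ u t * (β - α) := mul_le_mul_of_nonneg_left (by linarith [hx.1]) hut

end CaraSolOn

theorem exists_linearSol {α β : ℝ} {q c : ℝ → ℝ} (hαβ : α ≤ β)
    (hq : IntervalIntegrable q volume α β) (hc : ContinuousOn c (Icc α β)) (x s : ℝ) :
    ∃ w w', LinearSol q c α β w w' ∧ w α = x ∧ w' α = s := by
  obtain ⟨w, w', S, hw, hw'⟩ := exists_semilinearSol hαβ (q := fun t => q t * c t)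
    (G := fun x => x) (L := 1) (hq.mul_continuousOn (by rwa [uIcc_of_le hαβ]))
    (fun x y => by rw [one_mul]) x s
  exact ⟨w, w', S.congr_ae (Eventually.of_forall fun t _ => by ring), hw, hw'⟩

/-- The weight `H` on a positivity interval `[σ, τ]`: nonnegative, symmetric about the midpoint,
non-decreasing on the left half, and at least `η` within distance `r` of the midpoint. -/
structure BumpWeight (H : ℝ → ℝ) (σ τ r η : ℝ) : Prop where
  lt : σ < τ
  intervalIntegrable : IntervalIntegrable H volume σ τ
  nonneg : ∀ t, 0 ≤ H t
  symm : ∀ t, H (σ + τ - t) = H t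
  monotoneOn : MonotoneOn H (Icc σ ((σ + τ) / 2))
  radius_pos : 0 < r
  radius_le : r ≤ (τ - σ) / 4
  height_pos : 0 < η
  height_le : ∀ t ∈ Icc ((σ + τ) / 2 - r) ((σ + τ) / 2 + r), η ≤ H t

namespace BumpWeight

variable {H G u v : ℝ → ℝ} {σ τ r η L M : ℝ}

theorem antitoneOn (hH : BumpWeight H σ τ r η) : AntitoneOn H (Icc ((σ + τ) / 2) τ) := by
  intro x hx y hy hxy
  rw [← hH.symm x, ← hH.symm y]
  exact hH.monotoneOn ⟨by linarith [hy.2], by linarith [hy.1]⟩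
    ⟨by linarith [hx.2], by linarith [hx.1]⟩ (by linarith)

theorem midpoint_mem (hH : BumpWeight H σ τ r η) : (σ + τ) / 2 ∈ Ioo σ τ :=
  ⟨by linarith [hH.lt], by linarith [hH.lt]⟩

theorem ae_forcing_nonpos (hH : BumpWeight H σ τ r η) (hG0 : ∀ x, 0 ≤ G x) (u : ℝ → ℝ) :
    ∀ᵐ t, t ∈ Icc σ τ → -(H t * G (u t)) ≤ 0 :=
  Eventually.of_forall fun t _ => neg_nonpos.2 (mul_nonneg (hH.nonneg t) (hG0 (u t)))

theorem reflect (hH : BumpWeight H σ τ r η) (S : SemilinearSol H G σ τ u v) :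
    SemilinearSol H G σ τ (fun t => u (σ + τ - t)) (fun t => -v (σ + τ - t)) := by
  have h := S.comp_const_sub (σ + τ)
  rw [add_sub_cancel_right, add_sub_cancel_left] at h
  simpa only [hH.symm] using h

theorem nonneg_of_endpoints_nonneg (hH : BumpWeight H σ τ r η) (hG0 : ∀ x, 0 ≤ G x)
    (S : SemilinearSol H G σ τ u v) (hσ : 0 ≤ u σ) (hτ : 0 ≤ u τ) : ∀ t ∈ Icc σ τ, 0 ≤ u t :=
  fun _ ht => (le_min hσ hτ).trans (S.min_endpoints_le (hH.ae_forcing_nonpos hG0 u) ht)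

theorem velocity_sub_velocity_mul_length_le (hH : BumpWeight H σ τ r η) (hG0 : ∀ x, 0 ≤ G x)
    (S : SemilinearSol H G σ τ u v) (hu : ∀ t ∈ Icc σ τ, 0 ≤ u t ∧ u t ≤ M) :
    (v ((σ + τ) / 2 - r) - v ((σ + τ) / 2 + r)) * (τ - σ) ≤ 8 * M := by
  have hr := hH.radius_pos
  have hr4 := hH.radius_le
  have hf := hH.ae_forcing_nonpos hG0 u
  have hmem₁ : (σ + τ) / 2 - r ∈ Icc σ τ := ⟨by linarith, by linarith⟩
  have hmem₂ : (σ + τ) / 2 + r ∈ Icc σ τ := ⟨by linarith, by linarith⟩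
  have htan₁ := S.le_add_mul_sub_of_nonpos hf hmem₁ S.left_mem
  have htan₂ := S.le_add_mul_sub_of_nonpos hf hmem₂ S.right_mem
  have hM₁ := (hu _ hmem₁).2
  have hM₂ := (hu _ hmem₂).2
  have hσ := (hu σ S.left_mem).1
  have hτ := (hu τ S.right_mem).1
  have hM : 0 ≤ M := (hu _ hmem₁).1.trans hM₁
  have hℓ : 0 ≤ τ - σ := sub_nonneg.2 hH.lt.le
  have hleft : v ((σ + τ) / 2 - r) * (τ - σ) ≤ 4 * M := by
    rcases le_total (v ((σ + τ) / 2 - r)) 0 with hv | hv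
    · linarith [mul_nonpos_of_nonpos_of_nonneg hv hℓ]
    · nlinarith
  have hright : -v ((σ + τ) / 2 + r) * (τ - σ) ≤ 4 * M := by
    rcases le_total (-v ((σ + τ) / 2 + r)) 0 with hv | hv
    · linarith [mul_nonpos_of_nonpos_of_nonneg hv hℓ]
    · nlinarith
  linarith

/-- If the maximum `N` of `u` exceeded `4 s₀`, then `u ≥ N / 4 ≥ s₀` near the midpoint by
concavity, and the velocity would drop there by more than concavity allows. -/
theorem le_four_mul_of_superlinear (hH : BumpWeight H σ τ r η) {K s₀ : ℝ}
    (hK : 16 < K * (r * η * (τ - σ))) (hs₀ : 0 < s₀) (hG0 : ∀ x, 0 ≤ G x)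
    (hGK : ∀ x ≥ s₀, K * x ≤ G x) (S : SemilinearSol H G σ τ u v) (hσ : 0 ≤ u σ)
    (hτ : 0 ≤ u τ) : ∀ t ∈ Icc σ τ, 0 ≤ u t ∧ u t ≤ 4 * s₀ := by
  have hℓ : 0 < τ - σ := sub_pos.2 hH.lt
  have hr := hH.radius_pos
  have hr4 := hH.radius_le
  have hη := hH.height_pos
  have hK0 : 0 < K := pos_of_mul_pos_left ((by norm_num : (0 : ℝ) < 16).trans hK) (by positivity)
  have hu := hH.nonneg_of_endpoints_nonneg hG0 S hσ hτ
  obtain ⟨x, hx, hmax⟩ := isCompact_Icc.exists_isMaxOn ⟨σ, S.left_mem⟩ S.continuousOn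
  refine fun t ht => ⟨hu t ht, (hmax ht).trans ?_⟩
  by_contra! hN
  have hlow : ∀ t ∈ Icc ((σ + τ) / 2 - r) ((σ + τ) / 2 + r), u x / 4 ≤ u t := fun t ht => by
    have hmin : (τ - σ) / 4 ≤ min (t - σ) (τ - t) :=
      le_min (by linarith [ht.1]) (by linarith [ht.2])
    have := S.mul_min_le_mul_length (hH.ae_forcing_nonpos hG0 u) hu hx
      (t := t) ⟨by linarith [ht.1], by linarith [ht.2]⟩
    nlinarith [mul_le_mul_of_nonneg_left hmin (hu x hx)]
  have hdrop : 2 * r * (η * (K * (u x / 4))) ≤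
      v ((σ + τ) / 2 - r) - v ((σ + τ) / 2 + r) := by
    have S' := S.mono (x := (σ + τ) / 2 - r) (y := (σ + τ) / 2 + r) (by linarith) (by linarith)
      (by linarith)
    have hint := intervalIntegral.integral_mono_on S'.le S'.intervalIntegrable
      (intervalIntegrable_const (c := -(η * (K * (u x / 4))))) fun t ht => by
        have hG : K * (u x / 4) ≤ G (u t) :=
          (mul_le_mul_of_nonneg_left (hlow t ht) hK0.le).trans
            (hGK (u t) (by linarith [hlow t ht]))
        have hux := hu x hx
        exact neg_le_neg (mul_le_mul (hH.height_le t ht) hG (by positivity) (hH.nonneg t))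
    rw [intervalIntegral.integral_const, smul_eq_mul] at hint
    linarith [S'.velocity_eq_add_integral _ S'.right_mem]
  have hbound := hH.velocity_sub_velocity_mul_length_le hG0 S fun t ht => ⟨hu t ht, hmax ht⟩
  have := mul_le_mul_of_nonneg_right hdrop hℓ.le
  nlinarith [mul_lt_mul_of_pos_right hK (show 0 < u x by linarith)]

theorem abs_velocity_le (hH : BumpWeight H σ τ r η) (hG : SuperlinearLipschitz G L)
    (S : SemilinearSol H G σ τ u v) (hu : ∀ t ∈ Icc σ τ, 0 ≤ u t ∧ u t ≤ M) :
    ∀ t ∈ Icc σ τ, |v t| ≤ M / (τ - σ) + (∫ s in σ..τ, H s) * (L * M) := by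
  have hℓ : 0 < τ - σ := sub_pos.2 hH.lt
  have hf := hH.ae_forcing_nonpos hG.nonneg u
  have hright : v τ ≤ M / (τ - σ) := by
    rw [le_div_iff₀ hℓ]
    linarith [S.le_add_mul_sub_of_nonpos hf S.right_mem S.left_mem, hu σ S.left_mem,
      hu τ S.right_mem]
  have hleft : -v σ ≤ M / (τ - σ) := by
    rw [le_div_iff₀ hℓ]
    linarith [S.le_add_mul_sub_of_nonpos hf S.left_mem S.right_mem, hu σ S.left_mem,
      hu τ S.right_mem]
  have hint := intervalIntegral.integral_mono_on S.le
    (hH.intervalIntegrable.const_mul (-(L * M))) S.intervalIntegrable fun t ht => by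
      have hGM : G (u t) ≤ L * M := (hG.le_mul_of_nonneg (hu t ht).1).trans
        (mul_le_mul_of_nonneg_left (hu t ht).2 hG.constant_nonneg)
      linarith [mul_le_mul_of_nonneg_left hGM (hH.nonneg t)]
  rw [intervalIntegral.integral_const_mul] at hint
  have hv := S.velocity_eq_add S.left_mem S.right_mem
  have hanti := S.antitoneOn_velocity hf
  intro t ht
  rw [abs_le]
  constructor <;>
    linarith [hanti S.left_mem ht ht.1, hanti ht S.right_mem ht.2]

theorem integral_mul_pos (hH : BumpWeight H σ τ r η) {x y : ℝ} (hσx : σ ≤ x)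
    (hx : x ≤ (σ + τ) / 2) (hy : (σ + τ) / 2 < y) (hyτ : y ≤ τ) {φ : ℝ → ℝ}
    (hφ : ContinuousOn φ (Icc σ τ)) (hφ0 : ∀ t ∈ Icc x y, 0 ≤ φ t)
    (hφpos : ∀ t ∈ Ioo ((σ + τ) / 2) y, 0 < φ t) : 0 < ∫ s in x..y, H s * φ s := by
  have hr := hH.radius_pos
  have hmid := hH.midpoint_mem
  obtain ⟨e, hζe, he⟩ : ∃ e, (σ + τ) / 2 < e ∧ e ≤ min ((σ + τ) / 2 + r) y :=
    ⟨_, lt_min (by linarith) hy, le_rfl⟩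
  have hey : e ≤ y := he.trans (min_le_right _ _)
  have hHφ : IntervalIntegrable (fun s => H s * φ s) volume σ τ :=
    hH.intervalIntegrable.mul_continuousOn (by rwa [uIcc_of_le hH.lt.le])
  have hφη : IntervalIntegrable (fun s => η * φ s) volume ((σ + τ) / 2) e :=
    (continuousOn_const.mul (hφ.mono (Icc_subset_Icc hmid.1.le
      (hey.trans hyτ)))).intervalIntegrable_of_Icc hζe.le
  have hsub : ∀ {s t}, σ ≤ s → s ≤ t → t ≤ τ →
      IntervalIntegrable (fun s => H s * φ s) volume s t := fun hs hst ht =>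
    intervalIntegrable_of_mem_Icc hHφ ⟨hs, hst.trans ht⟩ ⟨hs.trans hst, ht⟩
  calc 0 < ∫ s in ((σ + τ) / 2)..e, η * φ s :=
        intervalIntegral.intervalIntegral_pos_of_pos_on hφη
          (fun t ht => mul_pos hH.height_pos (hφpos t ⟨ht.1, ht.2.trans_le hey⟩)) hζe
    _ ≤ ∫ s in ((σ + τ) / 2)..e, H s * φ s := by
        refine intervalIntegral.integral_mono_on hζe.le hφη
          (hsub hmid.1.le hζe.le (hey.trans hyτ)) fun t ht => ?_
        exact mul_le_mul_of_nonneg_right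
          (hH.height_le t ⟨by linarith [ht.1], ht.2.trans (he.trans (min_le_left _ _))⟩)
          (hφ0 t ⟨hx.trans ht.1, ht.2.trans hey⟩)
    _ ≤ ∫ s in x..y, H s * φ s := by
        refine intervalIntegral.integral_mono_interval hx hζe.le hey ?_
          (hsub hσx (hx.trans hy.le) hyτ)
        filter_upwards [ae_restrict_mem measurableSet_Ioc] with t ht
        exact mul_nonneg (hH.nonneg t) (hφ0 t (Ioc_subset_Icc_self ht))

theorem velocity_midpoint_nonpos (hH : BumpWeight H σ τ r η) (hG : SuperlinearLipschitz G L)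
    (S : SemilinearSol H G σ τ u v) (hσ : u σ = 0) (hτ : u τ = 0) : v ((σ + τ) / 2) ≤ 0 := by
  by_contra! hv
  have hmid := hH.midpoint_mem
  have hreflect : σ + τ - (σ + τ) / 2 = (σ + τ) / 2 := by ring
  obtain ⟨U, hU⟩ : ∃ U : ℝ → ℝ, ∀ t, U t = u (σ + τ - t) := ⟨_, fun _ => rfl⟩
  obtain ⟨V, hV⟩ : ∃ V : ℝ → ℝ, ∀ t, V t = -v (σ + τ - t) := ⟨_, fun _ => rfl⟩
  have S₁ := S.mono hmid.1.le hmid.2.le le_rfl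
  have S₂ : SemilinearSol H G ((σ + τ) / 2) τ U V := by
    have := (hH.reflect S).mono hmid.1.le hmid.2.le le_rfl
    rwa [← funext hU, ← funext hV] at this
  have hUζ : U ((σ + τ) / 2) = u ((σ + τ) / 2) := by rw [hU, hreflect]
  have hVζ : V ((σ + τ) / 2) = -v ((σ + τ) / 2) := by rw [hV, hreflect]
  have D := S₁.linearCombination S₂ 1 (-1)
  obtain ⟨z, hz, hDz, hDpos⟩ := exists_first_zero hmid.2 D.continuousOn
    (eventually_pos_of_hasDerivWithinAt_pos hmid.2 (D.hasDerivWithinAt D.left_mem)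
      (by linarith) (by linarith))
    ⟨τ, right_mem_Ioc.2 hmid.2, by rw [hU, add_sub_cancel_right, hσ, hτ]; simp⟩
  have hvz : v z ≤ V z := by
    have := nonpos_of_hasDerivWithinAt_of_nonneg_left hz.1
      ((D.mono le_rfl hz.1.le hz.2).hasDerivWithinAt (right_mem_Icc.2 hz.1.le)) hDz
      fun t ht => (hDpos t ht).le
    linarith
  have hne : v z ≠ V z := fun heq => by
    have := (S₁.eq_of_eq S₂ (intervalIntegrable_of_mem_Icc hH.intervalIntegrable
      (Ioo_subset_Icc_self hmid) S.right_mem) hG.abs_sub_le (Ioc_subset_Icc_self hz)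
      (by linarith) heq S₁.left_mem).2
    linarith
  have hVz : V z < 0 := by
    have := S.antitoneOn_velocity (hH.ae_forcing_nonpos hG.nonneg u) (a := σ + τ - z)
      (b := (σ + τ) / 2) ⟨by linarith [hz.2], by linarith [hz.1, hmid.2]⟩
      (Ioo_subset_Icc_self hmid) (by linarith [hz.1])
    rw [hV]
    linarith
  have henergy := (S₁.mono le_rfl hz.1.le hz.2).velocity_sq_sub_le_of_antitoneOn
    (S₂.mono le_rfl hz.1.le hz.2) (hH.antitoneOn.mono (Icc_subset_Icc_right hz.2))
    hG.continuous hG.nonneg (fun t ht => ?_) hUζ.symm (by linarith)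
  · rw [hVζ] at henergy
    nlinarith [lt_of_le_of_ne hvz hne]
  · rcases eq_or_lt_of_le ht.1 with rfl | hζt
    · exact hUζ.le
    rcases eq_or_lt_of_le ht.2 with rfl | htz
    · linarith
    · linarith [hDpos t ⟨hζt, htz⟩]

theorem velocity_midpoint_eq_zero (hH : BumpWeight H σ τ r η) (hG : SuperlinearLipschitz G L)
    (S : SemilinearSol H G σ τ u v) (hσ : u σ = 0) (hτ : u τ = 0) : v ((σ + τ) / 2) = 0 := by
  refine le_antisymm (hH.velocity_midpoint_nonpos hG S hσ hτ) ?_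
  have := hH.velocity_midpoint_nonpos hG (hH.reflect S) (by simpa using hτ) (by simpa using hσ)
  rw [show σ + τ - (σ + τ) / 2 = (σ + τ) / 2 by ring] at this
  linarith

theorem pos_of_dirichlet (hH : BumpWeight H σ τ r η) (hG : SuperlinearLipschitz G L)
    (S : SemilinearSol H G σ τ u v) (hσ : u σ = 0) (hτ : u τ = 0) (hv : 0 < v σ) :
    ∀ t ∈ Ioo σ τ, 0 < u t :=
  S.pos_of_nonneg hH.intervalIntegrable hG
    (hH.nonneg_of_endpoints_nonneg hG.nonneg S hσ.ge hτ.ge) hv.ne'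

theorem velocity_neg_of_dirichlet (hH : BumpWeight H σ τ r η) (hG : SuperlinearLipschitz G L)
    (S : SemilinearSol H G σ τ u v) (hσ : u σ = 0) (hτ : u τ = 0) (hv : 0 < v σ) :
    ∀ z ∈ Ioc ((σ + τ) / 2) τ, v z < 0 := by
  intro z hz
  have hmid := hH.midpoint_mem
  have hint := hH.integral_mul_pos hmid.1.le le_rfl hz.1 hz.2
    (hG.continuous.comp_continuousOn S.continuousOn) (fun t _ => hG.nonneg _)
    fun t ht => hG.pos _ (hH.pos_of_dirichlet hG S hσ hτ hv t
      ⟨hmid.1.trans ht.1, ht.2.trans_le hz.2⟩)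
  have := S.velocity_eq_add (Ioo_subset_Icc_self hmid) ⟨hmid.1.le.trans hz.1.le, hz.2⟩
  rw [intervalIntegral.integral_neg, hH.velocity_midpoint_eq_zero hG S hσ hτ] at this
  simp only [Function.comp_apply] at hint
  linarith

end BumpWeight

section Linearization

variable {α β : ℝ} {q G u v w w' : ℝ → ℝ} {L : ℝ}

theorem SuperlinearLipschitz.continuousOn_deriv_comp (hG : SuperlinearLipschitz G L)
    (S : SemilinearSol q G α β u v) : ContinuousOn (fun t => deriv G (u t)) (Icc α β) :=
  hG.continuous_deriv.comp_continuousOn S.continuousOn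

theorem SemilinearSol.integral_mul_sub_eq (S : SemilinearSol q G α β u v)
    (W : LinearSol q (fun t => deriv G (u t)) α β w w') :
    ∫ t in α..β, q t * (w t * (u t * deriv G (u t) - G (u t))) =
      (w β * v β - u β * w' β) - (w α * v α - u α * w' α) := by
  have hcont : ∀ {φ : ℝ → ℝ}, ContinuousOn φ (Icc α β) → ContinuousOn φ (uIcc α β) :=
    fun h => by rwa [uIcc_of_le S.le]
  have huw := integral_deriv_mul_add_mul_deriv S.le S.intervalIntegrable_velocity
    W.intervalIntegrable S.eq_add_integral W.velocity_eq_add_integral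
  have hwu := integral_deriv_mul_add_mul_deriv S.le W.intervalIntegrable_velocity
    S.intervalIntegrable W.eq_add_integral S.velocity_eq_add_integral
  have hsub := intervalIntegral.integral_sub
    ((W.intervalIntegrable_velocity.mul_continuousOn (hcont S.continuousOn_velocity)).add
      (S.intervalIntegrable.continuousOn_mul (hcont W.continuousOn)))
    ((S.intervalIntegrable_velocity.mul_continuousOn (hcont W.continuousOn_velocity)).add
      (W.intervalIntegrable.continuousOn_mul (hcont S.continuousOn)))
  rw [hwu, huw] at hsub
  rw [show (w β * v β - u β * w' β) - (w α * v α - u α * w' α) =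
    w β * v β - w α * v α - (u β * w' β - u α * w' α) by ring, ← hsub]
  congr 1 with t
  ring

theorem SemilinearSol.integral_mul_deriv_eq (S : SemilinearSol q G α β u v)
    (W : LinearSol q (fun t => deriv G (u t)) α β w w') :
    ∫ t in α..β, q t * (deriv G (u t) * v t * w t + G (u t) * w' t) =
      v α * w' α - v β * w' β := by
  have h := integral_deriv_mul_add_mul_deriv S.le S.intervalIntegrable W.intervalIntegrable
    S.velocity_eq_add_integral W.velocity_eq_add_integral
  rw [← neg_sub, ← h, ← intervalIntegral.integral_neg]
  congr 1 with t
  ring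

theorem SuperlinearLipschitz.hasDerivWithinAt_comp_mul (hG : SuperlinearLipschitz G L)
    (S : SemilinearSol q G α β u v) (W : LinearSol q (fun t => deriv G (u t)) α β w w') :
    ∀ t ∈ Icc α β, HasDerivWithinAt (fun t => G (u t) * w t)
      (deriv G (u t) * v t * w t + G (u t) * w' t) (Icc α β) t := fun t ht =>
  ((hG.differentiable (u t)).hasDerivAt.comp_hasDerivWithinAt t (S.hasDerivWithinAt ht)).mul
    (W.hasDerivWithinAt ht)

theorem SuperlinearLipschitz.continuousOn_deriv_comp_mul (hG : SuperlinearLipschitz G L)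
    (S : SemilinearSol q G α β u v) (W : LinearSol q (fun t => deriv G (u t)) α β w w') :
    ContinuousOn (fun t => deriv G (u t) * v t * w t + G (u t) * w' t) (Icc α β) :=
  (((hG.continuousOn_deriv_comp S).mul S.continuousOn_velocity).mul W.continuousOn).add
    ((hG.continuous.comp_continuousOn S.continuousOn).mul W.continuousOn_velocity)

theorem SemilinearSol.velocity_mul_le_of_monotoneOn (hG : SuperlinearLipschitz G L)
    (S : SemilinearSol q G α β u v) (W : LinearSol q (fun t => deriv G (u t)) α β w w')
    (hq : MonotoneOn q (Icc α β)) (hw : ∀ t ∈ Icc α β, 0 ≤ w t) (hα : w α = 0) (hβ : w β = 0) :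
    v α * w' α ≤ v β * w' β := by
  have := integral_mul_deriv_nonpos_of_monotoneOn S.le hq (hG.hasDerivWithinAt_comp_mul S W)
    (hG.continuousOn_deriv_comp_mul S W) (fun t ht => mul_nonneg (hG.nonneg _) (hw t ht))
    (by rw [hα, mul_zero]) (by rw [hβ, mul_zero])
  linarith [S.integral_mul_deriv_eq W]

theorem SemilinearSol.velocity_mul_le_of_antitoneOn (hG : SuperlinearLipschitz G L)
    (S : SemilinearSol q G α β u v) (W : LinearSol q (fun t => deriv G (u t)) α β w w')
    (hq : AntitoneOn q (Icc α β)) (hw : ∀ t ∈ Icc α β, 0 ≤ w t) (hα : w α = 0) (hβ : w β = 0) :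
    v β * w' β ≤ v α * w' α := by
  have := integral_mul_deriv_nonneg_of_antitoneOn S.le hq (hG.hasDerivWithinAt_comp_mul S W)
    (hG.continuousOn_deriv_comp_mul S W) (fun t ht => mul_nonneg (hG.nonneg _) (hw t ht))
    (by rw [hα, mul_zero]) (by rw [hβ, mul_zero])
  linarith [S.integral_mul_deriv_eq W]

theorem nonneg_on_Icc_of_pos_on_Ioo {w : ℝ → ℝ} {x y : ℝ} (hx : w x = 0) (hy : w y = 0)
    (h : ∀ t ∈ Ioo x y, 0 < w t) : ∀ t ∈ Icc x y, 0 ≤ w t := by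
  intro t ht
  rcases eq_or_lt_of_le ht.1 with rfl | hxt
  · exact hx.ge
  rcases eq_or_lt_of_le ht.2 with rfl | hty
  · exact hy.ge
  · exact (h t ⟨hxt, hty⟩).le

end Linearization

namespace BumpWeight

variable {H G u v w w' : ℝ → ℝ} {σ τ r η L : ℝ}

/-- By superlinearity, a solution `w > 0` of the linearized problem would violate the Lagrange
identity between `u` and `w`. -/
theorem exists_linearized_nonpos (hH : BumpWeight H σ τ r η) (hG : SuperlinearLipschitz G L)
    (S : SemilinearSol H G σ τ u v) (hσ : u σ = 0) (hτ : u τ = 0) (hv : 0 < v σ)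
    (W : LinearSol H (fun t => deriv G (u t)) σ τ w w') (hwσ : w σ = 0) :
    ∃ t ∈ Ioo σ τ, w t ≤ 0 := by
  by_contra! hw
  have hmid := hH.midpoint_mem
  have hpos := hH.pos_of_dirichlet hG S hσ hτ hv
  have hwτ : 0 ≤ w τ := by
    have := right_nhdsWithin_Ioo_neBot hH.lt
    refine ge_of_tendsto ((W.continuousOn τ W.right_mem).mono Ioo_subset_Icc_self) ?_
    filter_upwards [self_mem_nhdsWithin] with t ht using (hw t ht).le
  have hgap : ∀ t ∈ Ioo σ τ, 0 < w t * (u t * deriv G (u t) - G (u t)) := fun t ht =>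
    mul_pos (hw t ht) (sub_pos.2 (hG.lt_mul_deriv _ (hpos t ht)))
  have hint := hH.integral_mul_pos le_rfl hmid.1.le hmid.2 le_rfl
    (W.continuousOn.mul ((S.continuousOn.mul (hG.continuousOn_deriv_comp S)).sub
      (hG.continuous.comp_continuousOn S.continuousOn)))
    (nonneg_on_Icc_of_pos_on_Ioo (by simp [hwσ])
      (by simp [hτ, hG.eq_zero_of_nonpos 0 le_rfl]) hgap)
    fun t ht => hgap t ⟨hmid.1.trans ht.1, ht.2⟩
  have hlagrange := S.integral_mul_sub_eq W
  rw [hσ, hτ, hwσ] at hlagrange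
  have := mul_nonpos_of_nonneg_of_nonpos hwτ
    (hH.velocity_neg_of_dirichlet hG S hσ hτ hv τ ⟨hmid.2, le_rfl⟩).le
  simp only [Pi.mul_apply, Pi.sub_apply, Function.comp_apply] at hint
  linarith

theorem velocity_ne_zero_of_eq_zero (hH : BumpWeight H σ τ r η) (hG : SuperlinearLipschitz G L)
    (W : LinearSol H (fun t => deriv G (u t)) σ τ w w') (hw'σ : w' σ ≠ 0) {z : ℝ}
    (hz : z ∈ Icc σ τ) (hwz : w z = 0) : w' z ≠ 0 := fun hw'z =>
  hw'σ (W.eq_zero_of_eq_zero hH.intervalIntegrable (fun t _ => hG.abs_deriv_le (u t)) hz hwz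
    hw'z W.left_mem).2

theorem exists_linearized_first_zero (hH : BumpWeight H σ τ r η)
    (hG : SuperlinearLipschitz G L) (S : SemilinearSol H G σ τ u v) (hσ : u σ = 0)
    (hτ : u τ = 0) (hv : 0 < v σ) (W : LinearSol H (fun t => deriv G (u t)) σ τ w w')
    (hwσ : w σ = 0) (hw'σ : 0 < w' σ) :
    ∃ z ∈ Ioo ((σ + τ) / 2) τ, w z = 0 ∧ w' z < 0 := by
  obtain ⟨t₁, ht₁, hwt₁⟩ := hH.exists_linearized_nonpos hG S hσ hτ hv W hwσ
  obtain ⟨z, hz, hwz, hwpos⟩ := exists_first_zero hH.lt W.continuousOn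
    (eventually_pos_of_hasDerivWithinAt_pos hH.lt (W.hasDerivWithinAt W.left_mem) hwσ hw'σ)
    ⟨t₁, Ioo_subset_Ioc_self ht₁, hwt₁⟩
  have hzmem : z ∈ Icc σ τ := Ioc_subset_Icc_self hz
  have hzτ : z < τ := lt_of_not_ge fun hτz =>
    (hwpos t₁ ⟨ht₁.1, ht₁.2.trans_le hτz⟩).not_ge hwt₁
  have Wz := W.mono le_rfl hz.1.le hz.2
  have hw'z : w' z < 0 := lt_of_le_of_ne
    (nonpos_of_hasDerivWithinAt_of_nonneg_left hz.1 (Wz.hasDerivWithinAt Wz.right_mem) hwz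
      fun t ht => (hwpos t ht).le)
    (hH.velocity_ne_zero_of_eq_zero hG W hw'σ.ne' hzmem hwz)
  refine ⟨z, ⟨lt_of_not_ge fun hzζ => ?_, hzτ⟩, hwz, hw'z⟩
  have hle := (S.mono le_rfl hz.1.le hz.2).velocity_mul_le_of_monotoneOn hG Wz
    (hH.monotoneOn.mono (Icc_subset_Icc_right hzζ))
    (nonneg_on_Icc_of_pos_on_Ioo hwσ hwz hwpos) hwσ hwz
  have hvz := S.antitoneOn_velocity (hH.ae_forcing_nonpos hG.nonneg u) hzmem
    (Ioo_subset_Icc_self hH.midpoint_mem) hzζ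
  rw [hH.velocity_midpoint_eq_zero hG S hσ hτ] at hvz
  nlinarith [mul_pos hv hw'σ]

theorem linearized_right_neg (hH : BumpWeight H σ τ r η) (hG : SuperlinearLipschitz G L)
    (S : SemilinearSol H G σ τ u v) (hσ : u σ = 0) (hτ : u τ = 0) (hv : 0 < v σ)
    (W : LinearSol H (fun t => deriv G (u t)) σ τ w w') (hwσ : w σ = 0) (hw'σ : 0 < w' σ) :
    w τ < 0 := by
  obtain ⟨z, hz, hwz, hw'z⟩ := hH.exists_linearized_first_zero hG S hσ hτ hv W hwσ hw'σ
  have hσz : σ ≤ z := (hH.midpoint_mem.1.trans hz.1).le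
  by_contra! hwτ
  have N := (W.mono hσz hz.2.le le_rfl).const_mul (-1)
  obtain ⟨y, hy, hwy, hwneg⟩ := exists_first_zero hz.2 N.continuousOn
    (eventually_pos_of_hasDerivWithinAt_pos hz.2 (N.hasDerivWithinAt N.left_mem)
      (by rw [hwz, mul_zero]) (by linarith))
    ⟨τ, right_mem_Ioc.2 hz.2, by linarith⟩
  have Ny := N.mono le_rfl hy.1.le hy.2
  have hw'y := nonpos_of_hasDerivWithinAt_of_nonneg_left hy.1 (Ny.hasDerivWithinAt Ny.right_mem)
    hwy fun t ht => (hwneg t ht).le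
  have hle := (S.mono hσz hy.1.le hy.2).velocity_mul_le_of_antitoneOn hG Ny
    (hH.antitoneOn.mono (Icc_subset_Icc hz.1.le hy.2))
    (nonneg_on_Icc_of_pos_on_Ioo (by rw [hwz, mul_zero]) hwy hwneg) (by rw [hwz, mul_zero]) hwy
  have hvneg := hH.velocity_neg_of_dirichlet hG S hσ hτ hv
  have hvz := hvneg z ⟨hz.1, hz.2.le⟩
  have hvy := hvneg y ⟨hz.1.trans hy.1, hy.2⟩
  nlinarith

end BumpWeight

section Differences

variable {α β : ℝ} {q G u v u₂ v₂ c w w' : ℝ → ℝ} {L κ : ℝ}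

/-- `c` is a pointwise mean-value coefficient for the pair `u`, `u₂`: it interpolates the values
of `G'` between them, and keeps the superlinearity inequality `G u ≤ c u` of `c = G'(u)`. -/
structure IsMeanValueCoeff (G u u₂ c : ℝ → ℝ) : Prop where
  exists_eq_deriv : ∀ t, ∃ ξ ∈ uIcc (u t) (u₂ t), c t = deriv G ξ
  le_mul : ∀ t, 0 ≤ u t → 0 ≤ u₂ t → G (u t) ≤ c t * u t

theorem SuperlinearLipschitz.le_deriv_mul (hG : SuperlinearLipschitz G L) {x : ℝ} (hx : 0 ≤ x) :
    G x ≤ deriv G x * x := by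
  rcases hx.eq_or_lt with rfl | hx
  · rw [hG.eq_zero_of_nonpos 0 le_rfl, mul_zero]
  · linarith [hG.lt_mul_deriv x hx]

theorem SuperlinearLipschitz.isMeanValueCoeff_self (hG : SuperlinearLipschitz G L) (u : ℝ → ℝ) :
    IsMeanValueCoeff G u u fun t => deriv G (u t) where
  exists_eq_deriv t := ⟨u t, left_mem_uIcc, rfl⟩
  le_mul _ ht _ := hG.le_deriv_mul ht

theorem SuperlinearLipschitz.exists_slope (hG : SuperlinearLipschitz G L) (x y : ℝ) :
    ∃ k, (∃ ξ ∈ uIcc x y, k = deriv G ξ) ∧ G x - G y = k * (x - y) ∧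
      (0 ≤ x → 0 ≤ y → G x ≤ k * x) := by
  obtain ⟨ξ, hξ, hslope⟩ := hG.exists_sub_eq_deriv_mul x y
  have hG0 := hG.eq_zero_of_nonpos 0 le_rfl
  rcases lt_trichotomy x y with hxy | rfl | hxy
  · refine ⟨deriv G ξ, ⟨ξ, hξ, rfl⟩, hslope, fun hx _ => ?_⟩
    rcases hx.eq_or_lt with rfl | hx
    · rw [hG0, mul_zero]
    · have := hG.mul_le_mul_of_le hx hxy.le
      rw [show G y = G x + deriv G ξ * (y - x) by linarith] at this
      exact le_of_mul_le_mul_right (by linarith) (sub_pos.2 hxy)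
  · exact ⟨deriv G x, ⟨x, left_mem_uIcc, rfl⟩, by simp, fun hx _ => hG.le_deriv_mul hx⟩
  · refine ⟨deriv G ξ, ⟨ξ, hξ, rfl⟩, hslope, fun _ hy => ?_⟩
    rcases hy.eq_or_lt with rfl | hy
    · linarith
    · have := hG.mul_le_mul_of_le hy hxy.le
      rw [show G y = G x - deriv G ξ * (x - y) by linarith] at this
      exact le_of_mul_le_mul_right (by linarith) (sub_pos.2 hxy)

theorem SemilinearSol.exists_linearSol_sub (S : SemilinearSol q G α β u v)
    (S₂ : SemilinearSol q G α β u₂ v₂) (hG : SuperlinearLipschitz G L) :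
    ∃ c, IsMeanValueCoeff G u u₂ c ∧
      ∀ d, LinearSol q c α β (fun t => d * (u t - u₂ t)) fun t => d * (v t - v₂ t) := by
  choose c hc hslope hle using fun t => hG.exists_slope (u t) (u₂ t)
  refine ⟨c, ⟨hc, hle⟩, fun d => ?_⟩
  have hdist : ∀ x y, d * (x - y) = d * x + -d * y := fun x y => by ring
  simp only [hdist]
  exact (S.linearCombination S₂ d (-d)).congr_ae
    (Eventually.of_forall fun t _ => by linear_combination (-(d * q t)) * hslope t)

theorem IsMeanValueCoeff.abs_le (hc : IsMeanValueCoeff G u u₂ c)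
    (hG : SuperlinearLipschitz G L) (t : ℝ) : |c t| ≤ L := by
  obtain ⟨ξ, -, hξ⟩ := hc.exists_eq_deriv t
  exact hξ ▸ hG.abs_deriv_le ξ

theorem SemilinearSol.exists_forall_abs_sub_le (S : SemilinearSol q G α β u v)
    (hq : IntervalIntegrable q volume α β) (hG : ∀ x y, |G x - G y| ≤ L * |x - y|)
    (hκ : 0 < κ) :
    ∃ θ > 0, ∀ u₂ v₂, SemilinearSol q G α β u₂ v₂ → |u₂ α - u α| ≤ θ → |v₂ α - v α| ≤ θ →
      ∀ t ∈ Icc α β, |u₂ t - u t| + |v₂ t - v t| ≤ κ := by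
  set B := growthFactor (β - α) (L * ∫ s in α..β, |q s|)
  have hB : 0 < B := growthFactor_pos _ _
  refine ⟨κ / (2 * B), by positivity, fun u₂ v₂ S₂ hu hv t ht => ?_⟩
  calc |u₂ t - u t| + |v₂ t - v t| ≤ B * (|u₂ α - u α| + |v₂ α - v α|) :=
        S₂.abs_sub_add_abs_sub_le S hq hG le_rfl ht
    _ ≤ B * (κ / (2 * B) + κ / (2 * B)) := by gcongr
    _ = κ := by field_simp; ring

theorem LinearSol.exists_forall_abs_sub_le (S : LinearSol q c α β w w')
    (hq : IntervalIntegrable q volume α β) (hc : ∀ t ∈ Icc α β, |c t| ≤ L) (hκ : 0 < κ) :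
    ∃ θ > 0, ∃ ω > 0, ∀ c₂ w₂ w₂', LinearSol q c₂ α β w₂ w₂' → (∀ t ∈ Icc α β, |c₂ t| ≤ L) →
      (∀ t ∈ Icc α β, |c₂ t - c t| ≤ ω) → |w₂ α - w α| ≤ θ → |w₂' α - w' α| ≤ θ →
      ∀ t ∈ Icc α β, |w₂ t - w t| + |w₂' t - w' t| ≤ κ := by
  set X := ∫ s in α..β, |q s|
  have hX : 0 ≤ X := intervalIntegral.integral_nonneg S.le fun s _ => abs_nonneg _
  set B := growthFactor (β - α) (L * X)
  have hB : 0 < B := growthFactor_pos _ _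
  set Y := B * (|w α| + |w' α|)
  have : 0 ≤ Y := by positivity
  refine ⟨κ / (4 * B), by positivity, κ / (2 * B * (Y * X + 1)), by positivity,
    fun c₂ w₂ w₂' S₂ hc₂ hω hw hw' t ht => ?_⟩
  have hYX : κ / (2 * B * (Y * X + 1)) * (Y * X) ≤ κ / (2 * B) := by
    rw [div_mul_eq_mul_div, div_le_div_iff₀ (by positivity) (by positivity)]
    nlinarith [mul_pos hκ hB]
  calc |w₂ t - w t| + |w₂' t - w' t|
      ≤ B * (|w₂ α - w α| + |w₂' α - w' α| + κ / (2 * B * (Y * X + 1)) * Y * X) :=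
        S₂.abs_sub_add_abs_sub_le S hq hc₂ hc hω le_rfl ht
    _ ≤ B * (κ / (4 * B) + κ / (4 * B) + κ / (2 * B)) := by
        rw [mul_assoc (κ / _)]
        gcongr
    _ = κ := by field_simp; ring

end Differences

/-- Uniform transversality of the shooting map at the slope `s`: along solutions that start
`θ`-close to `(0, s)`, the normalized linearized solution ends below `-κ` with velocity at most
`C`, and the solution itself ends with velocity below `-κ`. -/
def IsTransversalSlope (H G : ℝ → ℝ) (σ τ s θ κ C : ℝ) : Prop :=
  ∀ u₁ v₁ u₂ v₂ c w w', SemilinearSol H G σ τ u₁ v₁ → SemilinearSol H G σ τ u₂ v₂ →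
    |u₁ σ| ≤ θ → |u₂ σ| ≤ θ → |v₁ σ - s| ≤ θ → |v₂ σ - s| ≤ θ → IsMeanValueCoeff G u₁ u₂ c →
    LinearSol H c σ τ w w' → w' σ = 1 → |w σ| ≤ θ → w τ ≤ -κ ∧ |w' τ| ≤ C ∧ v₁ τ ≤ -κ

theorem IsMeanValueCoeff.abs_sub_deriv_le {G u u₁ u₂ c : ℝ → ℝ} {t δ ω : ℝ}
    (hc : IsMeanValueCoeff G u₁ u₂ c) (hω : ∀ x, |x - u t| ≤ δ → |deriv G x - deriv G (u t)| ≤ ω)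
    (h₁ : |u₁ t - u t| ≤ δ) (h₂ : |u₂ t - u t| ≤ δ) : |c t - deriv G (u t)| ≤ ω := by
  obtain ⟨ξ, hξ, hcξ⟩ := hc.exists_eq_deriv t
  rw [hcξ]
  exact hω ξ ((convex_closedBall (u t) δ).ordConnected.uIcc_subset h₁ h₂ hξ)

namespace BumpWeight

variable {H G u v : ℝ → ℝ} {σ τ r η L M : ℝ}

theorem exists_isTransversalSlope (hH : BumpWeight H σ τ r η) (hG : SuperlinearLipschitz G L)
    (S : SemilinearSol H G σ τ u v) (hσ : u σ = 0) (hτ : u τ = 0) (hv : 0 < v σ) :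
    ∃ θ > 0, ∃ κ > 0, ∃ C > 0, IsTransversalSlope H G σ τ (v σ) θ κ C := by
  obtain ⟨W, W', SW, hWσ, hW'σ⟩ :=
    exists_linearSol S.le hH.intervalIntegrable (hG.continuousOn_deriv_comp S) 0 1
  have hWτ := hH.linearized_right_neg hG S hσ hτ hv SW hWσ (by rw [hW'σ]; exact one_pos)
  have hvτ := hH.velocity_neg_of_dirichlet hG S hσ hτ hv τ
    (right_mem_Ioc.2 (by linarith [hH.lt]))
  set κ := min (-W τ) (-v τ) / 2
  have hκW : κ ≤ -W τ / 2 := div_le_div_of_nonneg_right (min_le_left _ _) zero_le_two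
  have hκv : κ ≤ -v τ / 2 := div_le_div_of_nonneg_right (min_le_right _ _) zero_le_two
  have hκ : 0 < κ := half_pos (lt_min (neg_pos.2 hWτ) (neg_pos.2 hvτ))
  obtain ⟨θW, hθW, ω, hω, hcloseW⟩ := SW.exists_forall_abs_sub_le hH.intervalIntegrable
    (fun t _ => hG.abs_deriv_le (u t)) hκ
  obtain ⟨δ, hδ, huc⟩ := Metric.uniformContinuous_iff_le.1 hG.uniformContinuous_deriv ω hω
  obtain ⟨θS, hθS, hcloseS⟩ := S.exists_forall_abs_sub_le hH.intervalIntegrable hG.abs_sub_le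
    (lt_min hδ hκ)
  refine ⟨min θW θS, lt_min hθW hθS, κ, hκ, |W' τ| + κ, by positivity,
    fun u₁ v₁ u₂ v₂ c w w' S₁ S₂ hu₁ hu₂ hv₁ hv₂ hc Sw hw' hw => ?_⟩
  obtain ⟨-, hu₁⟩ := le_min_iff.1 hu₁
  obtain ⟨-, hu₂⟩ := le_min_iff.1 hu₂
  have hclose₁ := hcloseS u₁ v₁ S₁ (by rwa [hσ, sub_zero]) (le_min_iff.1 hv₁).2
  have hclose₂ := hcloseS u₂ v₂ S₂ (by rwa [hσ, sub_zero]) (le_min_iff.1 hv₂).2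
  have hδ_of : ∀ {a b : ℝ}, |a| + |b| ≤ min δ κ → |a| ≤ δ := fun h =>
    (le_add_of_nonneg_right (abs_nonneg _)).trans (h.trans (min_le_left _ _))
  have hclosew := hcloseW c w w' Sw (fun t _ => hc.abs_le hG t)
    (fun t ht => hc.abs_sub_deriv_le (fun x => huc (a := x) (b := u t)) (hδ_of (hclose₁ t ht))
      (hδ_of (hclose₂ t ht)))
    (by rw [hWσ, sub_zero]; exact (le_min_iff.1 hw).1)
    (by rw [hW'σ, hw', sub_self, abs_zero]; exact hθW.le) τ S.right_mem
  have hcloseτ := (hclose₁ τ S.right_mem).trans (min_le_right _ _)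
  refine ⟨?_, ?_, ?_⟩
  · linarith [le_abs_self (w τ - W τ), abs_nonneg (w' τ - W' τ)]
  · linarith [abs_sub_abs_le_abs_sub (w' τ) (W' τ), abs_nonneg (w τ - W τ)]
  · linarith [le_abs_self (v₁ τ - v τ), abs_nonneg (u₁ τ - u τ)]

end BumpWeight

section SmallCoefficient

variable {α β : ℝ} {q c w w' : ℝ → ℝ} {η Y X ℓ : ℝ}

theorem LinearSol.half_lt_velocity_of_nonneg (S : LinearSol q c α β w w') (hq0 : ∀ t, 0 ≤ q t)
    (hq : IntervalIntegrable q volume α β) (hc0 : ∀ t, 0 ≤ c t) (hc : ∀ t ∈ Icc α β, c t ≤ η)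
    (hw0 : 0 ≤ w α) (hwY : w α ≤ Y) (hw'α : w' α = 1) (hX : ∫ s in α..β, q s ≤ X)
    (hℓ : β - α ≤ ℓ) (hsmall : X * (η * (Y + ℓ)) < 1 / 2) (hw' : ∀ t ∈ Icc α β, 0 ≤ w' t) :
    0 ≤ w β ∧ w β ≤ Y + ℓ ∧ 1 / 2 < w' β := by
  have hη : 0 ≤ η := (hc0 α).trans (hc α S.left_mem)
  have hYℓ : 0 ≤ Y + ℓ := by linarith [S.le]
  have hw : ∀ t ∈ Icc α β, 0 ≤ w t := fun t ht => by
    linarith [S.add_mul_sub_le (m := 0) le_rfl ht.1 ht.2 fun s hs => hw' s ⟨hs.1, hs.2.trans ht.2⟩]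
  have hanti : AntitoneOn w' (Icc α β) :=
    CaraSolOn.antitoneOn_velocity S (Eventually.of_forall fun t ht =>
      neg_nonpos.2 (mul_nonneg (hq0 t) (mul_nonneg (hc0 t) (hw t ht))))
  have hwle : ∀ t ∈ Icc α β, w t ≤ Y + ℓ := fun t ht => by
    have := S.le_add_mul_sub (m := 1) le_rfl ht.1 ht.2 fun s hs =>
      (hanti S.left_mem ⟨hs.1, hs.2.trans ht.2⟩ hs.1).trans hw'α.le
    linarith [ht.2]
  have hint : ∫ s in α..β, -(η * (Y + ℓ)) * q s ≤ ∫ s in α..β, -(q s * (c s * w s)) :=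
    intervalIntegral.integral_mono_on S.le (hq.const_mul _) S.intervalIntegrable fun t ht => by
      linarith [mul_le_mul_of_nonneg_left
        (mul_le_mul (hc t ht) (hwle t ht) (hw t ht) hη) (hq0 t)]
  rw [intervalIntegral.integral_const_mul] at hint
  have hv := S.velocity_eq_add S.left_mem S.right_mem
  have hXη := mul_le_mul_of_nonneg_right hX (mul_nonneg hη hYℓ)
  exact ⟨hw β S.right_mem, hwle β S.right_mem, by linarith⟩

theorem LinearSol.half_le_velocity_of_small (S : LinearSol q c α β w w') (hq0 : ∀ t, 0 ≤ q t)
    (hq : IntervalIntegrable q volume α β) (hc0 : ∀ t, 0 ≤ c t) (hc : ∀ t ∈ Icc α β, c t ≤ η)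
    (hw0 : 0 ≤ w α) (hwY : w α ≤ Y) (hw'α : w' α = 1)
    (hsmall : (∫ s in α..β, q s) * (η * (Y + (β - α))) < 1 / 2) :
    0 ≤ w β ∧ w β ≤ Y + (β - α) ∧ 1 / 2 < w' β := by
  have hstep : ∀ z ∈ Icc α β, (∀ t ∈ Icc α z, 0 ≤ w' t) →
      0 ≤ w z ∧ w z ≤ Y + (β - α) ∧ 1 / 2 < w' z := fun z hz =>
    (S.mono le_rfl hz.1 hz.2).half_lt_velocity_of_nonneg hq0
      (intervalIntegrable_of_mem_Icc hq S.left_mem hz) hc0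
      (fun t ht => hc t ⟨ht.1, ht.2.trans hz.2⟩) hw0 hwY hw'α
      (monotoneOn_integral_right hq (fun t _ => hq0 t) hz S.right_mem hz.2)
      (sub_le_sub_right hz.2 α) hsmall
  exact hstep β S.right_mem fun t ht => (forall_pos_of_bootstrap S.continuousOn_velocity
    (by rw [hw'α]; exact one_pos) (fun z hz hw' => by linarith [(hstep z hz hw').2.2]) t ht).le

end SmallCoefficient

theorem exists_unique_sign_change {f : ℝ → ℝ} (hf : Continuous f)
    (hpos : ∀ᶠ s in 𝓝[>] 0, 0 < f s) (hneg : ∃ s > 0, f s ≤ 0)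
    (hcross : ∀ z > 0, f z = 0 → ∃ θ > 0, ∀ x, |x - z| ≤ θ → x ≠ z → (x - z) * f x < 0) :
    ∃ s > 0, f s = 0 ∧ (∀ x, 0 < x → x < s → 0 < f x) ∧ ∀ x > s, f x < 0 := by
  obtain ⟨y, hy, hfy⟩ := hneg
  obtain ⟨s, hs, hfs, hbelow⟩ :=
    exists_first_zero hy hf.continuousOn hpos ⟨y, right_mem_Ioc.2 hy, hfy⟩
  refine ⟨s, hs.1, hfs, fun x h0 hxs => hbelow x ⟨h0, hxs⟩, fun x hsx => ?_⟩
  by_contra! hfx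
  obtain ⟨θ, hθ, hright⟩ := hcross s hs.1 hfs
  have hafter : ∀ᶠ t in 𝓝[>] s, 0 < -f t := by
    filter_upwards [Ioo_mem_nhdsGT (lt_add_of_pos_right s hθ)] with t ht
    exact neg_pos.2 (neg_of_mul_neg_right
      (hright t (by rw [abs_of_pos] <;> linarith [ht.1, ht.2]) ht.1.ne') (sub_nonneg.2 ht.1.le))
  obtain ⟨z, hz, hfz, hneg⟩ := exists_first_zero (D := fun t => -f t) hsx hf.neg.continuousOn hafter
    ⟨x, right_mem_Ioc.2 hsx, neg_nonpos.2 hfx⟩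
  obtain ⟨θ', hθ', hleft⟩ := hcross z (hs.1.trans hz.1) (neg_eq_zero.1 hfz)
  obtain ⟨t, ht⟩ := exists_between (max_lt hz.1 (sub_lt_self z hθ'))
  have hst := (le_max_left _ _).trans_lt ht.1
  have hzt := (le_max_right _ _).trans_lt ht.1
  have := pos_of_mul_neg_right (hleft t (by rw [abs_of_neg] <;> linarith [ht.2]) ht.2.ne)
    (sub_nonpos.2 ht.2.le)
  linarith [hneg t ⟨hst, ht.2⟩]

theorem SemilinearSol.exists_exitMap {q G : ℝ → ℝ} {α β L : ℝ} (hαβ : α ≤ β)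
    (hq : IntervalIntegrable q volume α β) (hG : ∀ x y, |G x - G y| ≤ L * |x - y|) :
    ∃ f : ℝ → ℝ, Continuous f ∧
      (∀ s, ∃ u v, SemilinearSol q G α β u v ∧ u α = 0 ∧ v α = s ∧ u β = f s) ∧
      ∃ B > 0, ∀ u v, SemilinearSol q G α β u v → |u β - f (v α)| ≤ B * |u α| := by
  choose U V hU hU0 hV0 using exists_semilinearSol hαβ hq hG 0
  set B := growthFactor (β - α) (L * ∫ s in α..β, |q s|)
  have hdist : ∀ {u v} s, SemilinearSol q G α β u v →
      |u β - U s β| ≤ B * (|u α| + |v α - s|) := fun {u v} s S => by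
    have := S.abs_sub_add_abs_sub_le (hU s) hq hG le_rfl S.right_mem
    rw [hU0, hV0, sub_zero] at this
    exact (le_add_of_nonneg_right (abs_nonneg _)).trans this
  refine ⟨fun s => U s β, (LipschitzWith.of_dist_le' (K := B) fun s₁ s₂ => ?_).continuous,
    fun s => ⟨U s, V s, hU s, hU0 s, hV0 s, rfl⟩, B, growthFactor_pos _ _, fun u v S => ?_⟩
  · simpa only [Real.dist_eq, hU0, hV0, abs_zero, zero_add] using hdist s₂ (hU s₁)
  · simpa only [sub_self, abs_zero, add_zero] using hdist (v α) S

/-- `M` is an a priori bound for the solutions on `[σ, τ]` with nonnegative boundary values, and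
these solutions are nonnegative. -/
def IsAprioriBound (H G : ℝ → ℝ) (σ τ M : ℝ) : Prop :=
  ∀ u v, SemilinearSol H G σ τ u v → 0 ≤ u σ → 0 ≤ u τ → ∀ t ∈ Icc σ τ, 0 ≤ u t ∧ u t ≤ M

/-- `s` is the critical slope of the positivity interval `[σ, τ]`: it is the initial slope of
the one-bump solution with zero boundary values. Slopes bounded away from `0` and `s` (from
below) exit with `u τ` uniformly positive, slopes bounded away from `s` (from above) exit with
`u τ` uniformly negative, and the crossing at `s` is transversal. -/
structure IsCriticalSlope (H G : ℝ → ℝ) (σ τ s : ℝ) : Prop where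
  pos : 0 < s
  exit : ∀ θ > 0, ∀ P, ∃ κ > 0, ∃ ε > 0, ∀ u v, SemilinearSol H G σ τ u v → 0 ≤ u σ → u σ ≤ ε →
    (θ ≤ v σ → v σ ≤ s - θ → κ ≤ u τ) ∧ (s + θ ≤ v σ → v σ ≤ P → u τ ≤ -κ)
  transversal : ∃ θ > 0, ∃ κ > 0, ∃ C > 0, IsTransversalSlope H G σ τ s θ κ C

theorem IsTransversalSlope.sub_mul_neg {H G u v u₂ v₂ : ℝ → ℝ} {σ τ θ κ C L : ℝ}
    (h : IsTransversalSlope H G σ τ (v σ) θ κ C) (hθ : 0 ≤ θ) (hκ : 0 < κ)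
    (hG : SuperlinearLipschitz G L) (S : SemilinearSol H G σ τ u v) (hσ : u σ = 0)
    (S₂ : SemilinearSol H G σ τ u₂ v₂) (hσ₂ : u₂ σ = 0)
    (hclose : |v₂ σ - v σ| ≤ θ) (hne : v₂ σ ≠ v σ) : (v₂ σ - v σ) * (u₂ τ - u τ) < 0 := by
  obtain ⟨c, hc, hlin⟩ := S₂.exists_linearSol_sub S hG
  have hwτ := (h u₂ v₂ u v c _ _ S₂ S (by rwa [hσ₂, abs_zero]) (by rwa [hσ, abs_zero]) hclose
    (by rwa [sub_self, abs_zero]) hc (hlin (v₂ σ - v σ)⁻¹)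
    (inv_mul_cancel₀ (sub_ne_zero.2 hne)) (by simpa [hσ, hσ₂])).1
  have hsq : 0 < (v₂ σ - v σ) ^ 2 := sq_pos_of_ne_zero (sub_ne_zero.2 hne)
  calc (v₂ σ - v σ) * (u₂ τ - u τ)
      = (v₂ σ - v σ) ^ 2 * ((v₂ σ - v σ)⁻¹ * (u₂ τ - u τ)) := by
        field_simp [sub_ne_zero.2 hne]
    _ < 0 := mul_neg_of_pos_of_neg hsq (by linarith)

namespace BumpWeight

variable {H G u v : ℝ → ℝ} {σ τ r η L M : ℝ}

theorem exists_forall_small_slope_pos (hH : BumpWeight H σ τ r η)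
    (hG : SuperlinearLipschitz G L) :
    ∃ s₀ > 0, ∀ u v, SemilinearSol H G σ τ u v → u σ = 0 → 0 < v σ → v σ < s₀ → 0 < u τ := by
  have hℓ : 0 < τ - σ := sub_pos.2 hH.lt
  have hI : 0 ≤ ∫ t in σ..τ, H t := intervalIntegral.integral_nonneg hH.lt.le fun t _ => hH.nonneg t
  set η₀ := 1 / (2 * ((∫ t in σ..τ, H t) * (τ - σ) + 1))
  obtain ⟨δ, hδ, hsmall⟩ := hG.exists_forall_lt_deriv_le (η := η₀) (by positivity)
  refine ⟨δ / (τ - σ), by positivity, fun u v S hσ hv0 hv => ?_⟩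
  rw [lt_div_iff₀ hℓ] at hv
  have hZ : SemilinearSol H G σ τ (fun _ => 0) fun _ => 0 :=
    ⟨S.le, by simp [hG.eq_zero_of_nonpos], by simp, by simp [hG.eq_zero_of_nonpos]⟩
  obtain ⟨c, hc, hlin⟩ := S.exists_linearSol_sub hZ hG
  have huδ : ∀ t ∈ Icc σ τ, u t < δ := fun t ht => by
    have := S.le_add_mul_sub_of_nonpos (hH.ae_forcing_nonpos hG.nonneg u) S.left_mem ht
    nlinarith [ht.2]
  have hc0 : ∀ t, 0 ≤ c t := fun t => by
    obtain ⟨ξ, -, hξ⟩ := hc.exists_eq_deriv t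
    exact hξ ▸ hG.deriv_nonneg ξ
  have hcη : ∀ t ∈ Icc σ τ, c t ≤ η₀ := fun t ht => by
    obtain ⟨ξ, hξ, hcξ⟩ := hc.exists_eq_deriv t
    exact hcξ ▸ hsmall ξ ((mem_uIcc.1 hξ).elim (fun h => h.2.trans_lt hδ)
      fun h => h.2.trans_lt (huδ t ht))
  have hhalf := (hlin (v σ)⁻¹).half_le_velocity_of_small (Y := 0) hH.nonneg
    hH.intervalIntegrable hc0 hcη (by simp [hσ]) (by simp [hσ])
    (by simp [hv0.ne']) (by
      rw [zero_add, mul_left_comm, div_mul_eq_mul_div, one_mul, div_lt_div_iff₀ (by positivity)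
        two_pos]
      linarith)
  have hvτ : 0 < v τ := by
    have : 0 < (v σ)⁻¹ * v τ := by simpa using one_half_pos.trans hhalf.2.2
    exact pos_of_mul_pos_right this (inv_nonneg.2 hv0.le)
  have := S.le_add_mul_sub_of_nonpos (hH.ae_forcing_nonpos hG.nonneg u) S.right_mem S.left_mem
  rw [hσ] at this
  linarith [mul_pos hvτ hℓ]

theorem exists_exit_bounds {f : ℝ → ℝ} {s B : ℝ} (hf : Continuous f)
    (hbelow : ∀ x, 0 < x → x < s → 0 < f x) (habove : ∀ x > s, f x < 0) (hB : 0 < B)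
    (hdist : ∀ u v, SemilinearSol H G σ τ u v → |u τ - f (v σ)| ≤ B * |u σ|) {θ : ℝ}
    (hθ : 0 < θ) (P : ℝ) :
    ∃ κ > 0, ∃ ε > 0, ∀ u v, SemilinearSol H G σ τ u v → 0 ≤ u σ → u σ ≤ ε →
      (θ ≤ v σ → v σ ≤ s - θ → κ ≤ u τ) ∧ (s + θ ≤ v σ → v σ ≤ P → u τ ≤ -κ) := by
  obtain ⟨κ₁, hκ₁, hlow⟩ := (isCompact_Icc (a := θ) (b := s - θ)).exists_forall_le'
    hf.continuousOn fun x hx => hbelow x (hθ.trans_le hx.1) (by linarith [hx.2])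
  obtain ⟨κ₂, hκ₂, hhigh⟩ := (isCompact_Icc (a := s + θ) (b := P)).exists_forall_le'
    (f := fun x => -f x) hf.neg.continuousOn fun x hx => neg_pos.2 (habove x (by linarith [hx.1]))
  have hκ : 0 < min κ₁ κ₂ / 2 := half_pos (lt_min hκ₁ hκ₂)
  refine ⟨min κ₁ κ₂ / 2, hκ, min κ₁ κ₂ / 2 / B, by positivity, fun u v S hσ hε => ?_⟩
  have hclose : |u τ - f (v σ)| ≤ min κ₁ κ₂ / 2 := by
    refine (hdist u v S).trans ?_
    rwa [abs_of_nonneg hσ, ← le_div_iff₀' hB]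
  obtain ⟨hclose₁, hclose₂⟩ := abs_le.1 hclose
  exact ⟨fun h₁ h₂ => by linarith [hlow (v σ) ⟨h₁, h₂⟩, min_le_left κ₁ κ₂],
    fun h₁ h₂ => by linarith [hhigh (v σ) ⟨h₁, h₂⟩, min_le_right κ₁ κ₂]⟩

theorem exists_isCriticalSlope (hH : BumpWeight H σ τ r η) (hG : SuperlinearLipschitz G L)
    (hM : IsAprioriBound H G σ τ M) : ∃ s, IsCriticalSlope H G σ τ s := by
  obtain ⟨f, hf, hsol, B, hB, hdist⟩ :=
    SemilinearSol.exists_exitMap hH.lt.le hH.intervalIntegrable hG.abs_sub_le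
  obtain ⟨s₀, hs₀, hsmall⟩ := hH.exists_forall_small_slope_pos hG
  have hlarge : ∃ s > 0, f s ≤ 0 := by
    set P := M / (τ - σ) + (∫ s in σ..τ, H s) * (L * M)
    obtain ⟨u, v, S, hu, hv, huf⟩ := hsol (|P| + 1)
    refine ⟨|P| + 1, by positivity, ?_⟩
    by_contra! hpos
    have := hH.abs_velocity_le hG S (hM u v S hu.ge (huf ▸ hpos.le)) σ S.left_mem
    rw [hv] at this
    linarith [le_abs_self P, le_abs_self (|P| + 1)]
  have hcross : ∀ z > 0, f z = 0 → ∃ θ > 0, ∀ x, |x - z| ≤ θ → x ≠ z → (x - z) * f x < 0 := by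
    intro z hz hfz
    obtain ⟨u, v, S, hu, rfl, huf⟩ := hsol z
    obtain ⟨θ, hθ, κ, hκ, C, -, htrans⟩ := hH.exists_isTransversalSlope hG S hu (huf.trans hfz) hz
    refine ⟨θ, hθ, fun x hx hne => ?_⟩
    obtain ⟨u₂, v₂, S₂, hu₂, rfl, huf₂⟩ := hsol x
    simpa only [huf, huf₂, hfz, sub_zero] using
      htrans.sub_mul_neg hθ.le hκ hG S hu S₂ hu₂ hx hne
  obtain ⟨s, hs, hfs, hbelow, habove⟩ := exists_unique_sign_change hf
    (by
      filter_upwards [Ioo_mem_nhdsGT hs₀] with x hx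
      obtain ⟨u, v, S, hu, rfl, huf⟩ := hsol x
      exact huf ▸ hsmall u v S hu hx.1 hx.2)
    hlarge hcross
  obtain ⟨u, v, S, hu, rfl, huf⟩ := hsol s
  exact ⟨v σ, hs, fun θ hθ P => exists_exit_bounds hf hbelow habove hB hdist hθ P,
    hH.exists_isTransversalSlope hG S hu (huf.trans hfs) hs⟩

end BumpWeight

/-! ### Negativity intervals -/

section Negativity

variable {α β : ℝ} {q G c u v w w' : ℝ → ℝ} {ε C P L μ : ℝ}

theorem SemilinearSol.ae_forcing_nonneg (hq : ∀ t, q t ≤ 0) (hG : ∀ x, 0 ≤ G x) (u : ℝ → ℝ) :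
    ∀ᵐ t, t ∈ Icc α β → 0 ≤ -(q t * G (u t)) :=
  Eventually.of_forall fun t _ =>
    neg_nonneg.2 (mul_nonpos_of_nonpos_of_nonneg (hq t) (hG (u t)))

theorem LinearSol.monotoneOn_velocity_of_nonneg (S : LinearSol q c α β w w')
    (hq : ∀ t, q t ≤ 0) (hc : ∀ t, 0 ≤ c t) (hw : ∀ t ∈ Icc α β, 0 ≤ w t) :
    MonotoneOn w' (Icc α β) :=
  CaraSolOn.monotoneOn_velocity S (Eventually.of_forall fun t ht =>
    neg_nonneg.2 (mul_nonpos_of_nonpos_of_nonneg (hq t) (mul_nonneg (hc t) (hw t ht))))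

theorem LinearSol.nonneg_of_left_velocity_pos (S : LinearSol q c α β w w')
    (hq : ∀ t, q t ≤ 0) (hc : ∀ t, 0 ≤ c t) (hw : 0 ≤ w α) (hw' : 0 < w' α) :
    ∀ t ∈ Icc α β, 0 ≤ w t := by
  have hnonneg : ∀ z ∈ Icc α β, (∀ t ∈ Icc α z, 0 ≤ w' t) → ∀ t ∈ Icc α z, 0 ≤ w t :=
    fun z hz hpos t ht => by
      linarith [S.add_mul_sub_le (m := 0) le_rfl ht.1 (ht.2.trans hz.2) fun s hs =>
        hpos s ⟨hs.1, hs.2.trans ht.2⟩]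
  have hpos := forall_pos_of_bootstrap S.continuousOn_velocity hw' fun z hz hz' =>
    hw'.trans_le ((S.mono le_rfl hz.1 hz.2).monotoneOn_velocity_of_nonneg hq hc
      (hnonneg z hz hz') (left_mem_Icc.2 hz.1) (right_mem_Icc.2 hz.1) hz.1)
  exact hnonneg β S.right_mem fun t ht => (hpos t ht).le

theorem SemilinearSol.mul_integral_le_velocity_sub {k : ℝ → ℝ} {x : ℝ}
    (S : SemilinearSol (fun t => -(μ * k t)) G α β u v) (hG : Monotone G)
    (hk : IntervalIntegrable k volume α β) (hk0 : ∀ t, 0 ≤ k t) (hμ : 0 ≤ μ)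
    (hu : ∀ t ∈ Icc α β, x ≤ u t) : μ * (G x * ∫ s in α..β, k s) ≤ v β - v α := by
  rw [S.velocity_eq_add S.left_mem S.right_mem, add_sub_cancel_left, ← mul_assoc,
    ← intervalIntegral.integral_const_mul]
  refine intervalIntegral.integral_mono_on S.le (hk.const_mul _) S.intervalIntegrable
    fun t ht => ?_
  linarith [mul_le_mul_of_nonneg_left (hG (hu t ht)) (mul_nonneg hμ (hk0 t))]

theorem eventually_lt_velocity_of_large_weight (hG : SuperlinearLipschitz G L) (hαβ : α < β)
    {k : ℝ → ℝ} (hk : IntervalIntegrable k volume α β) (hk0 : ∀ t, 0 ≤ k t)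
    (hkα : ∀ δ > 0, α + δ ≤ β → 0 < ∫ s in α..(α + δ), k s) (hε : 0 < ε) (hC : 0 < C)
    (hP : 0 < P) :
    ∀ᶠ μ in atTop, ∀ u v, SemilinearSol (fun t => -(μ * k t)) G α β u v →
      ε ≤ u α → -C ≤ v α → (∀ t ∈ Icc α β, 0 ≤ u t) ∧ P < v β := by
  set δ := min (ε / (2 * C)) (β - α)
  have hδ : 0 < δ := lt_min (by positivity) (sub_pos.2 hαβ)
  have hδβ : α + δ ≤ β := by linarith [min_le_right (ε / (2 * C)) (β - α)]
  have hCδ : C * δ ≤ ε / 2 :=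
    (mul_le_mul_of_nonneg_left (min_le_left _ _) hC.le).trans_eq (by field_simp)
  have hκ : 0 < G (ε / 2) * ∫ s in α..(α + δ), k s :=
    mul_pos (hG.pos _ (half_pos hε)) (hkα δ hδ hδβ)
  filter_upwards [eventually_gt_atTop ((C + P) / (G (ε / 2) * ∫ s in α..(α + δ), k s)),
    eventually_ge_atTop 0] with μ hμ hμ0 u v S hu hv
  have hmono : MonotoneOn v (Icc α β) := S.monotoneOn_velocity (SemilinearSol.ae_forcing_nonneg
    (fun t => neg_nonpos.2 (mul_nonneg hμ0 (hk0 t))) hG.nonneg u)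
  have hmid : α + δ ∈ Icc α β := ⟨by linarith, hδβ⟩
  have hhalf : ∀ t ∈ Icc α (α + δ), ε / 2 ≤ u t := fun t ht => by
    have := S.add_mul_sub_le (m := -C) le_rfl ht.1 (ht.2.trans hδβ) fun s hs =>
      hv.trans (hmono S.left_mem ⟨hs.1, hs.2.trans (ht.2.trans hδβ)⟩ hs.1)
    nlinarith [ht.2]
  have hgain := (S.mono le_rfl hmid.1 hδβ).mul_integral_le_velocity_sub
    (monotone_of_deriv_nonneg hG.differentiable hG.deriv_nonneg)
    (intervalIntegrable_of_mem_Icc hk S.left_mem hmid) hk0 hμ0 hhalf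
  rw [div_lt_iff₀ hκ] at hμ
  have hPv : P < v (α + δ) := by linarith
  refine ⟨fun t ht => ?_, hPv.trans_le (hmono hmid S.right_mem hδβ)⟩
  rcases le_total t (α + δ) with h | h
  · exact (half_pos hε).le.trans (hhalf t ⟨ht.1, h⟩)
  · linarith [hhalf (α + δ) ⟨hmid.1, le_rfl⟩, S.add_mul_sub_le (m := 0) hmid.1 h ht.2 fun s hs =>
      (hP.trans hPv).le.trans (hmono hmid ⟨hmid.1.trans hs.1, hs.2.trans ht.2⟩ hs.1)]

theorem eventually_velocity_lt_of_large_weight (hG : SuperlinearLipschitz G L) (hαβ : α < β)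
    {k : ℝ → ℝ} (hk : IntervalIntegrable k volume α β) (hk0 : ∀ t, 0 ≤ k t)
    (hkβ : ∀ δ > 0, α ≤ β - δ → 0 < ∫ s in (β - δ)..β, k s) (hε : 0 < ε) (hC : 0 < C)
    (hP : 0 < P) :
    ∀ᶠ μ in atTop, ∀ u v, SemilinearSol (fun t => -(μ * k t)) G α β u v →
      ε ≤ u β → v β ≤ P → v α < -C := by
  have hk' : IntervalIntegrable (fun t => k (α + β - t)) volume α β := by
    simpa using (hk.comp_sub_left (α + β)).symm
  filter_upwards [eventually_lt_velocity_of_large_weight hG hαβ hk' (fun t => hk0 _)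
    (fun δ hδ h => by
      rw [intervalIntegral.integral_comp_sub_left (fun s => k s), add_sub_cancel_left,
        add_sub_add_left_eq_sub]
      exact hkβ δ hδ (by linarith)) hε hP hC] with μ hμ u v S hu hv
  have S' := CaraSolOn.comp_const_sub S (α + β)
  rw [add_sub_cancel_left, add_sub_cancel_right] at S'
  have := (hμ _ _ S' (by simpa using hu) (by simpa using hv)).2
  rw [add_sub_cancel_right] at this
  linarith

end Negativity

/-- A solution `0 ≤ u ≤ ε` of the semilinear problem on an interval with nonpositive weight,
together with a solution `w` of a linear problem whose coefficient `c` dominates `G u / u`. -/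
structure NegativityPair (q G c : ℝ → ℝ) (α β ε : ℝ) (u v w w' : ℝ → ℝ) : Prop where
  semilinear : SemilinearSol q G α β u v
  linear : LinearSol q c α β w w'
  weight_nonpos : ∀ t, q t ≤ 0
  nonlinearity_nonneg : ∀ x, 0 ≤ G x
  nonneg : ∀ t ∈ Icc α β, 0 ≤ u t
  le : ∀ t ∈ Icc α β, u t ≤ ε
  coeff_nonneg : ∀ t, 0 ≤ c t
  le_mul : ∀ t ∈ Icc α β, G (u t) ≤ c t * u t

/-- Data `w, w'` of a linear solution at a point, at which it is increasing with slope at least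
`w / Y`. -/
structure IncreasingData (Y w w' : ℝ) : Prop where
  nonneg : 0 ≤ w
  velocity_pos : 0 < w'
  le_mul : w ≤ Y * w'

/-- Data of a linear solution when it enters a negativity interval: increasing, or normalized to
`w = 1` with controlled slope while the semilinear solution comes in with slope `v ≤ -κ`. -/
def IsEntry (κ C Y w w' v : ℝ) : Prop := IncreasingData Y w w' ∨ v ≤ -κ ∧ w = 1 ∧ -C ≤ w'

/-- Data of a linear solution when it leaves a negativity interval: increasing, and even with
slope at least `w / θ` if the semilinear solution leaves with a slope `v` comparable to `s`. -/
structure IsExit (s θ Y w w' v : ℝ) : Prop extends IncreasingData Y w w' where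
  pos : 0 < w
  le_mul_of_le : s / 2 ≤ v → w ≤ θ * w'

theorem IncreasingData.mono {Y Y' w w' : ℝ} (h : IncreasingData Y w w') (hY : Y ≤ Y') :
    IncreasingData Y' w w' :=
  ⟨h.nonneg, h.velocity_pos, h.le_mul.trans (mul_le_mul_of_nonneg_right hY h.velocity_pos.le)⟩

namespace NegativityPair

variable {α β ε s θ C κ Y : ℝ} {q G c u v w w' : ℝ → ℝ}

theorem mono (h : NegativityPair q G c α β ε u v w w') {x y : ℝ} (hx : α ≤ x) (hxy : x ≤ y)
    (hy : y ≤ β) : NegativityPair q G c x y ε u v w w' where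
  semilinear := h.semilinear.mono hx hxy hy
  linear := h.linear.mono hx hxy hy
  weight_nonpos := h.weight_nonpos
  nonlinearity_nonneg := h.nonlinearity_nonneg
  nonneg t ht := h.nonneg t (Icc_subset_Icc hx hy ht)
  le t ht := h.le t (Icc_subset_Icc hx hy ht)
  coeff_nonneg := h.coeff_nonneg
  le_mul t ht := h.le_mul t (Icc_subset_Icc hx hy ht)

theorem mul_velocity_sub_le (h : NegativityPair q G c α β ε u v w w') {b : ℝ} (hb : 0 ≤ b)
    (hw : ∀ t ∈ Icc α β, b ≤ w t) : b * (v β - v α) ≤ ε * (w' β - w' α) := by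
  rw [h.semilinear.velocity_eq_add h.semilinear.left_mem h.semilinear.right_mem,
    h.linear.velocity_eq_add h.linear.left_mem h.linear.right_mem, add_sub_cancel_left,
    add_sub_cancel_left, ← intervalIntegral.integral_const_mul,
    ← intervalIntegral.integral_const_mul]
  refine intervalIntegral.integral_mono_on h.linear.le
    (h.semilinear.intervalIntegrable.const_mul _) (h.linear.intervalIntegrable.const_mul _)
    fun t ht => ?_
  have hGc : b * G (u t) ≤ w t * (c t * ε) :=
    mul_le_mul (hw t ht)
      ((h.le_mul t ht).trans (mul_le_mul_of_nonneg_left (h.le t ht) (h.coeff_nonneg t)))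
      (h.nonlinearity_nonneg _) (hb.trans (hw t ht))
  linarith [mul_le_mul_of_nonneg_left hGc (neg_nonneg.2 (h.weight_nonpos t))]

theorem monotoneOn_linear_velocity (h : NegativityPair q G c α β ε u v w w')
    (hw : ∀ t ∈ Icc α β, 0 ≤ w t) : MonotoneOn w' (Icc α β) :=
  h.linear.monotoneOn_velocity_of_nonneg h.weight_nonpos h.coeff_nonneg hw

theorem increasing_right (h : NegativityPair q G c α β ε u v w w') (hY : 0 ≤ Y)
    (hα : IncreasingData Y (w α) (w' α)) : IncreasingData (Y + (β - α)) (w β) (w' β) := by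
  have hw := h.linear.nonneg_of_left_velocity_pos h.weight_nonpos h.coeff_nonneg hα.nonneg
    hα.velocity_pos
  have hmono := h.monotoneOn_linear_velocity hw
  have hw' := hmono h.linear.left_mem h.linear.right_mem h.linear.le
  have hle := h.linear.le_add_mul_sub le_rfl h.linear.le le_rfl fun t ht =>
    hmono ht h.linear.right_mem ht.2
  refine ⟨hw β h.linear.right_mem, hα.velocity_pos.trans_le hw', ?_⟩
  linarith [hα.le_mul, mul_le_mul_of_nonneg_left hw' hY]

theorem le_mul_velocity_right (h : NegativityPair q G c α β ε u v w w') (hαβ : α < β)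
    (hlen : β - α ≤ θ / 2) (hs : 0 < s) (hε : ε ≤ s / 4 * (β - α)) (hε' : ε ≤ s * θ / 8)
    (hα : IncreasingData Y (w α) (w' α)) (hv : s / 2 ≤ v β) : w β ≤ θ * w' β := by
  have hw := h.linear.nonneg_of_left_velocity_pos h.weight_nonpos h.coeff_nonneg hα.nonneg
    hα.velocity_pos
  have hmono := h.monotoneOn_linear_velocity hw
  have hw'β : 0 < w' β :=
    hα.velocity_pos.trans_le (hmono h.linear.left_mem h.linear.right_mem hαβ.le)
  by_contra! hlt
  have hhalf : ∀ t ∈ Icc α β, w β / 2 ≤ w t := fun t ht => by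
    have := h.linear.le_add_mul_sub ht.1 ht.2 le_rfl fun r hr =>
      hmono ⟨ht.1.trans hr.1, hr.2⟩ h.linear.right_mem hr.2
    nlinarith [ht.1]
  have hvα : v α ≤ s / 4 := by
    have := h.semilinear.add_mul_sub_le_of_nonneg
      (SemilinearSol.ae_forcing_nonneg h.weight_nonpos h.nonlinearity_nonneg u)
      h.semilinear.left_mem h.semilinear.right_mem
    refine le_of_mul_le_mul_right ?_ (sub_pos.2 hαβ)
    linarith [h.nonneg α h.linear.left_mem, h.le β h.linear.right_mem]
  have hwβ := hw β h.linear.right_mem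
  have hεw' : ε * w' β ≤ s * θ / 8 * w' β := mul_le_mul_of_nonneg_right hε' hw'β.le
  have hε0 : 0 ≤ ε * w' α := mul_nonneg
    ((h.nonneg α h.linear.left_mem).trans (h.le α h.linear.left_mem)) hα.velocity_pos.le
  have hcomp := h.mul_velocity_sub_le (by linarith) hhalf
  have hvdiff : w β / 2 * (s / 4) ≤ w β / 2 * (v β - v α) :=
    mul_le_mul_of_nonneg_left (by linarith) (by linarith)
  linarith [mul_lt_mul_of_pos_left hlt hs]

theorem half_lt_of_entry (h : NegativityPair q G c α β ε u v w w') (hC : 0 ≤ C)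
    (hlen : C * (β - α) ≤ 1 / 4) (hw : w α = 1) (hw' : -C ≤ w' α) :
    ∀ t ∈ Icc α β, 1 / 2 < w t := by
  have hpos := forall_pos_of_bootstrap (D := fun t => w t - 1 / 2)
    (h.linear.continuousOn.sub continuousOn_const)
    (by rw [hw]; norm_num) fun z hz hz' => by
      have hmono := (h.mono le_rfl hz.1 hz.2).monotoneOn_linear_velocity fun t ht => by
        linarith [hz' t ht]
      have := h.linear.add_mul_sub_le le_rfl hz.1 hz.2 fun t ht =>
        hw'.trans (hmono (left_mem_Icc.2 hz.1) ht ht.1)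
      linarith [mul_le_mul_of_nonneg_left (sub_le_sub_right hz.2 α) hC]
  exact fun t ht => by linarith [hpos t ht]

theorem increasing_right_of_entry (h : NegativityPair q G c α β ε u v w w') (hαβ : α < β)
    (hC : 0 ≤ C) (hlen : C * (β - α) ≤ 1 / 4) (hκ : 0 < κ) (hε : ε ≤ κ / 2 * (β - α))
    (hε' : ε * (C + 1 / (β - α)) ≤ κ / 4) (hv : v α ≤ -κ) (hw : w α = 1) (hw' : -C ≤ w' α) :
    IncreasingData (2 * (β - α)) (w β) (w' β) := by
  have hℓ : 0 < β - α := sub_pos.2 hαβ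
  have hhalf := h.half_lt_of_entry hC hlen hw hw'
  have hmono := h.monotoneOn_linear_velocity fun t ht => by linarith [hhalf t ht]
  have hvβ : -(κ / 2) ≤ v β := by
    have := h.semilinear.add_mul_sub_le_of_nonneg
      (SemilinearSol.ae_forcing_nonneg h.weight_nonpos h.nonlinearity_nonneg u)
      h.semilinear.right_mem h.semilinear.left_mem
    refine le_of_mul_le_mul_right ?_ hℓ
    linarith [h.nonneg β h.linear.right_mem, h.le α h.linear.left_mem]
  have hcomp := h.mul_velocity_sub_le one_half_pos.le fun t ht => (hhalf t ht).le
  have hε0 : 0 < ε := by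
    by_contra! hle
    have : ε = 0 := le_antisymm hle
      ((h.nonneg α h.linear.left_mem).trans (h.le α h.linear.left_mem))
    rw [this, zero_mul] at hcomp
    linarith
  have hslope : 1 / (β - α) ≤ w' β := by
    refine le_of_mul_le_mul_left ?_ hε0
    linarith [mul_le_mul_of_nonneg_left hw' hε0.le]
  have hw'β : 0 < w' β := (one_div_pos.2 hℓ).trans_le hslope
  refine ⟨by linarith [hhalf β h.linear.right_mem], hw'β, ?_⟩
  rw [div_le_iff₀ hℓ] at hslope
  linarith [h.linear.le_add_mul_sub le_rfl hαβ.le le_rfl fun t ht =>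
    hmono ht h.linear.right_mem ht.2]

end NegativityPair

/-- `ε` is small enough for entry data to propagate to exit data through the interval `[α, β]`. -/
def PropagatesAcross (G : ℝ → ℝ) (α β s θ κ C ε : ℝ) : Prop :=
  ∀ q c u v w w' Y, NegativityPair q G c α β ε u v w w' → β - α ≤ Y →
    IsEntry κ C Y (w α) (w' α) (v α) → IsExit s θ (Y + (β - α)) (w β) (w' β) (v β)

theorem PropagatesAcross.anti {G : ℝ → ℝ} {α β s θ κ C ε ε' : ℝ}
    (h : PropagatesAcross G α β s θ κ C ε) (hε : ε' ≤ ε) :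
    PropagatesAcross G α β s θ κ C ε' := fun q c u v w w' Y hp =>
  h q c u v w w' Y { hp with le := fun t ht => (hp.le t ht).trans hε }

theorem exists_propagatesAcross (G : ℝ → ℝ) {α β s θ κ C : ℝ} (hαβ : α < β) (hs : 0 < s)
    (hθ : 0 < θ) (hκ : 0 < κ) (hC : 0 < C) : ∃ ε > 0, PropagatesAcross G α β s θ κ C ε := by
  set δ := min (min (1 / (4 * C)) (θ / 2)) ((β - α) / 2)
  have hδ : 0 < δ := lt_min (by positivity) (half_pos (sub_pos.2 hαβ))
  have hδC : C * δ ≤ 1 / 4 :=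
    (mul_le_mul_of_nonneg_left ((min_le_left _ _).trans (min_le_left _ _)) hC.le).trans_eq
      (by field_simp)
  have hδθ : δ ≤ θ / 2 := (min_le_left _ _).trans (min_le_right _ _)
  have hδℓ : 2 * δ ≤ β - α := by linarith [min_le_right (min (1 / (4 * C)) (θ / 2)) ((β - α) / 2)]
  refine ⟨min (min (s / 4 * δ) (s * θ / 8)) (min (κ / 2 * δ) (κ / 4 / (C + 1 / δ))),
    by positivity, fun q c u v w w' Y hp hY hentry => ?_⟩
  have h₁ := hp.mono le_rfl (by linarith : α ≤ α + δ) (by linarith)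
  have h₂ := hp.mono (by linarith : α ≤ α + δ) (by linarith : α + δ ≤ β - δ) (by linarith)
  have h₃ := hp.mono (by linarith : α ≤ β - δ) (by linarith) le_rfl
  have hstart : IncreasingData (Y + δ) (w (α + δ)) (w' (α + δ)) := by
    rcases hentry with hinc | ⟨hv, hw, hw'⟩
    · simpa using h₁.increasing_right (by linarith) hinc
    · refine (h₁.increasing_right_of_entry (by linarith) hC.le (by rwa [add_sub_cancel_left]) hκ
        ?_ ?_ hv hw hw').mono (by linarith)
      · rw [add_sub_cancel_left]
        exact (min_le_right _ _).trans (min_le_left _ _)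
      · rw [add_sub_cancel_left, ← le_div_iff₀ (by positivity)]
        exact (min_le_right _ _).trans (min_le_right _ _)
  have hmiddle := h₂.increasing_right (by linarith) hstart
  have hend := h₃.increasing_right (by linarith) hmiddle
  have hw := h₃.linear.nonneg_of_left_velocity_pos hp.weight_nonpos hp.coeff_nonneg hmiddle.nonneg
    hmiddle.velocity_pos
  have hpos := h₃.linear.add_mul_sub_le le_rfl h₃.linear.le le_rfl fun t ht =>
    h₃.monotoneOn_linear_velocity hw h₃.linear.left_mem ht ht.1
  refine ⟨hend.mono (by linarith), ?_, fun hv => ?_⟩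
  · rw [sub_sub_cancel] at hpos
    linarith [hmiddle.nonneg, mul_pos hmiddle.velocity_pos hδ]
  · refine h₃.le_mul_velocity_right (by linarith) (by rwa [sub_sub_cancel]) hs ?_ ?_ hmiddle hv
    · rw [sub_sub_cancel]
      exact (min_le_left _ _).trans (min_le_left _ _)
    · exact (min_le_left _ _).trans (min_le_right _ _)

/-! ### Linear propagation through alternating weights -/

theorem CaraSolOn.restrict {q q₂ F u v : ℝ → ℝ} {α β x y : ℝ}
    (S : CaraSolOn α β (fun t => -(q t * F t)) u v) (hx : α ≤ x) (hxy : x ≤ y) (hy : y ≤ β)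
    (hq : ∀ᵐ t, t ∈ Icc x y → q t = q₂ t) : CaraSolOn x y (fun t => -(q₂ t * F t)) u v :=
  (S.mono hx hxy hy).congr_ae (by filter_upwards [hq] with t ht hmem using by rw [ht hmem])

/-- Two nonnegative solutions `u₁`, `u₂` of a semilinear problem, together with a solution `w` of
the linear problem whose coefficient is a mean-value coefficient for `u₁`, `u₂`. -/
structure LinearizedPair (q G : ℝ → ℝ) (α β : ℝ) (u₁ v₁ u₂ v₂ c w w' : ℝ → ℝ) : Prop where
  left : SemilinearSol q G α β u₁ v₁
  right : SemilinearSol q G α β u₂ v₂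
  left_nonneg : ∀ t ∈ Icc α β, 0 ≤ u₁ t
  right_nonneg : ∀ t ∈ Icc α β, 0 ≤ u₂ t
  isMeanValueCoeff : IsMeanValueCoeff G u₁ u₂ c
  linear : LinearSol q c α β w w'

namespace LinearizedPair

variable {q q₂ G u₁ v₁ u₂ v₂ c w w' : ℝ → ℝ} {α β L Y s θ ε δ η ρ : ℝ}

theorem restrict (h : LinearizedPair q G α β u₁ v₁ u₂ v₂ c w w') {x y : ℝ} (hx : α ≤ x)
    (hxy : x ≤ y) (hy : y ≤ β) (hq : ∀ᵐ t, t ∈ Icc x y → q t = q₂ t) :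
    LinearizedPair q₂ G x y u₁ v₁ u₂ v₂ c w w' where
  left := h.left.restrict hx hxy hy hq
  right := h.right.restrict hx hxy hy hq
  left_nonneg t ht := h.left_nonneg t (Icc_subset_Icc hx hy ht)
  right_nonneg t ht := h.right_nonneg t (Icc_subset_Icc hx hy ht)
  isMeanValueCoeff := h.isMeanValueCoeff
  linear := h.linear.restrict hx hxy hy hq

theorem const_mul (h : LinearizedPair q G α β u₁ v₁ u₂ v₂ c w w') (d : ℝ) :
    LinearizedPair q G α β u₁ v₁ u₂ v₂ c (fun t => d * w t) fun t => d * w' t :=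
  { h with linear := LinearSol.const_mul h.linear d }

theorem coeff_nonneg (h : LinearizedPair q G α β u₁ v₁ u₂ v₂ c w w')
    (hG : SuperlinearLipschitz G L) (t : ℝ) : 0 ≤ c t := by
  obtain ⟨ξ, -, hξ⟩ := h.isMeanValueCoeff.exists_eq_deriv t
  exact hξ ▸ hG.deriv_nonneg ξ

theorem negativityPair (h : LinearizedPair q G α β u₁ v₁ u₂ v₂ c w w')
    (hG : SuperlinearLipschitz G L) (hq : ∀ t, q t ≤ 0) (hα : u₁ α ≤ ε) (hβ : u₁ β ≤ ε) :
    NegativityPair q G c α β ε u₁ v₁ w w' where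
  semilinear := h.left
  linear := h.linear
  weight_nonpos := hq
  nonlinearity_nonneg := hG.nonneg
  nonneg := h.left_nonneg
  le _ ht := (h.left.le_max_endpoints (SemilinearSol.ae_forcing_nonneg hq hG.nonneg u₁) ht).trans
    (max_le hα hβ)
  coeff_nonneg := h.coeff_nonneg hG
  le_mul t ht := h.isMeanValueCoeff.le_mul t (h.left_nonneg t ht) (h.right_nonneg t ht)

theorem increasing_right_of_small (h : LinearizedPair q G α β u₁ v₁ u₂ v₂ c w w')
    (hG : SuperlinearLipschitz G L) (hq0 : ∀ t, 0 ≤ q t) (hq : IntervalIntegrable q volume α β)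
    (hδ : ∀ x < δ, deriv G x ≤ η) (hθ : 0 ≤ θ) (hθδ : θ * (1 + (β - α)) < δ)
    (hu₁ : u₁ α ≤ θ) (hu₂ : u₂ α ≤ θ) (hv₁ : v₁ α ≤ θ) (hv₂ : v₂ α ≤ θ)
    (hα : IncreasingData Y (w α) (w' α))
    (hsmall : (∫ s in α..β, q s) * (η * (Y + (β - α))) < 1 / 2) :
    IncreasingData (2 * (Y + (β - α))) (w β) (w' β) := by
  have hlt : ∀ u v, SemilinearSol q G α β u v → u α ≤ θ → v α ≤ θ → ∀ t ∈ Icc α β, u t < δ :=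
    fun u v S hu hv t ht => by
      have hle := S.le_add_mul_sub_of_nonpos
        (Eventually.of_forall fun t _ => neg_nonpos.2 (mul_nonneg (hq0 t) (hG.nonneg (u t))))
        S.left_mem ht
      linarith [mul_le_mul hv (sub_le_sub_right ht.2 α) (sub_nonneg.2 ht.1) hθ]
  have hc : ∀ t ∈ Icc α β, c t ≤ η := fun t ht => by
    obtain ⟨ξ, hξ, hcξ⟩ := h.isMeanValueCoeff.exists_eq_deriv t
    exact hcξ ▸ hδ ξ (hξ.2.trans_lt
      (max_lt (hlt u₁ v₁ h.left hu₁ hv₁ t ht) (hlt u₂ v₂ h.right hu₂ hv₂ t ht)))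
  have hd := inv_pos.2 hα.velocity_pos
  obtain ⟨hw, hwle, hw'⟩ := (h.const_mul (w' α)⁻¹).linear.half_le_velocity_of_small hq0 hq
    (h.coeff_nonneg hG) hc (mul_nonneg hd.le hα.nonneg)
    ((inv_mul_le_iff₀' hα.velocity_pos).2 hα.le_mul) (inv_mul_cancel₀ hα.velocity_pos.ne') hsmall
  have hY : 0 ≤ Y + (β - α) := hw.trans hwle
  refine ⟨nonneg_of_mul_nonneg_right hw hd, (mul_pos_iff_of_pos_left hd).1 (by linarith),
    le_of_mul_le_mul_left ?_ hd⟩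
  linarith [mul_le_mul_of_nonneg_left hw'.le hY]

theorem exists_entry_of_transversal (h : LinearizedPair q G α β u₁ v₁ u₂ v₂ c w w')
    (ht : IsTransversalSlope q G α β s ρ ρ ρ⁻¹) (hρ : 0 < ρ) (hu₁ : u₁ α ≤ ρ) (hu₂ : u₂ α ≤ ρ)
    (hv₁ : |v₁ α - s| ≤ ρ) (hv₂ : |v₂ α - s| ≤ ρ) (hα : 0 ≤ w α) (hα' : 0 < w' α)
    (hle : w α ≤ ρ * w' α) :
    ∃ e ≠ 0, v₁ β ≤ -ρ ∧ e * w β = 1 ∧ -(ρ⁻¹ / ρ) ≤ e * w' β := by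
  have hd := inv_pos.2 hα'
  have hαm := h.left.left_mem
  have hwα : 0 ≤ (w' α)⁻¹ * w α := mul_nonneg hd.le hα
  obtain ⟨hw, hw', hv⟩ := ht _ _ _ _ _ _ _ h.left h.right
    (by rwa [abs_of_nonneg (h.left_nonneg α hαm)]) (by rwa [abs_of_nonneg (h.right_nonneg α hαm)])
    hv₁ hv₂ h.isMeanValueCoeff (h.const_mul (w' α)⁻¹).linear (inv_mul_cancel₀ hα'.ne')
    (by rwa [abs_of_nonneg hwα, inv_mul_le_iff₀' hα'])
  have hneg : (w' α)⁻¹ * w β < 0 := by linarith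
  refine ⟨(w' α)⁻¹ / ((w' α)⁻¹ * w β), div_ne_zero hd.ne' hneg.ne, hv, ?_, ?_⟩
  · rw [div_mul_eq_mul_div, div_self hneg.ne]
  · rw [div_mul_eq_mul_div]
    refine (abs_le.1 ?_).1
    rw [abs_div, abs_of_neg hneg]
    exact div_le_div₀ (inv_pos.2 hρ).le hw' hρ (by linarith)

end LinearizedPair

/-- An alternating partition `A 0 < B 0 < A 1 < B 1 < ⋯ < A m < B m` into the `m` positivity
intervals `[B i, A (i + 1)]` and the `m + 1` negativity intervals `[A i, B i]`. -/
structure AlternatingPartition (m : ℕ) (A B : ℕ → ℝ) : Prop where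
  lt : ∀ i ≤ m, A i < B i
  lt_succ {i : ℕ} (hi : i < m) : B i < A (i + 1)

namespace AlternatingPartition

variable {m i : ℕ} {A B : ℕ → ℝ}

theorem left_le (hP : AlternatingPartition m A B) (hi : i ≤ m) : A 0 ≤ A i := by
  induction i with
  | zero => exact le_rfl
  | succ i ih => linarith [ih (by omega), hP.lt i (by omega), hP.lt_succ hi]

theorem le_right (hP : AlternatingPartition m A B) (hi : i ≤ m) : B i ≤ B m :=
  Nat.decreasingInduction (motive := fun i _ => B i ≤ B m)
    (fun i hi ih => by linarith [hP.lt (i + 1) hi, hP.lt_succ hi]) le_rfl hi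

theorem left_mem (hP : AlternatingPartition m A B) (hi : i ≤ m) : A i ∈ Icc (A 0) (B m) :=
  ⟨hP.left_le hi, (hP.lt i hi).le.trans (hP.le_right hi)⟩

theorem right_mem (hP : AlternatingPartition m A B) (hi : i ≤ m) : B i ∈ Icc (A 0) (B m) :=
  ⟨(hP.left_le hi).trans (hP.lt i hi).le, hP.le_right hi⟩

theorem length_pos (hP : AlternatingPartition m A B) : 0 < B m - A 0 :=
  sub_pos.2 ((hP.lt 0 m.zero_le).trans_le (hP.le_right m.zero_le))

end AlternatingPartition

/-- Weights `p, k` on an alternating partition: on the positivity interval `[B i, A (i + 1)]` the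
weight `p` is the bump `H i` and `k` vanishes, on the negativity intervals `[A i, B i]` only
`k ≥ 0` is present, and `k` is nontrivial near every interior endpoint of these. -/
structure AlternatingWeights (m : ℕ) (A B : ℕ → ℝ) (H : ℕ → ℝ → ℝ) (p k : ℝ → ℝ) : Prop
    extends AlternatingPartition m A B where
  exists_bumpWeight : ∀ i < m, ∃ r η, BumpWeight (H i) (B i) (A (i + 1)) r η
  intervalIntegrable_pos : IntervalIntegrable p volume (A 0) (B m)
  intervalIntegrable_neg : IntervalIntegrable k volume (A 0) (B m)
  nonneg : ∀ t, 0 ≤ k t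
  ae_eq_bump : ∀ i < m, ∀ᵐ t, t ∈ Icc (B i) (A (i + 1)) → p t = H i t ∧ k t = 0
  ae_eq_zero : ∀ i ≤ m, ∀ᵐ t, t ∈ Icc (A i) (B i) → p t = 0
  integral_right_pos : ∀ i < m, ∀ δ > 0, A (i + 1) + δ ≤ B (i + 1) →
    0 < ∫ t in A (i + 1)..(A (i + 1) + δ), k t
  integral_left_pos : ∀ i < m, ∀ δ > 0, A i ≤ B i - δ → 0 < ∫ t in (B i - δ)..B i, k t

namespace AlternatingWeights

variable {m i : ℕ} {A B : ℕ → ℝ} {H : ℕ → ℝ → ℝ} {p k F u v : ℝ → ℝ} {μ : ℝ}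

theorem ae_weight_eq_bump (hW : AlternatingWeights m A B H p k) (hi : i < m) (μ : ℝ) :
    ∀ᵐ t, t ∈ Icc (B i) (A (i + 1)) → p t - μ * k t = H i t := by
  filter_upwards [hW.ae_eq_bump i hi] with t ht hmem
  rw [(ht hmem).1, (ht hmem).2, mul_zero, sub_zero]

theorem ae_weight_eq_neg (hW : AlternatingWeights m A B H p k) (hi : i ≤ m) (μ : ℝ) :
    ∀ᵐ t, t ∈ Icc (A i) (B i) → p t - μ * k t = -(μ * k t) := by
  filter_upwards [hW.ae_eq_zero i hi] with t ht hmem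
  rw [ht hmem, zero_sub]

theorem restrict_bump (hW : AlternatingWeights m A B H p k)
    (S : CaraSolOn (A 0) (B m) (fun t => -((p t - μ * k t) * F t)) u v) (hi : i < m) :
    CaraSolOn (B i) (A (i + 1)) (fun t => -(H i t * F t)) u v :=
  S.restrict (hW.right_mem hi.le).1 (hW.lt_succ hi).le (hW.left_mem (i := i + 1) hi).2
    (hW.ae_weight_eq_bump hi μ)

theorem restrict_neg (hW : AlternatingWeights m A B H p k)
    (S : CaraSolOn (A 0) (B m) (fun t => -((p t - μ * k t) * F t)) u v) (hi : i ≤ m) :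
    CaraSolOn (A i) (B i) (fun t => -(-(μ * k t) * F t)) u v :=
  S.restrict (hW.left_le hi) (hW.lt i hi).le (hW.le_right hi) (hW.ae_weight_eq_neg hi μ)

theorem intervalIntegrable_weight (hW : AlternatingWeights m A B H p k) (μ : ℝ) :
    IntervalIntegrable (fun t => p t - μ * k t) volume (A 0) (B m) :=
  hW.intervalIntegrable_pos.sub (hW.intervalIntegrable_neg.const_mul μ)

end AlternatingWeights

/-- The velocity `x` matches `e` for the critical slope `s` with tolerance `θ`: it is close to
`s` if `e` holds, and small otherwise. -/
structure HasSlope (s θ : ℝ) (e : Prop) (x : ℝ) : Prop where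
  abs_sub_le : e → |x - s| ≤ θ
  le : ¬e → x ≤ θ

/-- `u` is small at all endpoints of the partition, and `v` enters the `i`-th positivity interval
with velocity close to `s i` if `e i` holds, and with small velocity otherwise. -/
structure HasPattern (m : ℕ) (A B s : ℕ → ℝ) (θ ε : ℝ) (e : ℕ → Prop) (u v : ℝ → ℝ) : Prop where
  left_le : ∀ i ≤ m, u (A i) ≤ ε
  right_le : ∀ i ≤ m, u (B i) ≤ ε
  hasSlope : ∀ i < m, HasSlope (s i) θ (e i) (v (B i))

/-- Constants for which a nontrivial solution of the linearized problem cannot vanish at both ends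
of the partition. The factor `6 ^ m` bounds the growth of the ratio `w / w'`. -/
structure LinearizationConstants (m : ℕ) (A B : ℕ → ℝ) (H : ℕ → ℝ → ℝ) (G : ℝ → ℝ) (s : ℕ → ℝ)
    (ρ η δ θ ε : ℝ) : Prop where
  radius_pos : 0 < ρ
  transversal : ∀ i < m, IsTransversalSlope (H i) G (B i) (A (i + 1)) (s i) ρ ρ ρ⁻¹
  across : ∀ i ≤ m, PropagatesAcross G (A i) (B i) (s i) ρ ρ (ρ⁻¹ / ρ) ε
  deriv_nonneg : 0 ≤ η
  deriv_le : ∀ x < δ, deriv G x ≤ η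
  integral_mul_lt : ∀ i < m,
    (∫ t in B i..A (i + 1), H i t) * (η * (6 ^ m * (2 * (B m - A 0)) + (B m - A 0))) < 1 / 2
  pos : 0 < θ
  le_radius : θ ≤ ρ
  lt_half_slope : ∀ i < m, θ < s i / 2
  mul_length_lt : θ * (1 + (B m - A 0)) < δ
  small_le : ε ≤ θ

namespace LinearizationConstants

variable {m i : ℕ} {A B s : ℕ → ℝ} {H : ℕ → ℝ → ℝ} {p k G u₁ v₁ u₂ v₂ c w w' : ℝ → ℝ}
  {ρ η δ θ ε L μ Y : ℝ} {e : ℕ → Prop}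

theorem half_le_of_abs_sub_le (hC : LinearizationConstants m A B H G s ρ η δ θ ε) {x : ℝ}
    (hi : i < m) (hx : |x - s i| ≤ θ) : s i / 2 ≤ x := by
  linarith [hC.lt_half_slope i hi, neg_le_of_abs_le hx]

theorem exists_entry (hC : LinearizationConstants m A B H G s ρ η δ θ ε)
    (hG : SuperlinearLipschitz G L) (hW : AlternatingWeights m A B H p k)
    (hp : LinearizedPair (H i) G (B i) (A (i + 1)) u₁ v₁ u₂ v₂ c w w')
    (h₁ : HasPattern m A B s θ ε e u₁ v₁) (h₂ : HasPattern m A B s θ ε e u₂ v₂) (hi : i < m)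
    (hY : B m - A 0 ≤ Y) (hYm : Y ≤ 6 ^ m * (2 * (B m - A 0)))
    (hexit : IsExit (s i) ρ Y (w (B i)) (w' (B i)) (v₁ (B i))) :
    ∃ d ≠ 0, IsEntry ρ (ρ⁻¹ / ρ) (4 * Y) (d * w (A (i + 1))) (d * w' (A (i + 1)))
      (v₁ (A (i + 1))) := by
  obtain ⟨r, κ, hH⟩ := hW.exists_bumpWeight i hi
  have hlen : A (i + 1) - B i ≤ B m - A 0 := by
    linarith [(hW.left_mem (i := i + 1) hi).2, (hW.right_mem hi.le).1]
  have hu₁ := (h₁.right_le i hi.le).trans hC.small_le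
  have hu₂ := (h₂.right_le i hi.le).trans hC.small_le
  by_cases hei : e i
  · have hv₁ := (h₁.hasSlope i hi).abs_sub_le hei
    obtain ⟨d, hd, hentry⟩ := hp.exists_entry_of_transversal (hC.transversal i hi) hC.radius_pos
      (hu₁.trans hC.le_radius) (hu₂.trans hC.le_radius) (hv₁.trans hC.le_radius)
      (((h₂.hasSlope i hi).abs_sub_le hei).trans hC.le_radius) hexit.nonneg hexit.velocity_pos
      (hexit.le_mul_of_le (hC.half_le_of_abs_sub_le hi hv₁))
    exact ⟨d, hd, Or.inr hentry⟩
  · have hmul : θ * (1 + (A (i + 1) - B i)) < δ :=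
      (mul_le_mul_of_nonneg_left (by linarith) hC.pos.le).trans_lt hC.mul_length_lt
    have hint : (∫ t in B i..A (i + 1), H i t) * (η * (Y + (A (i + 1) - B i))) < 1 / 2 :=
      (mul_le_mul_of_nonneg_left (mul_le_mul_of_nonneg_left (add_le_add hYm hlen) hC.deriv_nonneg)
        (intervalIntegral.integral_nonneg hH.lt.le fun t _ => hH.nonneg t)).trans_lt
        (hC.integral_mul_lt i hi)
    have hinc := hp.increasing_right_of_small hG hH.nonneg hH.intervalIntegrable hC.deriv_le
      hC.pos.le hmul hu₁ hu₂ ((h₁.hasSlope i hi).le hei) ((h₂.hasSlope i hi).le hei)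
      hexit.toIncreasingData hint
    refine ⟨1, one_ne_zero, Or.inl ?_⟩
    simpa only [one_mul] using hinc.mono (by linarith)

theorem exists_exit_succ (hC : LinearizationConstants m A B H G s ρ η δ θ ε)
    (hG : SuperlinearLipschitz G L) (hW : AlternatingWeights m A B H p k) (hμ : 0 ≤ μ)
    (hp : LinearizedPair (fun t => p t - μ * k t) G (A 0) (B m) u₁ v₁ u₂ v₂ c w w')
    (h₁ : HasPattern m A B s θ ε e u₁ v₁) (h₂ : HasPattern m A B s θ ε e u₂ v₂) (hi : i < m)
    (hY : B m - A 0 ≤ Y) (hYm : Y ≤ 6 ^ m * (2 * (B m - A 0)))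
    (hexit : IsExit (s i) ρ Y (w (B i)) (w' (B i)) (v₁ (B i))) :
    ∃ d ≠ 0, IsExit (s (i + 1)) ρ (6 * Y) (d * w (B (i + 1))) (d * w' (B (i + 1)))
      (v₁ (B (i + 1))) := by
  have hleft := hW.left_mem (i := i + 1) hi
  have hright := hW.right_mem (i := i + 1) hi
  have hbump := hp.restrict (hW.right_mem hi.le).1 (hW.lt_succ hi).le hleft.2
    (hW.ae_weight_eq_bump hi μ)
  have hneg := hp.restrict hleft.1 (hW.lt (i + 1) hi).le hright.2
    (hW.ae_weight_eq_neg (i := i + 1) hi μ)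
  obtain ⟨d, hd, hentry⟩ := hC.exists_entry hG hW hbump h₁ h₂ hi hY hYm hexit
  have hout := hC.across (i + 1) hi _ _ _ _ _ _ _ ((hneg.const_mul d).negativityPair hG
    (fun t => neg_nonpos.2 (mul_nonneg hμ (hW.nonneg t))) (h₁.left_le _ hi) (h₁.right_le _ hi))
    (by linarith [hleft.1, hright.2, hW.length_pos]) hentry
  exact ⟨d, hd, hout.mono (by linarith [hleft.1, hright.2, hW.length_pos]), hout.pos,
    hout.le_mul_of_le⟩

theorem exists_exit (hC : LinearizationConstants m A B H G s ρ η δ θ ε)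
    (hG : SuperlinearLipschitz G L) (hW : AlternatingWeights m A B H p k) (hμ : 0 ≤ μ)
    (hp : LinearizedPair (fun t => p t - μ * k t) G (A 0) (B m) u₁ v₁ u₂ v₂ c w w')
    (h₁ : HasPattern m A B s θ ε e u₁ v₁) (h₂ : HasPattern m A B s θ ε e u₂ v₂)
    (hw : w (A 0) = 0) (hw' : w' (A 0) = 1) (hi : i ≤ m) :
    ∃ d ≠ 0, IsExit (s i) ρ (6 ^ i * (2 * (B m - A 0))) (d * w (B i)) (d * w' (B i))
      (v₁ (B i)) := by
  have hℓ := hW.length_pos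
  induction i with
  | zero =>
    have hlen : B 0 - A 0 ≤ B m - A 0 := sub_le_sub_right (hW.le_right hi) _
    have hneg := hp.restrict le_rfl (hW.lt 0 hi).le (hW.le_right hi) (hW.ae_weight_eq_neg hi μ)
    have hout := hC.across 0 hi _ _ _ _ _ _ _ (hneg.negativityPair hG
      (fun t => neg_nonpos.2 (mul_nonneg hμ (hW.nonneg t))) (h₁.left_le _ hi) (h₁.right_le _ hi))
      hlen (Or.inl ⟨hw.ge, by rw [hw']; exact one_pos, by rw [hw, hw']; linarith⟩)
    refine ⟨1, one_ne_zero, ?_⟩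
    simp only [one_mul, pow_zero]
    exact ⟨hout.mono (by linarith), hout.pos, hout.le_mul_of_le⟩
  | succ i ih =>
    obtain ⟨d, hd, hexit⟩ := ih (by omega)
    have hpow : (6 : ℝ) ^ i ≤ 6 ^ m := pow_le_pow_right₀ (by norm_num) (by omega)
    have hpow' : (1 : ℝ) ≤ 6 ^ i := one_le_pow₀ (by norm_num)
    obtain ⟨d', hd', hexit'⟩ := hC.exists_exit_succ hG hW hμ (hp.const_mul d) h₁ h₂ hi
      (by nlinarith) (mul_le_mul_of_nonneg_right hpow (by linarith)) hexit
    refine ⟨d' * d, mul_ne_zero hd' hd, ?_⟩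
    simpa only [mul_assoc, pow_succ', mul_assoc] using hexit'

theorem linearized_right_ne_zero (hC : LinearizationConstants m A B H G s ρ η δ θ ε)
    (hG : SuperlinearLipschitz G L) (hW : AlternatingWeights m A B H p k) (hμ : 0 ≤ μ)
    (hp : LinearizedPair (fun t => p t - μ * k t) G (A 0) (B m) u₁ v₁ u₂ v₂ c w w')
    (h₁ : HasPattern m A B s θ ε e u₁ v₁) (h₂ : HasPattern m A B s θ ε e u₂ v₂)
    (hw : w (A 0) = 0) (hw' : w' (A 0) = 1) : w (B m) ≠ 0 := by
  obtain ⟨d, -, hexit⟩ := hC.exists_exit hG hW hμ hp h₁ h₂ hw hw' le_rfl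
  exact right_ne_zero_of_mul hexit.pos.ne'

end LinearizationConstants

/-- `ε` is a threshold which separates the exit values of solutions that enter `[σ, τ]` below `ε`
with a slope in `[θ, s - θ]` from those which enter with a slope in `[s + θ, P]`. -/
def IsExitThreshold (H G : ℝ → ℝ) (σ τ s θ P ε : ℝ) : Prop :=
  ∀ u v, SemilinearSol H G σ τ u v → 0 ≤ u σ → u σ ≤ ε →
    (θ ≤ v σ → v σ ≤ s - θ → ε ≤ u τ) ∧ (s + θ ≤ v σ → v σ ≤ P → u τ < 0)

/-- The constants of the shooting argument for the weight `p - μ k`: linearization constants, a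
velocity bound `C` for nonnegative solutions on the positivity intervals, and a velocity `P` that
solutions exceed after a negativity interval which they enter with height at least `ε`. -/
structure ShootingConstants (m : ℕ) (A B : ℕ → ℝ) (H : ℕ → ℝ → ℝ) (k G : ℝ → ℝ) (s : ℕ → ℝ)
    (ρ η δ θ ε C P μ : ℝ) : Prop extends LinearizationConstants m A B H G s ρ η δ θ ε where
  weight_nonneg : 0 ≤ μ
  small_pos : 0 < ε
  velocity_bound_pos : 0 < C
  velocity_bound_le : C ≤ P
  slope_add_le : ∀ i < m, s i + θ ≤ P
  isExitThreshold : ∀ i < m, IsExitThreshold (H i) G (B i) (A (i + 1)) (s i) θ P ε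
  abs_velocity_le : ∀ i < m, ∀ u v, SemilinearSol (H i) G (B i) (A (i + 1)) u v → 0 ≤ u (B i) →
    0 ≤ u (A (i + 1)) → ∀ t ∈ Icc (B i) (A (i + 1)), |v t| ≤ C
  gain : ∀ i < m, ∀ u v,
    SemilinearSol (fun t => -(μ * k t)) G (A (i + 1)) (B (i + 1)) u v → ε ≤ u (A (i + 1)) →
    -C ≤ v (A (i + 1)) → (∀ t ∈ Icc (A (i + 1)) (B (i + 1)), 0 ≤ u t) ∧ P < v (B (i + 1))
  loss : ∀ i < m, ∀ u v, SemilinearSol (fun t => -(μ * k t)) G (A i) (B i) u v → ε ≤ u (B i) →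
    v (B i) ≤ P → v (A i) < -C

theorem IsTransversalSlope.anti {H G : ℝ → ℝ} {σ τ s θ κ C θ₂ κ₂ C₂ : ℝ}
    (h : IsTransversalSlope H G σ τ s θ κ C) (hθ : θ₂ ≤ θ) (hκ : κ₂ ≤ κ) (hC : C ≤ C₂) :
    IsTransversalSlope H G σ τ s θ₂ κ₂ C₂ :=
  fun u₁ v₁ u₂ v₂ c w w' S₁ S₂ hu₁ hu₂ hv₁ hv₂ hc Sw hw' hw => by
    obtain ⟨hwτ, hw'τ, hvτ⟩ := h u₁ v₁ u₂ v₂ c w w' S₁ S₂ (hu₁.trans hθ) (hu₂.trans hθ)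
      (hv₁.trans hθ) (hv₂.trans hθ) hc Sw hw' (hw.trans hθ)
    exact ⟨hwτ.trans (neg_le_neg hκ), hw'τ.trans hC, hvτ.trans (neg_le_neg hκ)⟩

namespace IsCriticalSlope

variable {H G : ℝ → ℝ} {σ τ s θ : ℝ}

theorem eventually_isTransversalSlope (hs : IsCriticalSlope H G σ τ s) :
    ∀ᶠ ρ in 𝓝[>] 0, IsTransversalSlope H G σ τ s ρ ρ ρ⁻¹ := by
  obtain ⟨θ, hθ, κ, hκ, C, hC, h⟩ := hs.transversal
  filter_upwards [Ioc_mem_nhdsGT hθ, Ioc_mem_nhdsGT hκ, Ioc_mem_nhdsGT (inv_pos.2 hC)]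
    with ρ hρθ hρκ hρC
  exact h.anti hρθ.2 hρκ.2 ((le_inv_comm₀ hC hρC.1).2 hρC.2)

theorem eventually_isExitThreshold (hs : IsCriticalSlope H G σ τ s) (hθ : 0 < θ) (P : ℝ) :
    ∀ᶠ ε in 𝓝[>] 0, IsExitThreshold H G σ τ s θ P ε := by
  obtain ⟨κ, hκ, ε₀, hε₀, h⟩ := hs.exit θ hθ P
  filter_upwards [Ioc_mem_nhdsGT hκ, Ioc_mem_nhdsGT hε₀] with ε hεκ hεε₀ u v S h0 hu
  obtain ⟨hbelow, habove⟩ := h u v S h0 (hu.trans hεε₀.2)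
  exact ⟨fun h₁ h₂ => hεκ.2.trans (hbelow h₁ h₂),
    fun h₁ h₂ => (habove h₁ h₂).trans_lt (neg_neg_of_pos hκ)⟩

end IsCriticalSlope

theorem eventually_propagatesAcross (G : ℝ → ℝ) {α β s θ κ C : ℝ} (hαβ : α < β) (hs : 0 < s)
    (hθ : 0 < θ) (hκ : 0 < κ) (hC : 0 < C) :
    ∀ᶠ ε in 𝓝[>] 0, PropagatesAcross G α β s θ κ C ε := by
  obtain ⟨ε₀, hε₀, h⟩ := exists_propagatesAcross G hαβ hs hθ hκ hC
  filter_upwards [Ioc_mem_nhdsGT hε₀] with ε hε using h.anti hε.2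

namespace AlternatingWeights

variable {m : ℕ} {A B s : ℕ → ℝ} {H : ℕ → ℝ → ℝ} {p k G : ℝ → ℝ} {L M ε C P : ℝ}

theorem exists_isCriticalSlope (hW : AlternatingWeights m A B H p k)
    (hG : SuperlinearLipschitz G L)
    (hM : ∀ i < m, IsAprioriBound (H i) G (B i) (A (i + 1)) M) :
    ∃ s : ℕ → ℝ, (∀ i, 0 < s i) ∧ ∀ i < m, IsCriticalSlope (H i) G (B i) (A (i + 1)) (s i) := by
  have hslope : ∀ i, ∃ s > 0, i < m → IsCriticalSlope (H i) G (B i) (A (i + 1)) s := fun i => by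
    by_cases hi : i < m
    · obtain ⟨r, η, hH⟩ := hW.exists_bumpWeight i hi
      obtain ⟨s, hs⟩ := hH.exists_isCriticalSlope hG (hM i hi)
      exact ⟨s, hs.pos, fun _ => hs⟩
    · exact ⟨1, one_pos, fun h => absurd h hi⟩
  choose s hs0 hs using hslope
  exact ⟨s, hs0, hs⟩

theorem exists_linearizationConstants (hW : AlternatingWeights m A B H p k)
    (hG : SuperlinearLipschitz G L) (hs0 : ∀ i, 0 < s i)
    (hs : ∀ i < m, IsCriticalSlope (H i) G (B i) (A (i + 1)) (s i)) :
    ∃ ρ η δ, ∃ θ > 0, ∀ᶠ ε in 𝓝[>] 0, LinearizationConstants m A B H G s ρ η δ θ ε := by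
  have := hW.length_pos
  obtain ⟨ρ, htransversal, hρ⟩ :=
    (((eventually_all_finite (finite_lt_nat m)).2 fun i hi =>
      (hs i hi).eventually_isTransversalSlope).and self_mem_nhdsWithin).exists
  have hη_lim : ∀ x y : ℝ, ∀ᶠ η in 𝓝[>] (0 : ℝ), x * (η * y) < 1 / 2 := fun x y =>
    nhdsWithin_le_nhds ((show Continuous fun η : ℝ => x * (η * y) by fun_prop).continuousAt
      |>.eventually_lt_const (by simp))
  obtain ⟨η, hη, hη0⟩ := (((eventually_all_finite (finite_lt_nat m)).2 fun i _ =>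
    hη_lim (∫ t in B i..A (i + 1), H i t) (6 ^ m * (2 * (B m - A 0)) + (B m - A 0))).and
    self_mem_nhdsWithin).exists
  obtain ⟨δ, hδ, hderiv⟩ := hG.exists_forall_lt_deriv_le hη0
  have hθ_lim : ∀ᶠ θ in 𝓝[>] (0 : ℝ), θ * (1 + (B m - A 0)) < δ :=
    nhdsWithin_le_nhds ((show Continuous fun θ : ℝ => θ * (1 + (B m - A 0)) by
      fun_prop).continuousAt.eventually_lt_const (by simpa))
  obtain ⟨θ, ⟨hθs, hθδ, hθρ⟩, hθ⟩ := ((((eventually_all_finite (finite_lt_nat m)).2 fun i _ =>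
    Ioo_mem_nhdsGT (half_pos (hs0 i))).and (hθ_lim.and (Ioc_mem_nhdsGT hρ))).and
    self_mem_nhdsWithin).exists
  refine ⟨ρ, η, δ, θ, hθ, ?_⟩
  filter_upwards [(eventually_all_finite (finite_le_nat m)).2 fun i hi =>
    eventually_propagatesAcross G (hW.lt i hi) (hs0 i) hρ hρ (div_pos (inv_pos.2 hρ) hρ),
    Ioc_mem_nhdsGT hθ] with ε hacross hεθ
  exact
    { radius_pos := hρ
      transversal := htransversal
      across := hacross
      deriv_nonneg := hη0.le
      deriv_le := hderiv
      integral_mul_lt := hη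
      pos := hθ
      le_radius := hθρ.2
      lt_half_slope := fun i hi => (hθs i hi).2
      mul_length_lt := hθδ
      small_le := hεθ.2 }

theorem exists_velocity_bound (hW : AlternatingWeights m A B H p k)
    (hG : SuperlinearLipschitz G L)
    (hM : ∀ i < m, IsAprioriBound (H i) G (B i) (A (i + 1)) M) :
    ∃ C > 0, ∀ i < m, ∀ u v, SemilinearSol (H i) G (B i) (A (i + 1)) u v → 0 ≤ u (B i) →
      0 ≤ u (A (i + 1)) → ∀ t ∈ Icc (B i) (A (i + 1)), |v t| ≤ C := by
  obtain ⟨C, hC, hC0⟩ := (((eventually_all_finite (finite_lt_nat m)).2 fun i _ =>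
    eventually_ge_atTop (M / (A (i + 1) - B i) + (∫ t in B i..A (i + 1), H i t) * (L * M))).and
    (eventually_gt_atTop 0)).exists
  refine ⟨C, hC0, fun i hi u v S hB hA t ht => ?_⟩
  obtain ⟨r, η, hH⟩ := hW.exists_bumpWeight i hi
  exact (hH.abs_velocity_le hG S (hM i hi u v S hB hA) t ht).trans (hC i hi)

theorem eventually_gain (hW : AlternatingWeights m A B H p k) (hG : SuperlinearLipschitz G L)
    (hε : 0 < ε) (hC : 0 < C) (hP : 0 < P) : ∀ᶠ μ in atTop, ∀ i < m, ∀ u v,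
      SemilinearSol (fun t => -(μ * k t)) G (A (i + 1)) (B (i + 1)) u v → ε ≤ u (A (i + 1)) →
      -C ≤ v (A (i + 1)) → (∀ t ∈ Icc (A (i + 1)) (B (i + 1)), 0 ≤ u t) ∧ P < v (B (i + 1)) :=
  (eventually_all_finite (finite_lt_nat m)).2 fun i hi =>
    eventually_lt_velocity_of_large_weight hG (hW.lt (i + 1) hi)
      (intervalIntegrable_of_mem_Icc hW.intervalIntegrable_neg (hW.left_mem hi) (hW.right_mem hi))
      hW.nonneg (hW.integral_right_pos i hi) hε hC hP

theorem eventually_loss (hW : AlternatingWeights m A B H p k) (hG : SuperlinearLipschitz G L)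
    (hε : 0 < ε) (hC : 0 < C) (hP : 0 < P) : ∀ᶠ μ in atTop, ∀ i < m, ∀ u v,
      SemilinearSol (fun t => -(μ * k t)) G (A i) (B i) u v → ε ≤ u (B i) → v (B i) ≤ P →
      v (A i) < -C :=
  (eventually_all_finite (finite_lt_nat m)).2 fun i hi =>
    eventually_velocity_lt_of_large_weight hG (hW.lt i hi.le)
      (intervalIntegrable_of_mem_Icc hW.intervalIntegrable_neg (hW.left_mem hi.le)
        (hW.right_mem hi.le)) hW.nonneg (hW.integral_left_pos i hi) hε hC hP

theorem exists_shootingConstants (hW : AlternatingWeights m A B H p k)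
    (hG : SuperlinearLipschitz G L)
    (hM : ∀ i < m, IsAprioriBound (H i) G (B i) (A (i + 1)) M) :
    ∃ s ρ η δ θ ε C P, ∀ᶠ μ in atTop, ShootingConstants m A B H k G s ρ η δ θ ε C P μ := by
  obtain ⟨s, hs0, hs⟩ := hW.exists_isCriticalSlope hG hM
  obtain ⟨ρ, η, δ, θ, hθ, hlin⟩ := hW.exists_linearizationConstants hG hs0 hs
  obtain ⟨C, hC, hvel⟩ := hW.exists_velocity_bound hG hM
  obtain ⟨P, hsP, hCP⟩ := (((eventually_all_finite (finite_lt_nat m)).2 fun i _ =>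
    eventually_ge_atTop (s i + θ)).and (eventually_ge_atTop C)).exists
  obtain ⟨ε, ⟨hlinε, hexit⟩, hε⟩ := ((hlin.and ((eventually_all_finite (finite_lt_nat m)).2
    fun i hi => (hs i hi).eventually_isExitThreshold hθ P)).and self_mem_nhdsWithin).exists
  refine ⟨s, ρ, η, δ, θ, ε, C, P, ?_⟩
  filter_upwards [hW.eventually_gain hG hε hC (hC.trans_le hCP),
    hW.eventually_loss hG hε hC (hC.trans_le hCP), eventually_ge_atTop 0] with μ hgain hloss hμ
  exact
    { toLinearizationConstants := hlinε
      weight_nonneg := hμ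
      small_pos := hε
      velocity_bound_pos := hC
      velocity_bound_le := hCP
      slope_add_le := hsP
      isExitThreshold := hexit
      abs_velocity_le := hvel
      gain := hgain
      loss := hloss }

end AlternatingWeights

/-! ### Classification of the nonnegative solutions -/

/-- A solution that leaves `0` at the left endpoint with nonnegative velocity. -/
structure ShootingSol (q G : ℝ → ℝ) (α β : ℝ) (u v : ℝ → ℝ) : Prop where
  sol : SemilinearSol q G α β u v
  left_eq_zero : u α = 0
  velocity_left_nonneg : 0 ≤ v α

namespace ShootingSol

variable {q G u v : ℝ → ℝ} {α β x L : ℝ}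

theorem nonneg_of_nonneg (X : ShootingSol q G α β u v) (hq : IntervalIntegrable q volume α β)
    (hG : SuperlinearLipschitz G L) (hx : x ∈ Icc α β) (hux : 0 ≤ u x) :
    ∀ t ∈ Icc α x, 0 ≤ u t :=
  (X.sol.mono le_rfl hx.1 hx.2).nonneg_of_endpoints_nonneg
    (intervalIntegrable_of_mem_Icc hq X.sol.left_mem hx) hG X.left_eq_zero.ge hux

theorem velocity_nonpos_of_eq_zero (X : ShootingSol q G α β u v)
    (hq : IntervalIntegrable q volume α β) (hG : SuperlinearLipschitz G L) (hx : x ∈ Ioc α β)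
    (hux : u x = 0) : v x ≤ 0 := by
  have S := X.sol.mono le_rfl hx.1.le hx.2
  exact nonpos_of_hasDerivWithinAt_of_nonneg_left hx.1 (S.hasDerivWithinAt S.right_mem) hux
    fun t ht => X.nonneg_of_nonneg hq hG (Ioc_subset_Icc_self hx) hux.ge t
      (Ioo_subset_Icc_self ht)

end ShootingSol

/-- A nonnegative solution, possibly zero, with zero boundary values. -/
structure NonnegDirichletSol (q G : ℝ → ℝ) (α β : ℝ) (u v : ℝ → ℝ) : Prop where
  sol : SemilinearSol q G α β u v
  left_eq_zero : u α = 0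
  right_eq_zero : u β = 0
  nonneg : ∀ t ∈ Icc α β, 0 ≤ u t

namespace NonnegDirichletSol

variable {q G u v : ℝ → ℝ} {α β L : ℝ}

theorem shootingSol (X : NonnegDirichletSol q G α β u v) (hq : IntervalIntegrable q volume α β)
    (hG : SuperlinearLipschitz G L) (hαβ : α < β) : ShootingSol q G α β u v where
  sol := X.sol
  left_eq_zero := X.left_eq_zero
  velocity_left_nonneg := by
    by_contra! hneg
    have hβ := X.sol.eq_mul_sub_of_velocity_nonpos hq hG X.left_eq_zero hneg.le X.sol.right_mem
    rw [X.right_eq_zero] at hβ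
    exact (mul_neg_of_neg_of_pos hneg (sub_pos.2 hαβ)).ne hβ.symm

theorem velocity_right_nonpos (X : NonnegDirichletSol q G α β u v)
    (hq : IntervalIntegrable q volume α β) (hG : SuperlinearLipschitz G L) (hαβ : α < β) :
    v β ≤ 0 :=
  (X.shootingSol hq hG hαβ).velocity_nonpos_of_eq_zero hq hG (right_mem_Ioc.2 hαβ)
    X.right_eq_zero

end NonnegDirichletSol

theorem SuperlinearLipschitz.nonnegDirichletSol_zero {q G : ℝ → ℝ} {α β L : ℝ}
    (hG : SuperlinearLipschitz G L) (hαβ : α ≤ β) :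
    NonnegDirichletSol q G α β (fun _ => 0) fun _ => 0 where
  sol := by
    simpa only [zero_mul, add_zero] using semilinearSol_affine (q := q) (G := G) (x := 0) (s := 0)
      (t₀ := 0) hαβ fun t _ => hG.eq_zero_of_nonpos _ (by simp)
  left_eq_zero := rfl
  right_eq_zero := rfl
  nonneg _ _ := le_rfl

namespace ShootingConstants

variable {m i : ℕ} {A B s : ℕ → ℝ} {H : ℕ → ℝ → ℝ} {p k G u v u₂ v₂ w w' : ℝ → ℝ}
  {ρ η δ θ ε C P L μ : ℝ} {e : ℕ → Prop}

theorem exit_of_le (hC : ShootingConstants m A B H k G s ρ η δ θ ε C P μ)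
    (hW : AlternatingWeights m A B H p k)
    (S : SemilinearSol (fun t => p t - μ * k t) G (A 0) (B m) u v) (hi : i < m)
    (huB : 0 ≤ u (B i)) (huA : ε ≤ u (A (i + 1))) :
    0 ≤ u (B (i + 1)) ∧ P < v (B (i + 1)) := by
  have hv := hC.abs_velocity_le i hi u v (hW.restrict_bump S hi) huB (hC.small_pos.le.trans huA)
    _ (right_mem_Icc.2 (hW.lt_succ hi).le)
  obtain ⟨hnonneg, hP⟩ := hC.gain i hi u v (hW.restrict_neg (i := i + 1) S hi) huA
    (neg_le_of_abs_le hv)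
  exact ⟨hnonneg _ (right_mem_Icc.2 (hW.lt (i + 1) hi).le), hP⟩

theorem right_le (hC : ShootingConstants m A B H k G s ρ η δ θ ε C P μ)
    (hW : AlternatingWeights m A B H p k) (hG : SuperlinearLipschitz G L)
    (X : ShootingSol (fun t => p t - μ * k t) G (A 0) (B m) u v) (hi : i < m)
    (hu : 0 ≤ u (B i)) (hv : v (B i) ≤ P) : u (B i) ≤ ε := by
  by_contra! hε
  have hloss := hC.loss i hi u v (hW.restrict_neg X.sol hi.le) hε.le hv
  cases i with
  | zero => linarith [X.velocity_left_nonneg, hC.velocity_bound_pos]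
  | succ i =>
    have hAB := hW.lt (i + 1) hi.le
    have hBA := hW.lt_succ (i := i) (by omega)
    have hnonneg := X.nonneg_of_nonneg (hW.intervalIntegrable_weight μ) hG (hW.right_mem hi.le) hu
    have hvA := hC.abs_velocity_le i (by omega) u v (hW.restrict_bump X.sol (by omega))
      (hnonneg _ ⟨(hW.right_mem (i := i) (by omega)).1, by linarith⟩)
      (hnonneg _ ⟨hW.left_le hi.le, hAB.le⟩) _ (right_mem_Icc.2 hBA.le)
    linarith [neg_le_of_abs_le hvA]

theorem exit_of_low_slope (hC : ShootingConstants m A B H k G s ρ η δ θ ε C P μ)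
    (hW : AlternatingWeights m A B H p k) (hG : SuperlinearLipschitz G L)
    (X : ShootingSol (fun t => p t - μ * k t) G (A 0) (B m) u v) (hi : i < m)
    (hu : 0 ≤ u (B i)) (hθ : θ ≤ v (B i)) (hs : v (B i) ≤ s i - θ) :
    0 ≤ u (B (i + 1)) ∧ P < v (B (i + 1)) := by
  have hε := hC.right_le hW hG X hi hu (by linarith [hC.slope_add_le i hi, hC.pos])
  exact hC.exit_of_le hW X.sol hi hu
    ((hC.isExitThreshold i hi u v (hW.restrict_bump X.sol hi) hu hε).1 hθ hs)

theorem exit_of_high_slope (hC : ShootingConstants m A B H k G s ρ η δ θ ε C P μ)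
    (hW : AlternatingWeights m A B H p k) (hG : SuperlinearLipschitz G L)
    (X : ShootingSol (fun t => p t - μ * k t) G (A 0) (B m) u v) (hi : i < m)
    (hu : 0 ≤ u (B i)) (hs : s i + θ ≤ v (B i)) (hP : v (B i) ≤ P) : u (B (i + 1)) < 0 := by
  by_contra! hnonneg
  have huA := X.nonneg_of_nonneg (hW.intervalIntegrable_weight μ) hG
    (hW.right_mem (i := i + 1) hi) hnonneg _ ⟨hW.left_le hi, (hW.lt (i + 1) hi).le⟩
  exact huA.not_gt ((hC.isExitThreshold i hi u v (hW.restrict_bump X.sol hi) hu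
    (hC.right_le hW hG X hi hu hP)).2 hs hP)

theorem velocity_right_le (hC : ShootingConstants m A B H k G s ρ η δ θ ε C P μ)
    (hW : AlternatingWeights m A B H p k) (hG : SuperlinearLipschitz G L)
    (X : NonnegDirichletSol (fun t => p t - μ * k t) G (A 0) (B m) u v) (hi : i ≤ m) :
    v (B i) ≤ P := by
  refine le_trans ?_ hC.velocity_bound_le
  rcases hi.lt_or_eq with hi | rfl
  · exact le_of_abs_le (hC.abs_velocity_le i hi u v (hW.restrict_bump X.sol hi)
      (X.nonneg _ (hW.right_mem hi.le)) (X.nonneg _ (hW.left_mem (i := i + 1) hi)) _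
      (left_mem_Icc.2 (hW.lt_succ hi).le))
  · exact (X.velocity_right_nonpos (hW.intervalIntegrable_weight μ) hG
      (sub_pos.1 hW.length_pos)).trans hC.velocity_bound_pos.le

theorem hasPattern (hC : ShootingConstants m A B H k G s ρ η δ θ ε C P μ)
    (hW : AlternatingWeights m A B H p k) (hG : SuperlinearLipschitz G L)
    (X : NonnegDirichletSol (fun t => p t - μ * k t) G (A 0) (B m) u v)
    (he : ∀ i < m, HasSlope (s i) θ (e i) (v (B i))) : HasPattern m A B s θ ε e u v where
  left_le i hi := by
    cases i with
    | zero => rw [X.left_eq_zero]; exact hC.small_pos.le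
    | succ i =>
      by_contra! hε
      exact (hC.velocity_right_le hW hG X hi).not_gt
        (hC.exit_of_le hW X.sol hi (X.nonneg _ (hW.right_mem (by omega))) hε.le).2
  right_le i hi := by
    rcases hi.lt_or_eq with hi | rfl
    · exact hC.right_le hW hG (X.shootingSol (hW.intervalIntegrable_weight μ) hG
        (sub_pos.1 hW.length_pos)) hi (X.nonneg _ (hW.right_mem hi.le))
        (hC.velocity_right_le hW hG X hi.le)
    · rw [X.right_eq_zero]; exact hC.small_pos.le
  hasSlope := he

theorem hasSlope (hC : ShootingConstants m A B H k G s ρ η δ θ ε C P μ)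
    (hW : AlternatingWeights m A B H p k) (hG : SuperlinearLipschitz G L)
    (X : NonnegDirichletSol (fun t => p t - μ * k t) G (A 0) (B m) u v) (hi : i < m) :
    HasSlope (s i) θ (|v (B i) - s i| < θ) (v (B i)) where
  abs_sub_le := le_of_lt
  le hne := by
    have Y := X.shootingSol (hW.intervalIntegrable_weight μ) hG (sub_pos.1 hW.length_pos)
    have huB := X.nonneg _ (hW.right_mem hi.le)
    by_contra! hθ
    rcases le_abs.1 (not_lt.1 hne) with hhigh | hlow
    · exact (X.nonneg _ (hW.right_mem (i := i + 1) hi)).not_gt (hC.exit_of_high_slope hW hG Y hi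
        huB (by linarith) (hC.velocity_right_le hW hG X hi.le))
    · exact (hC.velocity_right_le hW hG X hi).not_gt
        (hC.exit_of_low_slope hW hG Y hi huB hθ.le (by linarith)).2

theorem eq_of_hasSlope (hC : ShootingConstants m A B H k G s ρ η δ θ ε C P μ)
    (hW : AlternatingWeights m A B H p k) (hG : SuperlinearLipschitz G L)
    (X : NonnegDirichletSol (fun t => p t - μ * k t) G (A 0) (B m) u v)
    (X₂ : NonnegDirichletSol (fun t => p t - μ * k t) G (A 0) (B m) u₂ v₂)
    (he : ∀ i < m, HasSlope (s i) θ (e i) (v (B i)))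
    (he₂ : ∀ i < m, HasSlope (s i) θ (e i) (v₂ (B i))) {t : ℝ} (ht : t ∈ Icc (A 0) (B m)) :
    u t = u₂ t ∧ v t = v₂ t := by
  refine X.sol.eq_of_eq X₂.sol (hW.intervalIntegrable_weight μ) hG.abs_sub_le X.sol.left_mem
    (X.left_eq_zero.trans X₂.left_eq_zero.symm) ?_ ht
  by_contra hne
  obtain ⟨c, hc, hlin⟩ := X.sol.exists_linearSol_sub X₂.sol hG
  refine hC.linearized_right_ne_zero hG hW hC.weight_nonneg
    ⟨X.sol, X₂.sol, X.nonneg, X₂.nonneg, hc, hlin (v (A 0) - v₂ (A 0))⁻¹⟩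
    (hC.hasPattern hW hG X he) (hC.hasPattern hW hG X₂ he₂) ?_
    (inv_mul_cancel₀ (sub_ne_zero.2 hne)) ?_
  · simp only [X.left_eq_zero, X₂.left_eq_zero, sub_self, mul_zero]
  · simp only [X.right_eq_zero, X₂.right_eq_zero, sub_self, mul_zero]

theorem linearSol_eq_zero (hC : ShootingConstants m A B H k G s ρ η δ θ ε C P μ)
    (hW : AlternatingWeights m A B H p k) (hG : SuperlinearLipschitz G L)
    (X : NonnegDirichletSol (fun t => p t - μ * k t) G (A 0) (B m) u v)
    (W : LinearSol (fun t => p t - μ * k t) (fun t => deriv G (u t)) (A 0) (B m) w w')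
    (hwA : w (A 0) = 0) (hwB : w (B m) = 0) : ∀ t ∈ Icc (A 0) (B m), w t = 0 := by
  intro t ht
  refine (W.eq_zero_of_eq_zero (hW.intervalIntegrable_weight μ)
    (fun t _ => hG.abs_deriv_le (u t)) W.left_mem hwA ?_ ht).1
  by_contra hne
  have hX := hC.hasPattern hW hG X fun i hi => hC.hasSlope hW hG X hi
  refine hC.linearized_right_ne_zero hG hW hC.weight_nonneg ⟨X.sol, X.sol, X.nonneg, X.nonneg,
    hG.isMeanValueCoeff_self u, W.const_mul (w' (A 0))⁻¹⟩ hX hX ?_ (inv_mul_cancel₀ hne) ?_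
  · rw [hwA, mul_zero]
  · rw [hwB, mul_zero]

theorem exists_abs_sub_lt (hC : ShootingConstants m A B H k G s ρ η δ θ ε C P μ)
    (hW : AlternatingWeights m A B H p k) (hG : SuperlinearLipschitz G L)
    (X : NonnegDirichletSol (fun t => p t - μ * k t) G (A 0) (B m) u v) (hv : v (A 0) ≠ 0) :
    ∃ i < m, |v (B i) - s i| < θ := by
  by_contra! hinactive
  exact hv (hC.eq_of_hasSlope (e := fun _ => False) hW hG X
    (hG.nonnegDirichletSol_zero X.sol.le)
    (fun i hi => ⟨False.elim, fun _ => (hC.hasSlope hW hG X hi).le (hinactive i hi).not_gt⟩)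
    (fun _ _ => ⟨False.elim, fun _ => hC.pos.le⟩) X.sol.left_mem).2

end ShootingConstants

/-! ### Existence by shooting -/

theorem exists_zero_forall_nonneg_uIcc {f : ℝ → ℝ} (hf : Continuous f) {x y : ℝ} (hx : 0 ≤ f x)
    (hy : f y ≤ 0) : ∃ z ∈ uIcc x y, f z = 0 ∧ ∀ t ∈ uIcc x z, 0 ≤ f t := by
  obtain ⟨z, ⟨hz, hfz⟩, hmin⟩ := (isCompact_uIcc.inter_right
    (isClosed_Iic.preimage hf)).exists_isMinOn (f := fun t => |t - x|) ⟨y, right_mem_uIcc, hy⟩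
    (by fun_prop)
  have hfirst : ∀ t ∈ uIcc x z, f t ≤ 0 → t = z := fun t ht hft => by
    have hle : |z - x| ≤ |t - x| := hmin ⟨uIcc_subset_uIcc left_mem_uIcc hz ht, hft⟩
    rcases mem_uIcc.1 ht with ⟨hxt, htz⟩ | ⟨hzt, htx⟩
    · rw [abs_of_nonneg (by linarith), abs_of_nonneg (by linarith)] at hle
      linarith
    · rw [abs_of_nonpos (by linarith), abs_of_nonpos (by linarith)] at hle
      linarith
  obtain ⟨t, ht, hft⟩ := intermediate_value_uIcc hf.continuousOn (mem_uIcc.2 (.inr ⟨hfz, hx⟩))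
  have hfz0 : f z = 0 := hfirst t ht hft.le ▸ hft
  refine ⟨z, hz, hfz0, fun t ht => le_of_not_gt fun hft => ?_⟩
  rw [hfirst t ht hft.le, hfz0] at hft
  exact hft.false

/-- `U d` is the solution with `u α = 0` and initial velocity `d`, and `V d` is its velocity. -/
structure ShootingFamily (q G : ℝ → ℝ) (α β : ℝ) (U V : ℝ → ℝ → ℝ) : Prop where
  sol : ∀ d, SemilinearSol q G α β (U d) (V d)
  left_eq_zero : ∀ d, U d α = 0
  velocity_left : ∀ d, V d α = d

theorem exists_shootingFamily {q G : ℝ → ℝ} {α β L : ℝ} (hαβ : α ≤ β)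
    (hq : IntervalIntegrable q volume α β) (hG : ∀ x y, |G x - G y| ≤ L * |x - y|) :
    ∃ U V, ShootingFamily q G α β U V := by
  choose U V hsol hU hV using exists_semilinearSol hαβ hq hG 0
  exact ⟨U, V, hsol, hU, hV⟩

namespace ShootingFamily

variable {q G : ℝ → ℝ} {α β d t L : ℝ} {U V : ℝ → ℝ → ℝ}

theorem shootingSol (hF : ShootingFamily q G α β U V) (hd : 0 ≤ d) :
    ShootingSol q G α β (U d) (V d) :=
  ⟨hF.sol d, hF.left_eq_zero d, by rwa [hF.velocity_left]⟩

theorem abs_sub_add_abs_sub_le (hF : ShootingFamily q G α β U V)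
    (hq : IntervalIntegrable q volume α β) (hG : ∀ x y, |G x - G y| ≤ L * |x - y|)
    (ht : t ∈ Icc α β) (d₁ d₂ : ℝ) :
    |U d₁ t - U d₂ t| + |V d₁ t - V d₂ t| ≤
      growthFactor (β - α) (L * ∫ s in α..β, |q s|) * |d₁ - d₂| := by
  simpa only [hF.left_eq_zero, hF.velocity_left, sub_self, abs_zero, zero_add] using
    (hF.sol d₁).abs_sub_add_abs_sub_le (hF.sol d₂) hq hG le_rfl ht

theorem continuous (hF : ShootingFamily q G α β U V) (hq : IntervalIntegrable q volume α β)
    (hG : ∀ x y, |G x - G y| ≤ L * |x - y|) (ht : t ∈ Icc α β) : Continuous fun d => U d t :=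
  (LipschitzWith.of_dist_le' fun d₁ d₂ => (le_add_of_nonneg_right (abs_nonneg _)).trans
    (hF.abs_sub_add_abs_sub_le hq hG ht d₁ d₂)).continuous

theorem continuous_velocity (hF : ShootingFamily q G α β U V)
    (hq : IntervalIntegrable q volume α β) (hG : ∀ x y, |G x - G y| ≤ L * |x - y|)
    (ht : t ∈ Icc α β) : Continuous fun d => V d t :=
  (LipschitzWith.of_dist_le' fun d₁ d₂ => (le_add_of_nonneg_left (abs_nonneg _)).trans
    (hF.abs_sub_add_abs_sub_le hq hG ht d₁ d₂)).continuous

theorem eq_zero_of_slope_eq_zero (hF : ShootingFamily q G α β U V)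
    (hq : IntervalIntegrable q volume α β) (hG : SuperlinearLipschitz G L) (ht : t ∈ Icc α β) :
    U 0 t = 0 ∧ V 0 t = 0 :=
  (hF.sol 0).eq_of_eq (hG.nonnegDirichletSol_zero (hF.sol 0).le).sol hq hG.abs_sub_le
    (hF.sol 0).left_mem (hF.left_eq_zero 0) (hF.velocity_left 0) ht

end ShootingFamily

/-- All slopes between `α` and `β` shoot solutions that are nonnegative up to `B j` and match the
pattern `e` on the first `j` positivity intervals. At `B j`, the solution of slope `α` returns to
zero and the one of slope `β` has velocity at least `P`, so a continuous range of exit data is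
available for the next interval. Whether `α ≤ β` or `β ≤ α` depends on `e`. -/
structure IsSlopeInterval (B s : ℕ → ℝ) (θ P : ℝ) (e : ℕ → Prop) (U V : ℝ → ℝ → ℝ) (j : ℕ)
    (α β : ℝ) : Prop where
  slope_nonneg : ∀ d ∈ uIcc α β, 0 ≤ d
  nonneg : ∀ d ∈ uIcc α β, 0 ≤ U d (B j)
  hasSlope : ∀ d ∈ uIcc α β, ∀ i < j, HasSlope (s i) θ (e i) (V d (B i))
  left_eq_zero : U α (B j) = 0
  le_velocity_right : P ≤ V β (B j)

theorem IsSlopeInterval.exists_succ {B s : ℕ → ℝ} {θ P α β d₁ d₂ : ℝ} {e : ℕ → Prop}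
    {U V : ℝ → ℝ → ℝ} {j : ℕ} (hI : IsSlopeInterval B s θ P e U V j α β)
    (hU : Continuous fun d => U d (B (j + 1))) (hd₁ : d₁ ∈ uIcc α β) (hd₂ : d₂ ∈ uIcc α β)
    (hslope : ∀ d ∈ uIcc d₁ d₂, HasSlope (s j) θ (e j) (V d (B j)))
    (hU₁ : 0 ≤ U d₁ (B (j + 1))) (hV₁ : P ≤ V d₁ (B (j + 1))) (hU₂ : U d₂ (B (j + 1)) ≤ 0) :
    ∃ α' β', IsSlopeInterval B s θ P e U V (j + 1) α' β' := by
  obtain ⟨z, hz, hUz, hnonneg⟩ := exists_zero_forall_nonneg_uIcc hU hU₁ hU₂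
  have hsub₁ : uIcc z d₁ ⊆ uIcc d₁ d₂ := uIcc_subset_uIcc hz left_mem_uIcc
  have hsub : uIcc z d₁ ⊆ uIcc α β := hsub₁.trans (uIcc_subset_uIcc hd₁ hd₂)
  exact ⟨z, d₁,
    { slope_nonneg := fun d hd => hI.slope_nonneg d (hsub hd)
      nonneg := fun d hd => hnonneg d (uIcc_comm z d₁ ▸ hd)
      hasSlope := fun d hd i hi => by
        rcases Nat.lt_succ_iff_lt_or_eq.1 hi with hi | rfl
        · exact hI.hasSlope d (hsub hd) i hi
        · exact hslope d (hsub₁ hd)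
      left_eq_zero := hUz
      le_velocity_right := hV₁ }⟩

namespace ShootingConstants

variable {m j : ℕ} {A B s : ℕ → ℝ} {H : ℕ → ℝ → ℝ} {p k G : ℝ → ℝ}
  {ρ η δ θ ε C P L μ α β : ℝ} {e : ℕ → Prop} {U V : ℝ → ℝ → ℝ}

theorem isSlopeInterval_zero (hC : ShootingConstants m A B H k G s ρ η δ θ ε C P μ)
    (hW : AlternatingWeights m A B H p k) (hG : SuperlinearLipschitz G L)
    (hF : ShootingFamily (fun t => p t - μ * k t) G (A 0) (B m) U V) :
    IsSlopeInterval B s θ P e U V 0 0 P := by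
  have hP : 0 ≤ P := hC.velocity_bound_pos.le.trans hC.velocity_bound_le
  have hAB := (hW.lt 0 m.zero_le).le
  have S := fun d => hW.restrict_neg (hF.sol d) m.zero_le
  have hforce := fun d => SemilinearSol.ae_forcing_nonneg (α := A 0) (β := B 0)
    (fun t => neg_nonpos.2 (mul_nonneg hC.weight_nonneg (hW.nonneg t))) hG.nonneg (U d)
  have hslope : ∀ d ∈ uIcc 0 P, 0 ≤ d := fun d hd => (uIcc_of_le hP ▸ hd).1
  exact
    { slope_nonneg := hslope
      nonneg := fun d hd => by
        have hconv := CaraSolOn.add_mul_sub_le_of_nonneg (S d) (hforce d) (left_mem_Icc.2 hAB)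
          (right_mem_Icc.2 hAB)
        rw [hF.left_eq_zero, hF.velocity_left, zero_add] at hconv
        exact (mul_nonneg (hslope d hd) (sub_nonneg.2 hAB)).trans hconv
      hasSlope := fun _ _ i hi => absurd hi i.not_lt_zero
      left_eq_zero :=
        (hF.eq_zero_of_slope_eq_zero (hW.intervalIntegrable_weight μ) hG (hW.right_mem m.zero_le)).1
      le_velocity_right := by
        simpa only [hF.velocity_left] using CaraSolOn.monotoneOn_velocity (S P) (hforce P)
          (left_mem_Icc.2 hAB) (right_mem_Icc.2 hAB) hAB }

theorem velocity_left_nonpos (hW : AlternatingWeights m A B H p k)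
    (hG : SuperlinearLipschitz G L)
    (hF : ShootingFamily (fun t => p t - μ * k t) G (A 0) (B m) U V) (hj : j ≤ m)
    (hI : IsSlopeInterval B s θ P e U V j α β) : V α (B j) ≤ 0 :=
  (hF.shootingSol (hI.slope_nonneg α left_mem_uIcc)).velocity_nonpos_of_eq_zero
    (hW.intervalIntegrable_weight μ) hG
    ⟨(hW.left_le hj).trans_lt (hW.lt j hj), hW.le_right hj⟩ hI.left_eq_zero

theorem exists_isSlopeInterval_succ_of_not (hC : ShootingConstants m A B H k G s ρ η δ θ ε C P μ)
    (hW : AlternatingWeights m A B H p k) (hG : SuperlinearLipschitz G L)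
    (hF : ShootingFamily (fun t => p t - μ * k t) G (A 0) (B m) U V) (hj : j < m)
    (hI : IsSlopeInterval B s θ P e U V j α β) (he : ¬e j) :
    ∃ α' β', IsSlopeInterval B s θ P e U V (j + 1) α' β' := by
  have hq := hW.intervalIntegrable_weight μ
  have hVα := velocity_left_nonpos hW hG hF hj.le hI
  have hBB : B j ≤ B (j + 1) := ((hW.lt_succ hj).trans (hW.lt (j + 1) hj)).le
  obtain ⟨d, hd, hVd, hle⟩ := exists_zero_forall_nonneg_uIcc (f := fun d => θ - V d (B j))
    (continuous_const.sub (hF.continuous_velocity hq hG.abs_sub_le (hW.right_mem hj.le)))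
    (by linarith [hC.pos] : 0 ≤ θ - V α (B j))
    (by linarith [hI.le_velocity_right, hC.slope_add_le j hj, hC.lt_half_slope j hj, hC.pos] :
      θ - V β (B j) ≤ 0)
  obtain ⟨hU, hV⟩ := hC.exit_of_low_slope hW hG (hF.shootingSol (hI.slope_nonneg d hd)) hj
    (hI.nonneg d hd) (by linarith) (by linarith [hC.lt_half_slope j hj])
  have hUα := ((hF.sol α).mono (hW.right_mem hj.le).1 hBB (hW.le_right hj)
    ).eq_mul_sub_of_velocity_nonpos (intervalIntegrable_of_mem_Icc hq (hW.right_mem hj.le)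
    (hW.right_mem hj)) hG hI.left_eq_zero hVα (right_mem_Icc.2 hBB)
  refine hI.exists_succ (hF.continuous hq hG.abs_sub_le (hW.right_mem hj)) hd left_mem_uIcc
    (fun x hx => ⟨fun h => absurd h he, fun _ => ?_⟩) hU hV.le
    (hUα.trans_le (mul_nonpos_of_nonpos_of_nonneg hVα (sub_nonneg.2 hBB)))
  linarith [hle x (uIcc_comm d α ▸ hx)]

theorem exists_isSlopeInterval_succ_of_active
    (hC : ShootingConstants m A B H k G s ρ η δ θ ε C P μ)
    (hW : AlternatingWeights m A B H p k) (hG : SuperlinearLipschitz G L)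
    (hF : ShootingFamily (fun t => p t - μ * k t) G (A 0) (B m) U V) (hj : j < m)
    (hI : IsSlopeInterval B s θ P e U V j α β) (he : e j) :
    ∃ α' β', IsSlopeInterval B s θ P e U V (j + 1) α' β' := by
  have hq := hW.intervalIntegrable_weight μ
  have hVα := velocity_left_nonpos hW hG hF hj.le hI
  have hV := hF.continuous_velocity hq hG.abs_sub_le (hW.right_mem hj.le)
  have hθ := hC.lt_half_slope j hj
  have hP := hC.slope_add_le j hj
  obtain ⟨d₂, hd₂, hVd₂, hle₂⟩ := exists_zero_forall_nonneg_uIcc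
    (f := fun d => s j + θ - V d (B j)) (continuous_const.sub hV)
    (by linarith [hC.pos] : 0 ≤ s j + θ - V α (B j))
    (by linarith [hI.le_velocity_right] : s j + θ - V β (B j) ≤ 0)
  obtain ⟨d₁, hd₁, hVd₁, hle₁⟩ := exists_zero_forall_nonneg_uIcc
    (f := fun d => V d (B j) - (s j - θ)) (hV.sub continuous_const)
    (by linarith [hC.pos] : 0 ≤ V d₂ (B j) - (s j - θ))
    (by linarith [hC.pos] : V α (B j) - (s j - θ) ≤ 0)
  have hd₁' : d₁ ∈ uIcc α β := uIcc_subset_uIcc hd₂ left_mem_uIcc hd₁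
  obtain ⟨hU₁, hV₁⟩ := hC.exit_of_low_slope hW hG (hF.shootingSol (hI.slope_nonneg d₁ hd₁')) hj
    (hI.nonneg d₁ hd₁') (by linarith) (by linarith)
  have hU₂ := hC.exit_of_high_slope hW hG (hF.shootingSol (hI.slope_nonneg d₂ hd₂)) hj
    (hI.nonneg d₂ hd₂) (by linarith) (by linarith)
  refine hI.exists_succ (hF.continuous hq hG.abs_sub_le (hW.right_mem hj)) hd₁' hd₂
    (fun x hx => ⟨fun _ => abs_le.2 ⟨?_, ?_⟩, fun h => absurd he h⟩) hU₁ hV₁.le hU₂.le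
  · linarith [hle₁ x (uIcc_comm d₁ d₂ ▸ hx)]
  · linarith [hle₂ x (uIcc_subset_uIcc (uIcc_comm d₂ α ▸ hd₁) right_mem_uIcc hx)]

theorem exists_isSlopeInterval (hC : ShootingConstants m A B H k G s ρ η δ θ ε C P μ)
    (hW : AlternatingWeights m A B H p k) (hG : SuperlinearLipschitz G L)
    (hF : ShootingFamily (fun t => p t - μ * k t) G (A 0) (B m) U V) (e : ℕ → Prop) (hj : j ≤ m) :
    ∃ α β, IsSlopeInterval B s θ P e U V j α β := by
  induction j with
  | zero => exact ⟨0, P, hC.isSlopeInterval_zero hW hG hF⟩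
  | succ j ih =>
    obtain ⟨α, β, hI⟩ := ih (by omega)
    by_cases he : e j
    · exact hC.exists_isSlopeInterval_succ_of_active hW hG hF hj hI he
    · exact hC.exists_isSlopeInterval_succ_of_not hW hG hF hj hI he

theorem exists_nonnegDirichletSol (hC : ShootingConstants m A B H k G s ρ η δ θ ε C P μ)
    (hW : AlternatingWeights m A B H p k) (hG : SuperlinearLipschitz G L) (e : ℕ → Prop) :
    ∃ u v, NonnegDirichletSol (fun t => p t - μ * k t) G (A 0) (B m) u v ∧
      ∀ i < m, HasSlope (s i) θ (e i) (v (B i)) := by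
  have hq := hW.intervalIntegrable_weight μ
  obtain ⟨U, V, hF⟩ := exists_shootingFamily (sub_pos.1 hW.length_pos).le hq hG.abs_sub_le
  obtain ⟨α, β, hI⟩ := hC.exists_isSlopeInterval hW hG hF e le_rfl
  exact ⟨U α, V α,
    { sol := hF.sol α
      left_eq_zero := hF.left_eq_zero α
      right_eq_zero := hI.left_eq_zero
      nonneg := (hF.shootingSol (hI.slope_nonneg α left_mem_uIcc)).nonneg_of_nonneg hq hG
        (hF.sol α).right_mem hI.left_eq_zero.ge }, hI.hasSlope α left_mem_uIcc⟩

end ShootingConstants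

/-! ### Truncation of the nonlinearity -/

/-- The conditions `(g₊)`, `(g_s)`, `(g₀)` and `(g_∞)` on a nonlinearity of class `C¹` on `[0, ∞)`
that is extended by zero to the negative half-line. -/
structure SuperlinearNonlinearity (g : ℝ → ℝ) : Prop where
  contDiffOn : ContDiffOn ℝ 1 g (Ici 0)
  eq_zero_of_nonpos : ∀ x ≤ 0, g x = 0
  pos : ∀ x > 0, 0 < g x
  div_lt_deriv : ∀ x > 0, g x / x < deriv g x
  tendsto_div_zero : Tendsto (fun x => g x / x) (𝓝[>] 0) (𝓝 0)
  tendsto_div_atTop : Tendsto (fun x => g x / x) atTop atTop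

/-- The nonlinearity `g` continued affinely beyond `R`. It is written as a primitive of its
derivative. -/
noncomputable def affineTruncation (g : ℝ → ℝ) (R x : ℝ) : ℝ := ∫ t in 0..x, deriv g (min t R)

namespace SuperlinearNonlinearity

variable {g : ℝ → ℝ} {x R : ℝ}

theorem nonneg (hg : SuperlinearNonlinearity g) (x : ℝ) : 0 ≤ g x :=
  (le_or_gt x 0).elim (fun hx => (hg.eq_zero_of_nonpos x hx).ge) fun hx => (hg.pos x hx).le

theorem lt_mul_deriv (hg : SuperlinearNonlinearity g) (hx : 0 < x) : g x < x * deriv g x :=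
  (div_lt_iff₀' hx).1 (hg.div_lt_deriv x hx)

theorem hasDerivAt_zero (hg : SuperlinearNonlinearity g) : HasDerivAt g 0 0 := by
  have hleft : HasDerivWithinAt g 0 (Iic 0) 0 :=
    (hasDerivWithinAt_const 0 _ 0).congr_of_mem hg.eq_zero_of_nonpos self_mem_Iic
  have hright : HasDerivWithinAt g 0 (Ici 0) 0 := by
    rw [hasDerivWithinAt_iff_tendsto_slope, Ici_sdiff_left]
    refine hg.tendsto_div_zero.congr fun x => ?_
    rw [slope_def_field, hg.eq_zero_of_nonpos 0 le_rfl, sub_zero, sub_zero]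
  simpa only [Iic_union_Ici, hasDerivWithinAt_univ] using hleft.union hright

theorem deriv_of_nonpos (hg : SuperlinearNonlinearity g) (hx : x ≤ 0) : deriv g x = 0 := by
  rcases hx.lt_or_eq with hx | rfl
  · have : g =ᶠ[𝓝 x] fun _ => 0 := by
      filter_upwards [Iic_mem_nhds hx] with y hy using hg.eq_zero_of_nonpos y hy
    rw [this.deriv_eq, deriv_const]
  · exact hg.hasDerivAt_zero.deriv

theorem deriv_nonneg (hg : SuperlinearNonlinearity g) (x : ℝ) : 0 ≤ deriv g x :=
  (le_or_gt x 0).elim (fun hx => (hg.deriv_of_nonpos hx).ge) fun hx =>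
    (div_nonneg (hg.nonneg x) hx.le).trans (hg.div_lt_deriv x hx).le

theorem differentiable (hg : SuperlinearNonlinearity g) : Differentiable ℝ g := fun x => by
  rcases lt_trichotomy x 0 with hx | rfl | hx
  · refine (differentiableAt_const (0 : ℝ)).congr_of_eventuallyEq ?_
    filter_upwards [Iic_mem_nhds hx] with y hy using hg.eq_zero_of_nonpos y hy
  · exact hg.hasDerivAt_zero.differentiableAt
  · exact (hg.contDiffOn.differentiableOn one_ne_zero).differentiableAt (Ici_mem_nhds hx)

theorem deriv_max_zero (hg : SuperlinearNonlinearity g) (x : ℝ) :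
    deriv g (max 0 x) = deriv g x := by
  rcases le_total x 0 with hx | hx
  · rw [max_eq_left hx, hg.deriv_of_nonpos le_rfl, hg.deriv_of_nonpos hx]
  · rw [max_eq_right hx]

theorem continuous_deriv (hg : SuperlinearNonlinearity g) : Continuous (deriv g) := by
  have hcont : ContinuousOn (deriv g) (Ici 0) := by
    refine (hg.contDiffOn.continuousOn_derivWithin (uniqueDiffOn_Ici 0) le_rfl).congr fun x hx => ?_
    exact ((hg.differentiable x).derivWithin (uniqueDiffOn_Ici (0 : ℝ) x hx)).symm
  exact (hcont.comp_continuous (continuous_const.max continuous_id) fun x =>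
    le_max_left 0 x).congr hg.deriv_max_zero

theorem deriv_min (hg : SuperlinearNonlinearity g) (hR : 0 ≤ R) (x : ℝ) :
    deriv g (min x R) = deriv g (projIcc 0 R hR x) := by
  rw [coe_projIcc, hg.deriv_max_zero, min_comm]

theorem hasDerivAt_affineTruncation (hg : SuperlinearNonlinearity g) (R x : ℝ) :
    HasDerivAt (affineTruncation g R) (deriv g (min x R)) x :=
  ((hg.continuous_deriv.comp (continuous_id.min continuous_const)).integral_hasStrictDerivAt
    0 x).hasDerivAt

theorem affineTruncation_of_le (hg : SuperlinearNonlinearity g) (hR : 0 ≤ R) (hx : x ≤ R) :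
    affineTruncation g R x = g x := by
  have hcongr : EqOn (fun t => deriv g (min t R)) (deriv g) (uIcc 0 x) := fun t ht =>
    congrArg _ (min_eq_left (ht.2.trans (max_le hR hx)))
  rw [affineTruncation, intervalIntegral.integral_congr hcongr,
    intervalIntegral.integral_deriv_eq_sub (fun t _ => hg.differentiable t)
      (hg.continuous_deriv.intervalIntegrable 0 x), hg.eq_zero_of_nonpos 0 le_rfl, sub_zero]

theorem affineTruncation_of_ge (hg : SuperlinearNonlinearity g) (hR : 0 ≤ R) (hx : R ≤ x) :
    affineTruncation g R x = g R + (x - R) * deriv g R := by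
  have hcont : Continuous fun t => deriv g (min t R) :=
    hg.continuous_deriv.comp (continuous_id.min continuous_const)
  have hcongr : EqOn (fun t => deriv g (min t R)) (fun _ => deriv g R) (uIcc R x) := fun t ht =>
    congrArg _ (min_eq_right (uIcc_of_le hx ▸ ht).1)
  rw [← hg.affineTruncation_of_le hR le_rfl, affineTruncation, affineTruncation,
    ← intervalIntegral.integral_add_adjacent_intervals (hcont.intervalIntegrable 0 R)
      (hcont.intervalIntegrable R x), intervalIntegral.integral_congr hcongr,
    intervalIntegral.integral_const, smul_eq_mul]

theorem exists_superlinearLipschitz_affineTruncation (hg : SuperlinearNonlinearity g)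
    (hR : 0 < R) : ∃ L, SuperlinearLipschitz (affineTruncation g R) L := by
  have hderiv : deriv (affineTruncation g R) =
      (fun y : Icc 0 R => deriv g y) ∘ projIcc 0 R hR.le :=
    funext fun x => (hg.hasDerivAt_affineTruncation R x).deriv.trans (hg.deriv_min hR.le x)
  have hcont : Continuous fun y : Icc 0 R => deriv g y :=
    hg.continuous_deriv.comp continuous_subtype_val
  obtain ⟨L, hL⟩ := isCompact_Icc.bddAbove_image (hg.continuous_deriv.continuousOn (s := Icc 0 R))
  refine ⟨L,
    { differentiable := fun x => (hg.hasDerivAt_affineTruncation R x).differentiableAt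
      uniformContinuous_deriv := hderiv ▸
        (CompactSpace.uniformContinuous_of_continuous hcont).comp
          (LipschitzWith.projIcc hR.le).uniformContinuous
      deriv_le := fun x => hderiv ▸ hL (mem_image_of_mem _ (projIcc 0 R hR.le x).2)
      eq_zero_of_nonpos := fun x hx => by
        rw [hg.affineTruncation_of_le hR.le (hx.trans hR.le), hg.eq_zero_of_nonpos x hx]
      pos := fun x hx => ?_
      lt_mul_deriv := fun x hx => ?_ }⟩
  · rcases le_total x R with hxR | hxR
    · exact (hg.affineTruncation_of_le hR.le hxR).symm ▸ hg.pos x hx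
    · rw [hg.affineTruncation_of_ge hR.le hxR]
      exact add_pos_of_pos_of_nonneg (hg.pos R hR)
        (mul_nonneg (sub_nonneg.2 hxR) (hg.deriv_nonneg R))
  · rw [(hg.hasDerivAt_affineTruncation R x).deriv]
    rcases le_total x R with hxR | hxR
    · rw [hg.affineTruncation_of_le hR.le hxR, min_eq_left hxR]
      exact hg.lt_mul_deriv hx
    · rw [hg.affineTruncation_of_ge hR.le hxR, min_eq_right hxR]
      linarith [hg.lt_mul_deriv hR]

end SuperlinearNonlinearity

/-- Up to height `M` the nonlinearities `g` and `G` agree together with their derivatives, and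
solutions for either of them do not exceed `M` on the positivity intervals. -/
structure IsTruncation (m : ℕ) (A B : ℕ → ℝ) (H : ℕ → ℝ → ℝ) (g G : ℝ → ℝ) (M : ℝ) : Prop where
  bound_nonneg : 0 ≤ M
  eq_of_le : ∀ x ≤ M, G x = g x
  deriv_eq_of_le : ∀ x ≤ M, deriv G x = deriv g x
  isAprioriBound : ∀ i < m, IsAprioriBound (H i) g (B i) (A (i + 1)) M
  isAprioriBound_truncation : ∀ i < m, IsAprioriBound (H i) G (B i) (A (i + 1)) M

theorem SuperlinearNonlinearity.exists_isTruncation {m : ℕ} {A B : ℕ → ℝ} {H : ℕ → ℝ → ℝ}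
    {g : ℝ → ℝ} (hg : SuperlinearNonlinearity g)
    (hH : ∀ i < m, ∃ r η, BumpWeight (H i) (B i) (A (i + 1)) r η) :
    ∃ G L M, SuperlinearLipschitz G L ∧ IsTruncation m A B H g G M := by
  choose! r η hH using hH
  obtain ⟨K, hK⟩ := ((eventually_all_finite (finite_lt_nat m)).2 fun i (hi : i < m) =>
    (tendsto_id.atTop_mul_const (mul_pos (mul_pos (hH i hi).radius_pos (hH i hi).height_pos)
      (sub_pos.2 (hH i hi).lt))).eventually_gt_atTop 16).exists
  obtain ⟨s₀, hs₀, hratio⟩ := ((eventually_gt_atTop (0 : ℝ)).and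
    (eventually_forall_ge_atTop.2 (hg.tendsto_div_atTop.eventually_ge_atTop K))).exists
  have hgK : ∀ x ≥ s₀, K * x ≤ g x := fun x hx =>
    (le_div_iff₀ (hs₀.trans_le hx)).1 (hratio x hx)
  obtain ⟨L, hG⟩ := hg.exists_superlinearLipschitz_affineTruncation
    (R := 4 * s₀) (by linarith)
  have hM : 0 ≤ 4 * s₀ := by linarith
  have hGK : ∀ x ≥ s₀, K * x ≤ affineTruncation g (4 * s₀) x := fun x hx => by
    refine le_of_mul_le_mul_right ?_ hs₀
    calc K * x * s₀ = K * s₀ * x := by ring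
      _ ≤ affineTruncation g (4 * s₀) s₀ * x := by
        rw [hg.affineTruncation_of_le hM (by linarith)]
        exact mul_le_mul_of_nonneg_right (hgK s₀ le_rfl) (hs₀.le.trans hx)
      _ ≤ affineTruncation g (4 * s₀) x * s₀ := hG.mul_le_mul_of_le hs₀ hx
  exact ⟨affineTruncation g (4 * s₀), L, 4 * s₀, hG,
    { bound_nonneg := hM
      eq_of_le := fun x hx => hg.affineTruncation_of_le hM hx
      deriv_eq_of_le := fun x hx => by
        rw [(hg.hasDerivAt_affineTruncation _ x).deriv, min_eq_left hx]
      isAprioriBound := fun i hi u v S =>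
        (hH i hi).le_four_mul_of_superlinear (hK i hi) hs₀ hg.nonneg hgK S
      isAprioriBound_truncation := fun i hi u v S =>
        (hH i hi).le_four_mul_of_superlinear (hK i hi) hs₀ hG.nonneg hGK S }⟩

/-! ### Weights satisfying condition `(h*)` -/

theorem ae_restrict_of_subsingleton {s : Set ℝ} (hs : s.Subsingleton) (P : ℝ → Prop) :
    ∀ᵐ t ∂volume.restrict s, P t := by
  rw [Measure.restrict_eq_zero.2 (hs.measure_zero volume), ae_zero]
  exact eventually_bot

theorem integral_pos_of_not_ae_eq_zero {k : ℝ → ℝ} {x y : ℝ} (hxy : x ≤ y) (hk : ∀ t, 0 ≤ k t)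
    (hint : IntervalIntegrable k volume x y)
    (hne : ¬ ∀ᵐ t ∂volume.restrict (Icc x y), k t = 0) : 0 < ∫ t in x..y, k t := by
  refine (intervalIntegral.integral_nonneg hxy fun t _ => hk t).lt_of_ne' fun hzero => hne ?_
  rw [← restrict_Ioc_eq_restrict_Icc]
  exact (intervalIntegral.integral_eq_zero_iff_of_le_of_nonneg_ae hxy (ae_of_all _ hk) hint).1
    hzero

section PosNeg

variable {h : ℝ → ℝ} {t a b : ℝ}

theorem posW_nonneg (h : ℝ → ℝ) (t : ℝ) : 0 ≤ posW h t := by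
  unfold posW
  linarith [neg_abs_le (h t)]

theorem negW_nonneg (h : ℝ → ℝ) (t : ℝ) : 0 ≤ negW h t := by
  unfold negW
  linarith [le_abs_self (h t)]

theorem posW_of_nonneg (ht : 0 ≤ h t) : posW h t = h t := by
  rw [posW, abs_of_nonneg ht, add_halves]

theorem negW_of_nonneg (ht : 0 ≤ h t) : negW h t = 0 := by
  rw [negW, abs_of_nonneg ht, sub_self]

theorem posW_of_nonpos (ht : h t ≤ 0) : posW h t = 0 := by
  rw [posW, abs_of_nonpos ht, neg_div, neg_add_cancel]

theorem negW_of_nonpos (ht : h t ≤ 0) : negW h t = -h t := by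
  rw [negW, abs_of_nonpos ht, neg_div, ← neg_add', add_halves]

theorem intervalIntegrable_posW (hh : IntervalIntegrable h volume a b) :
    IntervalIntegrable (posW h) volume a b := (hh.abs.div_const 2).add (hh.div_const 2)

theorem intervalIntegrable_negW (hh : IntervalIntegrable h volume a b) :
    IntervalIntegrable (negW h) volume a b := (hh.abs.div_const 2).sub (hh.div_const 2)

end PosNeg

/-- The symmetric extension of the left half of `p` on `[σ, τ]` to the right half. It turns
symmetry almost everywhere into symmetry. -/
def leftMirror (p : ℝ → ℝ) (σ τ t : ℝ) : ℝ := p (min t (σ + τ - t))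

section LeftMirror

variable {p : ℝ → ℝ} {σ τ t : ℝ}

theorem leftMirror_of_le (ht : t ≤ (σ + τ) / 2) : leftMirror p σ τ t = p t :=
  congrArg p (min_eq_left (by linarith))

theorem leftMirror_of_ge (ht : (σ + τ) / 2 ≤ t) : leftMirror p σ τ t = p (σ + τ - t) :=
  congrArg p (min_eq_right (by linarith))

theorem ae_eq_leftMirror (hsymm : ∀ᵐ t, t ∈ Icc σ τ → p t = p (σ + τ - t)) :
    ∀ᵐ t, t ∈ Icc σ τ → p t = leftMirror p σ τ t := by
  filter_upwards [hsymm] with t ht hmem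
  rcases le_total t ((σ + τ) / 2) with hle | hle
  · rw [leftMirror_of_le hle]
  · rw [leftMirror_of_ge hle, ht hmem]

theorem exists_pos_left_of_not_ae_eq_zero (hp : ∀ t, 0 ≤ p t)
    (hsymm : ∀ᵐ t, t ∈ Icc σ τ → p t = p (σ + τ - t))
    (hne : ¬ ∀ᵐ t, t ∈ Icc σ τ → p t = 0) : ∃ t ∈ Ioo σ ((σ + τ) / 2), 0 < p t := by
  by_contra! hnonpos
  have hzero : ∀ t ∈ Ioo σ ((σ + τ) / 2), p t = 0 := fun t ht =>
    le_antisymm (hnonpos t ht) (hp t)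
  refine hne ?_
  filter_upwards [hsymm, (toFinite {σ, (σ + τ) / 2, τ}).countable.ae_notMem volume]
    with t ht hends hmem
  simp only [mem_insert_iff, mem_singleton_iff, not_or] at hends
  obtain ⟨hσ, hmid, hτ⟩ := hends
  have hlt := hmem.2.lt_of_ne hτ
  rcases lt_or_gt_of_ne hmid with hside | hside
  · exact hzero t ⟨hmem.1.lt_of_ne' hσ, hside⟩
  · rw [ht hmem, hzero _ ⟨by linarith, by linarith⟩]

theorem exists_bumpWeight_leftMirror (hlt : σ < τ) (hp : ∀ t, 0 ≤ p t)
    (hint : IntervalIntegrable p volume σ τ)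
    (hsymm : ∀ᵐ t, t ∈ Icc σ τ → p t = p (σ + τ - t))
    (hmono : MonotoneOn p (Icc σ ((σ + τ) / 2))) (hne : ¬ ∀ᵐ t, t ∈ Icc σ τ → p t = 0) :
    ∃ r η, BumpWeight (leftMirror p σ τ) σ τ r η := by
  obtain ⟨t₀, ht₀, hpt₀⟩ := exists_pos_left_of_not_ae_eq_zero hp hsymm hne
  have hmem : t₀ ∈ Icc σ ((σ + τ) / 2) := Ioo_subset_Icc_self ht₀
  refine ⟨min ((σ + τ) / 2 - t₀) ((τ - σ) / 4), p t₀,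
    { lt := hlt
      intervalIntegrable := hint.congr_ae ?_
      nonneg := fun t => hp _
      symm := fun t => by rw [leftMirror, leftMirror, sub_sub_cancel, min_comm]
      monotoneOn := hmono.congr fun t ht => (leftMirror_of_le ht.2).symm
      radius_pos := lt_min (by linarith [ht₀.2]) (by linarith)
      radius_le := min_le_right _ _
      height_pos := hpt₀
      height_le := fun t ht => ?_ }⟩
  · rw [EventuallyEq, ae_restrict_iff' measurableSet_uIoc, uIoc_of_le hlt.le]
    filter_upwards [ae_eq_leftMirror hsymm] with t ht ht' using ht (Ioc_subset_Icc_self ht')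
  · have hr := min_le_left ((σ + τ) / 2 - t₀) ((τ - σ) / 4)
    rcases le_total t ((σ + τ) / 2) with hle | hle
    · rw [leftMirror_of_le hle]
      exact hmono hmem ⟨by linarith [ht.1, hmem.1], hle⟩ (by linarith [ht.1])
    · rw [leftMirror_of_ge hle]
      exact hmono hmem ⟨by linarith [ht.2, hmem.1], by linarith⟩ (by linarith [ht.2])

end LeftMirror

/-- Condition `(h*)`, with `h⁺` symmetric and non-decreasing on the left half of each positivity
interval `[σ i, τ i]`, `1 ≤ i ≤ m`. The ends of the domain are `τ 0` and `σ (m + 1)`. -/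
structure SymmetricSignChanging (m : ℕ) (σ τ : ℕ → ℝ) (h : ℝ → ℝ) : Prop where
  one_le : 1 ≤ m
  integrableOn : IntegrableOn h (Icc (τ 0) (σ (m + 1)))
  left_lt_right : ∀ i, 1 ≤ i → i ≤ m → σ i < τ i
  right_lt_left : ∀ i, 1 ≤ i → i < m → τ i < σ (i + 1)
  ae_nonneg : ∀ i, 1 ≤ i → i ≤ m → ∀ᵐ t ∂volume.restrict (Icc (σ i) (τ i)), 0 ≤ h t
  not_ae_eq_zero : ∀ i, 1 ≤ i → i ≤ m → ¬ ∀ᵐ t ∂volume.restrict (Icc (σ i) (τ i)), h t = 0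
  ae_nonpos : ∀ i ≤ m, ∀ᵐ t ∂volume.restrict (Icc (τ i) (σ (i + 1))), h t ≤ 0
  not_ae_eq_zero_left : ∀ i, 1 ≤ i → i ≤ m → ∀ δ > 0,
    ¬ ∀ᵐ t ∂volume.restrict (Icc (σ i - δ) (σ i) ∩ Icc (τ 0) (σ (m + 1))), h t = 0
  not_ae_eq_zero_right : ∀ i, 1 ≤ i → i ≤ m → ∀ δ > 0,
    ¬ ∀ᵐ t ∂volume.restrict (Icc (τ i) (τ i + δ) ∩ Icc (τ 0) (σ (m + 1))), h t = 0
  ae_symm : ∀ i, 1 ≤ i → i ≤ m →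
    ∀ᵐ t ∂volume.restrict (Icc (σ i) (τ i)), posW h t = posW h (σ i + τ i - t)
  monotoneOn : ∀ i, 1 ≤ i → i ≤ m → MonotoneOn (posW h) (Icc (σ i) ((σ i + τ i) / 2))

namespace SymmetricSignChanging

variable {m i : ℕ} {σ τ : ℕ → ℝ} {h : ℝ → ℝ} {x y : ℝ}

theorem alternatingPartition (hS : SymmetricSignChanging m σ τ h) :
    AlternatingPartition m τ fun i => σ (i + 1) where
  lt i hi := by
    rcases i.eq_zero_or_pos with rfl | hpos
    · by_contra! hle
      refine hS.not_ae_eq_zero_left 1 le_rfl hS.one_le 1 one_pos (ae_restrict_of_subsingleton ?_ _)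
      exact (subsingleton_Icc_of_ge hle).anti fun t ht => ⟨ht.2.1, ht.1.2⟩
    · rcases hi.lt_or_eq with hi | rfl
      · exact hS.right_lt_left i hpos hi
      · by_contra! hle
        refine hS.not_ae_eq_zero_right i hpos le_rfl 1 one_pos (ae_restrict_of_subsingleton ?_ _)
        exact (subsingleton_Icc_of_ge hle).anti fun t ht => ⟨ht.1.1, ht.2.2⟩
  lt_succ hi := hS.left_lt_right _ le_add_self hi

theorem intervalIntegrable (hS : SymmetricSignChanging m σ τ h) :
    IntervalIntegrable h volume (τ 0) (σ (m + 1)) :=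
  (intervalIntegrable_iff_integrableOn_Icc_of_le
    (sub_pos.1 hS.alternatingPartition.length_pos).le).2 hS.integrableOn

theorem exists_bumpWeight (hS : SymmetricSignChanging m σ τ h) (hi : i < m) :
    ∃ r η, BumpWeight (leftMirror (posW h) (σ (i + 1)) (τ (i + 1))) (σ (i + 1)) (τ (i + 1))
      r η := by
  have hP := hS.alternatingPartition
  refine exists_bumpWeight_leftMirror (hP.lt_succ hi) (posW_nonneg h)
    (intervalIntegrable_of_mem_Icc (intervalIntegrable_posW hS.intervalIntegrable)
      (hP.right_mem hi.le) (hP.left_mem hi))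
    ((ae_restrict_iff' measurableSet_Icc).1 (hS.ae_symm (i + 1) le_add_self hi))
    (hS.monotoneOn (i + 1) le_add_self hi)
    fun hzero => hS.not_ae_eq_zero (i + 1) le_add_self hi ?_
  filter_upwards [(ae_restrict_iff' measurableSet_Icc).2 hzero,
    hS.ae_nonneg (i + 1) le_add_self hi] with t ht hnonneg
  rwa [posW_of_nonneg hnonneg] at ht

theorem integral_negW_pos (hS : SymmetricSignChanging m σ τ h) (hi : i ≤ m) (hx : τ i ≤ x)
    (hxy : x ≤ y) (hy : y ≤ σ (i + 1))
    (hne : ¬ ∀ᵐ t ∂volume.restrict (Icc x y ∩ Icc (τ 0) (σ (m + 1))), h t = 0) :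
    0 < ∫ t in x..y, negW h t := by
  have hP := hS.alternatingPartition
  have hx' := (hP.left_le hi).trans hx
  have hy' := hy.trans (hP.le_right hi)
  refine integral_pos_of_not_ae_eq_zero hxy (negW_nonneg h)
    (intervalIntegrable_of_mem_Icc (intervalIntegrable_negW hS.intervalIntegrable)
      ⟨hx', hxy.trans hy'⟩ ⟨hx'.trans hxy, hy'⟩) fun hzero => hne ?_
  rw [inter_eq_left.2 (Icc_subset_Icc hx' hy')]
  filter_upwards [hzero, ae_restrict_of_ae_restrict_of_subset (Icc_subset_Icc hx hy)
    (hS.ae_nonpos i hi)] with t ht hnonpos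
  rwa [negW_of_nonpos hnonpos, neg_eq_zero] at ht

theorem alternatingWeights (hS : SymmetricSignChanging m σ τ h) :
    AlternatingWeights m τ (fun i => σ (i + 1))
      (fun i => leftMirror (posW h) (σ (i + 1)) (τ (i + 1))) (posW h) (negW h) where
  toAlternatingPartition := hS.alternatingPartition
  exists_bumpWeight _ hi := hS.exists_bumpWeight hi
  intervalIntegrable_pos := intervalIntegrable_posW hS.intervalIntegrable
  intervalIntegrable_neg := intervalIntegrable_negW hS.intervalIntegrable
  nonneg := negW_nonneg h
  ae_eq_bump i hi := by
    filter_upwards [ae_eq_leftMirror ((ae_restrict_iff' measurableSet_Icc).1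
        (hS.ae_symm (i + 1) le_add_self hi)),
      (ae_restrict_iff' measurableSet_Icc).1 (hS.ae_nonneg (i + 1) le_add_self hi)]
      with t hmirror hnonneg ht using ⟨hmirror ht, negW_of_nonneg (hnonneg ht)⟩
  ae_eq_zero i hi := by
    filter_upwards [(ae_restrict_iff' measurableSet_Icc).1 (hS.ae_nonpos i hi)]
      with t hnonpos ht using posW_of_nonpos (hnonpos ht)
  integral_right_pos i hi δ hδ hle :=
    hS.integral_negW_pos (i := i + 1) hi le_rfl (le_add_of_nonneg_right hδ.le) hle
      (hS.not_ae_eq_zero_right (i + 1) le_add_self hi δ hδ)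
  integral_left_pos i hi δ hδ hle :=
    hS.integral_negW_pos hi.le hle (sub_le_self _ hδ.le) le_rfl
      (hS.not_ae_eq_zero_left (i + 1) le_add_self hi δ hδ)

end SymmetricSignChanging

/-! ### Counting the positive solutions -/

section Conversion

variable {a b : ℝ} {F : ℝ → ℝ → ℝ} {u u' v : ℝ → ℝ}

theorem IsCaraSol.caraSolOn (S : IsCaraSol a b F u u') (hab : a ≤ b) :
    CaraSolOn a b (fun t => -F t (u t)) u u' := by
  obtain ⟨hderiv, hint, hvel⟩ := S
  have hvel' : ∀ t ∈ Icc a b, u' t = u' a + ∫ s in a..t, -F s (u s) := fun t ht => by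
    rw [intervalIntegral.integral_neg, ← sub_eq_add_neg, hvel t ht]
  have hcont : ContinuousOn u' (Icc a b) :=
    (continuousOn_const.add (continuousOn_integral_right hab hint.neg)).congr hvel'
  refine ⟨hab, hint.neg, fun t ht => ?_, hvel'⟩
  rw [intervalIntegral.integral_eq_sub_of_hasDerivAt_of_le ht.1
    (fun s hs => (hderiv s ⟨hs.1, hs.2.trans ht.2⟩).continuousAt.continuousWithinAt)
    (fun s hs => hderiv s ⟨hs.1.le, hs.2.le.trans ht.2⟩)
    ((hcont.mono (Icc_subset_Icc_right ht.2)).intervalIntegrable_of_Icc ht.1)]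
  ring

/-- A Carathéodory solution on `[a, b]` is differentiable at the end points only after extension
beyond them. -/
theorem CaraSolOn.exists_isCaraSol (S : CaraSolOn a b (fun t => -F t (u t)) u v) :
    ∃ U V, IsCaraSol a b F U V ∧ EqOn U u (Icc a b) := by
  have hV : Continuous (IccExtend S.le ((Icc a b).domRestrict v)) :=
    S.continuousOn_velocity.domRestrict.Icc_extend'
  set V := IccExtend S.le ((Icc a b).domRestrict v)
  have hVv : EqOn V v (Icc a b) := fun t ht => IccExtend_of_mem _ _ ht
  have hUu : EqOn (fun t => u a + ∫ s in a..t, V s) u (Icc a b) := fun t ht => by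
    rw [S.eq_add_integral t ht]
    refine congrArg _ (intervalIntegral.integral_congr fun s hs => ?_)
    rw [uIcc_of_le ht.1] at hs
    exact hVv ⟨hs.1, hs.2.trans ht.2⟩
  refine ⟨fun t => u a + ∫ s in a..t, V s, V, ⟨fun t _ => ?_, ?_, fun t ht => ?_⟩, hUu⟩
  · exact (hV.integral_hasStrictDerivAt a t).hasDerivAt.const_add _
  · refine S.intervalIntegrable.neg.congr fun t ht => ?_
    rw [uIoc_of_le S.le] at ht
    simp only [Pi.neg_apply, neg_neg, hUu (Ioc_subset_Icc_self ht)]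
  · rw [hVv ht, hVv S.left_mem, S.velocity_eq_add_integral t ht, intervalIntegral.integral_neg,
      ← sub_eq_add_neg]
    refine congrArg _ (intervalIntegral.integral_congr fun s hs => ?_)
    rw [uIcc_of_le ht.1] at hs
    simp only [hUu ⟨hs.1, hs.2.trans ht.2⟩]

end Conversion

theorem CaraSolOn.velocity_eq_of_eqOn {α β : ℝ} {f f₂ u v u₂ v₂ : ℝ → ℝ}
    (S : CaraSolOn α β f u v) (S₂ : CaraSolOn α β f₂ u₂ v₂) (hαβ : α < β)
    (h : EqOn u u₂ (Icc α β)) : EqOn v v₂ (Icc α β) := fun t ht =>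
  (uniqueDiffOn_Icc hαβ t ht).eq_deriv _ (S.hasDerivWithinAt ht)
    ((S₂.hasDerivWithinAt ht).congr_of_mem h ht)

/-- A solution with zero boundary values that is positive in the interior. -/
structure PosDirichletSol (q G : ℝ → ℝ) (α β : ℝ) (u v : ℝ → ℝ) : Prop where
  sol : SemilinearSol q G α β u v
  left_eq_zero : u α = 0
  right_eq_zero : u β = 0
  pos : ∀ t ∈ Ioo α β, 0 < u t

theorem IsCaraSol.posDirichletSol {q G u u' : ℝ → ℝ} {α β : ℝ}
    (S : IsCaraSol α β (fun s x => q s * G x) u u') (hαβ : α ≤ β) (hα : u α = 0) (hβ : u β = 0)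
    (hu : ∀ t ∈ Ioo α β, 0 < u t) : PosDirichletSol q G α β u u' :=
  ⟨S.caraSolOn hαβ, hα, hβ, hu⟩

namespace PosDirichletSol

variable {q G u v : ℝ → ℝ} {α β L : ℝ}

theorem nonnegDirichletSol (X : PosDirichletSol q G α β u v) :
    NonnegDirichletSol q G α β u v where
  sol := X.sol
  left_eq_zero := X.left_eq_zero
  right_eq_zero := X.right_eq_zero
  nonneg t ht := by
    rcases ht.1.eq_or_lt with rfl | hα
    · exact X.left_eq_zero.ge
    rcases ht.2.eq_or_lt with rfl | hβ
    · exact X.right_eq_zero.ge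
    exact (X.pos t ⟨hα, hβ⟩).le

theorem velocity_left_ne_zero (X : PosDirichletSol q G α β u v)
    (hq : IntervalIntegrable q volume α β) (hG : SuperlinearLipschitz G L) (hαβ : α < β) :
    v α ≠ 0 := by
  intro hv
  obtain ⟨t, ht⟩ := exists_between hαβ
  have hzero := X.sol.eq_mul_sub_of_velocity_nonpos hq hG X.left_eq_zero hv.le
    (Ioo_subset_Icc_self ht)
  rw [hv, zero_mul] at hzero
  exact (X.pos t ht).ne' hzero

theorem exists_isCaraSol (X : PosDirichletSol q G α β u v) :
    ∃ U V, IsCaraSol α β (fun s x => q s * G x) U V ∧ PosDirichletSol q G α β U V ∧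
      EqOn U u (Icc α β) := by
  obtain ⟨U, V, S, hU⟩ := CaraSolOn.exists_isCaraSol (F := fun s x => q s * G x) X.sol
  refine ⟨U, V, S, S.posDirichletSol X.sol.le ?_ ?_ fun t ht => ?_, hU⟩
  · rw [hU X.sol.left_mem, X.left_eq_zero]
  · rw [hU X.sol.right_mem, X.right_eq_zero]
  · exact (X.pos t ht).trans_eq (hU (Ioo_subset_Icc_self ht)).symm

end PosDirichletSol

theorem SemilinearSol.congr_of_eqOn {q G g u v : ℝ → ℝ} {α β M : ℝ}
    (S : SemilinearSol q G α β u v) (hu : ∀ t ∈ Icc α β, u t ≤ M) (hGg : ∀ x ≤ M, G x = g x) :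
    SemilinearSol q g α β u v :=
  S.congr_ae (ae_of_all _ fun t ht => by rw [hGg _ (hu t ht)])

theorem exists_mem_Icc_or_mem_Icc {A B : ℕ → ℝ} {t : ℝ} {j : ℕ} (ht : t ∈ Icc (A 0) (B j)) :
    (∃ i ≤ j, t ∈ Icc (A i) (B i)) ∨ ∃ i < j, t ∈ Icc (B i) (A (i + 1)) := by
  induction j with
  | zero => exact Or.inl ⟨0, le_rfl, ht⟩
  | succ j ih =>
    rcases le_total t (B j) with hB | hB
    · rcases ih ⟨ht.1, hB⟩ with ⟨i, hi, hmem⟩ | ⟨i, hi, hmem⟩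
      · exact Or.inl ⟨i, hi.trans j.le_succ, hmem⟩
      · exact Or.inr ⟨i, hi.trans j.lt_succ_self, hmem⟩
    rcases le_total t (A (j + 1)) with hA | hA
    · exact Or.inr ⟨j, j.lt_succ_self, hB, hA⟩
    · exact Or.inl ⟨j + 1, le_rfl, hA, ht.2⟩

theorem AlternatingWeights.le_of_isAprioriBound {m : ℕ} {A B : ℕ → ℝ} {H : ℕ → ℝ → ℝ}
    {p k g u v : ℝ → ℝ} {M μ : ℝ} (hW : AlternatingWeights m A B H p k) (hμ : 0 ≤ μ) (hM : 0 ≤ M)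
    (hap : ∀ i < m, IsAprioriBound (H i) g (B i) (A (i + 1)) M) (hg : ∀ x, 0 ≤ g x)
    (X : NonnegDirichletSol (fun t => p t - μ * k t) g (A 0) (B m) u v) :
    ∀ t ∈ Icc (A 0) (B m), u t ≤ M := by
  have hbump : ∀ i < m, ∀ t ∈ Icc (B i) (A (i + 1)), u t ≤ M := fun i hi t ht =>
    (hap i hi u v (hW.restrict_bump X.sol hi) (X.nonneg _ (hW.right_mem hi.le))
      (X.nonneg _ (hW.left_mem (i := i + 1) hi)) t ht).2
  intro t ht
  rcases exists_mem_Icc_or_mem_Icc ht with ⟨i, hi, hmem⟩ | ⟨i, hi, hmem⟩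
  · have hweight : ∀ t, -(μ * k t) ≤ 0 := fun t => neg_nonpos.2 (mul_nonneg hμ (hW.nonneg t))
    refine ((hW.restrict_neg X.sol hi).le_max_endpoints
      (SemilinearSol.ae_forcing_nonneg hweight hg u) hmem).trans (max_le ?_ ?_)
    · cases i with
      | zero => exact X.left_eq_zero.trans_le hM
      | succ i => exact hbump i hi _ (right_mem_Icc.2 (hW.lt_succ hi).le)
    · rcases hi.lt_or_eq with hi | rfl
      · exact hbump i hi _ (left_mem_Icc.2 (hW.lt_succ hi).le)
      · exact X.right_eq_zero.trans_le hM
  · exact hbump i hi t hmem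

theorem IsTruncation.posDirichletSol_iff {m : ℕ} {A B : ℕ → ℝ} {H : ℕ → ℝ → ℝ}
    {p k g G u v : ℝ → ℝ} {M μ L : ℝ} (hT : IsTruncation m A B H g G M)
    (hW : AlternatingWeights m A B H p k) (hg : SuperlinearNonlinearity g)
    (hG : SuperlinearLipschitz G L) (hμ : 0 ≤ μ) :
    PosDirichletSol (fun t => p t - μ * k t) G (A 0) (B m) u v ↔
      PosDirichletSol (fun t => p t - μ * k t) g (A 0) (B m) u v where
  mp X := { X with
    sol := X.sol.congr_of_eqOn (hW.le_of_isAprioriBound hμ hT.bound_nonneg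
      hT.isAprioriBound_truncation hG.nonneg X.nonnegDirichletSol) hT.eq_of_le }
  mpr X := { X with
    sol := X.sol.congr_of_eqOn (hW.le_of_isAprioriBound hμ hT.bound_nonneg
      hT.isAprioriBound hg.nonneg X.nonnegDirichletSol) fun x hx => (hT.eq_of_le x hx).symm }

/-- The nonempty sets of positivity intervals, coded by their indices `0, …, m - 1`. Each of them
is the set of intervals on which a unique positive solution has a bump. -/
def activationPatterns (m : ℕ) : Finset (Finset ℕ) := (Finset.range m).powerset.erase ∅

theorem mem_activationPatterns {m : ℕ} {E : Finset ℕ} :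
    E ∈ activationPatterns m ↔ E.Nonempty ∧ E ⊆ Finset.range m := by
  rw [activationPatterns, Finset.mem_erase, Finset.mem_powerset, Finset.nonempty_iff_ne_empty]

theorem card_activationPatterns (m : ℕ) : (activationPatterns m).card = 2 ^ m - 1 := by
  rw [activationPatterns, Finset.card_erase_of_mem (Finset.empty_mem_powerset _),
    Finset.card_powerset, Finset.card_range]

namespace ShootingConstants

variable {m : ℕ} {A B s : ℕ → ℝ} {H : ℕ → ℝ → ℝ} {h p k g G u v u₂ v₂ : ℝ → ℝ}
  {ρ η δ θ ε C P L M μ : ℝ} {e e₂ : Prop}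

theorem posDirichletSol (hC : ShootingConstants m A B H k G s ρ η δ θ ε C P μ)
    (hW : AlternatingWeights m A B H p k) (hG : SuperlinearLipschitz G L)
    (X : NonnegDirichletSol (fun t => p t - μ * k t) G (A 0) (B m) u v) {i : ℕ} (hi : i < m)
    (hv : |v (B i) - s i| ≤ θ) :
    PosDirichletSol (fun t => p t - μ * k t) G (A 0) (B m) u v where
  sol := X.sol
  left_eq_zero := X.left_eq_zero
  right_eq_zero := X.right_eq_zero
  pos := by
    refine X.sol.pos_of_nonneg (hW.intervalIntegrable_weight μ) hG X.nonneg fun hv₀ => ?_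
    have hvB : v (B i) = 0 :=
      (X.sol.eq_of_eq (hG.nonnegDirichletSol_zero X.sol.le).sol (hW.intervalIntegrable_weight μ)
        hG.abs_sub_le X.sol.left_mem X.left_eq_zero hv₀ (hW.right_mem hi.le)).2
    rw [hvB] at hv
    linarith [hC.half_le_of_abs_sub_le hi hv, hC.lt_half_slope i hi, hC.pos]

theorem imp_of_hasSlope (hC : ShootingConstants m A B H k G s ρ η δ θ ε C P μ) {i : ℕ}
    (hi : i < m) {x : ℝ} (h : HasSlope (s i) θ e x) (h₂ : HasSlope (s i) θ e₂ x) : e → e₂ :=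
  fun he => by
    by_contra hne
    linarith [hC.half_le_of_abs_sub_le hi (h.abs_sub_le he), hC.lt_half_slope i hi, h₂.le hne]

theorem pattern_iff_of_eqOn (hC : ShootingConstants m A B H k G s ρ η δ θ ε C P μ)
    (hW : AlternatingWeights m A B H p k) {e e₂ : ℕ → Prop}
    (S : SemilinearSol (fun t => p t - μ * k t) G (A 0) (B m) u v)
    (S₂ : SemilinearSol (fun t => p t - μ * k t) G (A 0) (B m) u₂ v₂)
    (he : ∀ i < m, HasSlope (s i) θ (e i) (v (B i)))
    (he₂ : ∀ i < m, HasSlope (s i) θ (e₂ i) (v₂ (B i))) (h : EqOn u u₂ (Icc (A 0) (B m))) {i : ℕ}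
    (hi : i < m) : e i ↔ e₂ i := by
  have hv : v (B i) = v₂ (B i) :=
    S.velocity_eq_of_eqOn S₂ (sub_pos.1 hW.length_pos) h (hW.right_mem hi.le)
  have hslope := he i hi
  rw [hv] at hslope
  exact ⟨hC.imp_of_hasSlope hi hslope (he₂ i hi), hC.imp_of_hasSlope hi (he₂ i hi) hslope⟩

theorem exists_mem_activationPatterns (hC : ShootingConstants m A B H k G s ρ η δ θ ε C P μ)
    (hW : AlternatingWeights m A B H p k) (hG : SuperlinearLipschitz G L)
    (X : PosDirichletSol (fun t => p t - μ * k t) G (A 0) (B m) u v) :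
    ∃ E ∈ activationPatterns m, ∀ i < m, HasSlope (s i) θ (i ∈ E) (v (B i)) := by
  classical
  obtain ⟨i, hi, hactive⟩ := hC.exists_abs_sub_lt hW hG X.nonnegDirichletSol
    (X.velocity_left_ne_zero (hW.intervalIntegrable_weight μ) hG (sub_pos.1 hW.length_pos))
  refine ⟨{i ∈ Finset.range m | |v (B i) - s i| < θ}, mem_activationPatterns.2
    ⟨⟨i, Finset.mem_filter.2 ⟨Finset.mem_range.2 hi, hactive⟩⟩, Finset.filter_subset _ _⟩,
    fun i hi => ?_⟩
  simpa only [Finset.mem_filter, Finset.mem_range, hi, true_and] using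
    hC.hasSlope hW hG X.nonnegDirichletSol hi

theorem exists_enumeration_posDirichletSol
    (hC : ShootingConstants m A B H k G s ρ η δ θ ε C P μ) (hW : AlternatingWeights m A B H p k)
    (hG : SuperlinearLipschitz G L) :
    ∃ u v : Fin (2 ^ m - 1) → ℝ → ℝ,
      (∀ j, PosDirichletSol (fun t => p t - μ * k t) G (A 0) (B m) (u j) (v j)) ∧
      (∀ j l, EqOn (u j) (u l) (Icc (A 0) (B m)) → j = l) ∧
      ∀ y z, PosDirichletSol (fun t => p t - μ * k t) G (A 0) (B m) y z →
        ∃ j, EqOn y (u j) (Icc (A 0) (B m)) := by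
  choose U V hU hslope using fun E : Finset ℕ => hC.exists_nonnegDirichletSol hW hG (· ∈ E)
  let f := (Finset.equivFinOfCardEq (card_activationPatterns m)).symm
  have hf (j) := mem_activationPatterns.1 (f j).2
  refine ⟨fun j => U (f j), fun j => V (f j), fun j => ?_, fun j l hjl => ?_, fun y z Y => ?_⟩
  · obtain ⟨i, hi⟩ := (hf j).1
    have him := Finset.mem_range.1 ((hf j).2 hi)
    exact hC.posDirichletSol hW hG (hU _) him ((hslope _ i him).abs_sub_le hi)
  · have hmem {i} (hi : i < m) := hC.pattern_iff_of_eqOn hW (hU (f j)).sol (hU (f l)).sol (hslope _)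
      (hslope _) hjl hi
    refine f.injective (Subtype.ext (Finset.ext fun i => ⟨fun hi => ?_, fun hi => ?_⟩))
    · exact (hmem (Finset.mem_range.1 ((hf j).2 hi))).1 hi
    · exact (hmem (Finset.mem_range.1 ((hf l).2 hi))).2 hi
  · obtain ⟨E, hE, hpattern⟩ := hC.exists_mem_activationPatterns hW hG Y
    refine ⟨f.symm ⟨E, hE⟩, fun t ht => ?_⟩
    simpa only [Equiv.apply_symm_apply] using (hC.eq_of_hasSlope hW hG Y.nonnegDirichletSol
      (hU E) hpattern (hslope E) ht).1

theorem nonDegenerate (hC : ShootingConstants m A B H (negW h) G s ρ η δ θ ε C P μ)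
    (hW : AlternatingWeights m A B H (posW h) (negW h)) (hG : SuperlinearLipschitz G L)
    (hT : IsTruncation m A B H g G M)
    (X : PosDirichletSol (fun t => posW h t - μ * negW h t) G (A 0) (B m) u v) :
    NonDegenerate (A 0) (B m) h μ g u := by
  intro w w' S hwA hwB
  have hu := hW.le_of_isAprioriBound hC.weight_nonneg hT.bound_nonneg
    hT.isAprioriBound_truncation hG.nonneg X.nonnegDirichletSol
  have hlin := (S.caraSolOn X.sol.le).congr_ae (f₂ := fun t =>
    -((posW h t - μ * negW h t) * (deriv G (u t) * w t))) (ae_of_all _ fun t ht => by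
      rw [hT.deriv_eq_of_le _ (hu t ht), mul_assoc])
  exact hC.linearSol_eq_zero hW hG X.nonnegDirichletSol hlin hwA hwB

theorem exists_enumeration_isCaraSol
    (hC : ShootingConstants m A B H (negW h) G s ρ η δ θ ε C P μ)
    (hW : AlternatingWeights m A B H (posW h) (negW h)) (hG : SuperlinearLipschitz G L)
    (hg : SuperlinearNonlinearity g) (hT : IsTruncation m A B H g G M) :
    ∃ v v' : Fin (2 ^ m - 1) → ℝ → ℝ,
      (∀ i, IsCaraSol (A 0) (B m) (fun s x => (posW h s - μ * negW h s) * g x) (v i) (v' i) ∧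
        v i (A 0) = 0 ∧ v i (B m) = 0 ∧ (∀ t ∈ Ioo (A 0) (B m), 0 < v i t) ∧
        NonDegenerate (A 0) (B m) h μ g (v i)) ∧
      (∀ i j, i ≠ j → ∃ t ∈ Icc (A 0) (B m), v i t ≠ v j t) ∧
      ∀ u u₁, IsCaraSol (A 0) (B m) (fun s x => (posW h s - μ * negW h s) * g x) u u₁ →
        u (A 0) = 0 → u (B m) = 0 → (∀ t ∈ Ioo (A 0) (B m), 0 < u t) →
        ∃ i, EqOn u (v i) (Icc (A 0) (B m)) := by
  have hlt := sub_pos.1 hW.length_pos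
  have hiff {u v} := hT.posDirichletSol_iff (u := u) (v := v) hW hg hG hC.weight_nonneg
  obtain ⟨y, z, hpos, hinj, hall⟩ := hC.exists_enumeration_posDirichletSol hW hG
  choose v v' hv hv' hvy using fun j => (hiff.1 (hpos j)).exists_isCaraSol
  refine ⟨v, v', fun j => ⟨hv j, (hv' j).left_eq_zero, (hv' j).right_eq_zero, (hv' j).pos,
    hC.nonDegenerate hW hG hT (hiff.2 (hv' j))⟩, fun i j hij => ?_, fun u u₁ S hA hB hu => ?_⟩
  · by_contra! heq
    exact hij (hinj i j fun t ht => by rw [← hvy i ht, ← hvy j ht, heq t ht])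
  · obtain ⟨j, hj⟩ := hall u u₁ (hiff.2 (S.posDirichletSol hlt.le hA hB hu))
    exact ⟨j, hj.trans (hvy j).symm⟩

end ShootingConstants

/-- **Exact multiplicity.** Under `(g₊)`, `(g_s)`, `(g₀)`, `(g_∞)`
and `(h*)` with, on each positivity interval, `h⁺` of bounded variation,
symmetric and non-decreasing on the first half, there exists `μ** > 0` such that
for every `μ > μ**` the problem `(D_μ)` has exactly `2^m - 1` positive solutions,
all non-degenerate. -/
theorem exact_multiplicity
    (a b : ℝ) (hab : a < b)
    (g : ℝ → ℝ)
    (hg_C1 : ContDiffOn ℝ 1 g (Set.Ici 0))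
    (hg0 : g 0 = 0)
    (hg_pos : ∀ s > 0, 0 < g s)
    (hg_ext : ∀ s ≤ (0 : ℝ), g s = 0)
    (hg_s : ∀ s > (0 : ℝ), g s / s < deriv g s)
    (hg_zero : deriv g 0 = 0 ∧
      Tendsto (fun s => g s / s) (nhdsWithin 0 (Set.Ioi 0)) (nhds 0))
    (hg_infty : Tendsto (fun s => g s / s) atTop atTop)
    (h : ℝ → ℝ)
    (hh_int : IntegrableOn h (Set.Icc a b))
    (m : ℕ) (hm : 1 ≤ m)
    (σ τ : ℕ → ℝ)
    (hτ0 : τ 0 = a) (hσlast : σ (m + 1) = b)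
    (h0 : τ 0 ≤ σ 1) (hlast : τ m ≤ σ (m + 1))
    (hστ : ∀ i, 1 ≤ i → i ≤ m → σ i < τ i)
    (hτσ : ∀ i, 1 ≤ i → i < m → τ i < σ (i + 1))
    (hpos : ∀ i, 1 ≤ i → i ≤ m →
      (∀ᵐ t ∂(volume.restrict (Set.Icc (σ i) (τ i))), 0 ≤ h t) ∧
      ¬ (∀ᵐ t ∂(volume.restrict (Set.Icc (σ i) (τ i))), h t = 0))
    (hneg : ∀ i, i ≤ m →
      (∀ᵐ t ∂(volume.restrict (Set.Icc (τ i) (σ (i + 1)))), h t ≤ 0) ∧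
      (τ i < σ (i + 1) →
        ¬ (∀ᵐ t ∂(volume.restrict (Set.Icc (τ i) (σ (i + 1)))), h t = 0)))
    (hσleft : ∀ i, 1 ≤ i → i ≤ m → ∀ δ > (0 : ℝ),
      ¬ (∀ᵐ t ∂(volume.restrict (Set.Icc (σ i - δ) (σ i) ∩ Set.Icc a b)), h t = 0))
    (hτright : ∀ i, 1 ≤ i → i ≤ m → ∀ δ > (0 : ℝ),
      ¬ (∀ᵐ t ∂(volume.restrict (Set.Icc (τ i) (τ i + δ) ∩ Set.Icc a b)), h t = 0))
    -- on each positivity interval, `h⁺` is BV, symmetric and non-decreasing on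
    -- the first half `[σ i, ζ i]` with `ζ i = (σ i + τ i)/2`:
    (hBV : ∀ i, 1 ≤ i → i ≤ m → BoundedVariationOn (posW h) (Set.Icc (σ i) (τ i)))
    (hsymm : ∀ i, 1 ≤ i → i ≤ m →
      ∀ᵐ t ∂(volume.restrict (Set.Icc (σ i) (τ i))), posW h t = posW h (σ i + τ i - t))
    (hmono : ∀ i, 1 ≤ i → i ≤ m →
      MonotoneOn (posW h) (Set.Icc (σ i) ((σ i + τ i) / 2))) :
    ∃ μss > (0 : ℝ), ∀ μ > μss,
      ∃ v v' : Fin (2 ^ m - 1) → ℝ → ℝ,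
        (∀ i, IsCaraSol a b (fun s x => (posW h s - μ * negW h s) * g x) (v i) (v' i) ∧
          v i a = 0 ∧ v i b = 0 ∧ (∀ t ∈ Set.Ioo a b, 0 < v i t) ∧
          NonDegenerate a b h μ g (v i)) ∧
        (∀ i j, i ≠ j → ∃ t ∈ Set.Icc a b, v i t ≠ v j t) ∧
        (∀ u u₁ : ℝ → ℝ,
          IsCaraSol a b (fun s x => (posW h s - μ * negW h s) * g x) u u₁ →
          u a = 0 → u b = 0 → (∀ t ∈ Set.Ioo a b, 0 < u t) →
          ∃ i, Set.EqOn u (v i) (Set.Icc a b)) := by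
  subst hτ0 hσlast
  have hS : SymmetricSignChanging m σ τ h := {
    one_le := hm
    integrableOn := hh_int
    left_lt_right := hστ
    right_lt_left := hτσ
    ae_nonneg := fun i h1 hi => (hpos i h1 hi).1
    not_ae_eq_zero := fun i h1 hi => (hpos i h1 hi).2
    ae_nonpos := fun i hi => (hneg i hi).1
    not_ae_eq_zero_left := hσleft
    not_ae_eq_zero_right := hτright
    ae_symm := hsymm
    monotoneOn := hmono }
  have hg : SuperlinearNonlinearity g := ⟨hg_C1, hg_ext, hg_pos, hg_s, hg_zero.2, hg_infty⟩
  have hW := hS.alternatingWeights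
  obtain ⟨G, L, M, hG, hT⟩ := hg.exists_isTruncation hW.exists_bumpWeight
  obtain ⟨s, ρ, η, δ, θ, ε, C, P, hC⟩ :=
    hW.exists_shootingConstants hG hT.isAprioriBound_truncation
  obtain ⟨μ₀, hμ₀⟩ := eventually_atTop.1 hC
  exact ⟨max μ₀ 1, lt_max_of_lt_right one_pos, fun μ hμ =>
    (hμ₀ μ ((le_max_left _ _).trans hμ.le)).exists_enumeration_isCaraSol hW hG hg hT⟩
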